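/- arXiv:2402.07816 — 4 statements merged into one kernel-verified Lean document; each statement's English description precedes it below -/
import Mathlib

section
/- The set {a ∈ D : a(1) = 0} (the annihilator of f^s, where 1 ∈ N represents f^s) is a left ideal of the ring D, and it is equal to the left ideal of D generated by the operators mult_{∂f/∂x_i} ∘ L_j − mult_{∂f/∂x_j} ∘ L_i for 1 ≤ i < j ≤ n. -/
namespace Yano
open MvPolynomial

section Alg
variable {R : Type*} [CommRing R] {n : ℕ} (a : Fin n → R)

noncomputable def V (R : Type*) [CommRing R] (n m : ℕ) : Submodule R (MvPolynomial (Fin n) R) :=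
  Submodule.span R {g | ∃ i : Fin n, i.val < m ∧ g = X i}

noncomputable def J (m : ℕ) : Submodule R (MvPolynomial (Fin n) R) :=
  Submodule.span R {g | ∃ i j : Fin n, i.val < m ∧ j.val < m ∧ g = C (a i) * X j - C (a j) * X i}

noncomputable def I (m : ℕ) : Ideal R :=
  Ideal.span {x | ∃ i : Fin n, i.val < m ∧ x = a i}

lemma X_mem_V {m : ℕ} {i : Fin n} (h : i.val < m) : (X i : MvPolynomial (Fin n) R) ∈ V R n m :=
  Submodule.subset_span ⟨i, h, rfl⟩

lemma V_mono {m m' : ℕ} (h : m ≤ m') : V R n m ≤ V R n m' :=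
  Submodule.span_mono (by rintro g ⟨i, hi, rfl⟩; exact ⟨i, by omega, rfl⟩)

lemma J_mono {m m' : ℕ} (h : m ≤ m') : J a m ≤ J a m' :=
  Submodule.span_mono (by rintro g ⟨i, j, hi, hj, rfl⟩; exact ⟨i, j, by omega, by omega, rfl⟩)

lemma Vpow_mono {m m' : ℕ} (h : m ≤ m') (d : ℕ) : V R n m ^ d ≤ V R n m' ^ d :=
  pow_le_pow_left' (V_mono h) d

lemma V_hom (m : ℕ) : V R n m ≤ homogeneousSubmodule (Fin n) R 1 := by
  refine Submodule.span_le.2 ?_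
  rintro g ⟨i, hi, rfl⟩
  exact isHomogeneous_X R i

lemma Vpow_hom (m d : ℕ) {F : MvPolynomial (Fin n) R} (hF : F ∈ V R n m ^ d) :
    F.IsHomogeneous d := by
  have : V R n m ^ d ≤ homogeneousSubmodule (Fin n) R d := by
    clear hF
    induction d with
    | zero =>
      rw [pow_zero, Submodule.one_le]
      exact isHomogeneous_one _ _
    | succ d ih =>
      rw [pow_succ]
      exact (mul_le_mul' ih (V_hom m)).trans (homogeneousSubmodule_mul d 1)
  exact this hF

lemma aeval_V {m : ℕ} {v : MvPolynomial (Fin n) R} (hv : v ∈ V R n m) : aeval a v ∈ I a m := by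
  unfold V at hv
  induction hv using Submodule.span_induction with
  | mem x h =>
    obtain ⟨i, hi, rfl⟩ := h
    rw [aeval_X]
    exact Ideal.subset_span ⟨i, hi, rfl⟩
  | zero => simp
  | add x y _ _ hx hy => rw [map_add]; exact add_mem hx hy
  | smul r x _ hx => rw [map_smul]; exact Submodule.smul_mem _ _ hx

lemma map_V (m : ℕ) : (V R n m).map (aeval a).toLinearMap = I a m := by
  rw [V, Submodule.map_span, I, Ideal.span]
  congr 1
  ext x
  simp only [Set.mem_image, Set.mem_ofPred_eq]
  constructor
  · rintro ⟨_, ⟨i, hi, rfl⟩, rfl⟩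
    exact ⟨i, hi, by simp⟩
  · rintro ⟨i, hi, rfl⟩
    exact ⟨X i, ⟨i, hi, rfl⟩, by simp⟩

lemma V_zero : V R n 0 = ⊥ := by
  rw [V, Submodule.span_eq_bot]
  rintro x ⟨i, hi, _⟩
  omega

lemma V_succ {m : ℕ} (h : m < n) : V R n (m + 1) = V R n m ⊔ Submodule.span R {X ⟨m, h⟩} := by
  rw [V, V, ← Submodule.span_union]
  congr 1
  ext g
  simp only [Set.mem_ofPred_eq, Set.mem_union, Set.mem_singleton_iff]
  constructor
  · rintro ⟨i, hi, rfl⟩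
    rcases Nat.lt_succ_iff_lt_or_eq.1 hi with h1 | h1
    · exact Or.inl ⟨i, h1, rfl⟩
    · right; congr 1; exact Fin.ext h1
  · rintro (⟨i, hi, rfl⟩ | rfl)
    · exact ⟨i, by omega, rfl⟩
    · exact ⟨_, Nat.lt_succ_self m, rfl⟩

lemma Vpow_split {m : ℕ} (h : m < n) (d : ℕ) {F : MvPolynomial (Fin n) R}
    (hF : F ∈ V R n (m + 1) ^ (d + 1)) :
    ∃ G ∈ V R n (m + 1) ^ d, ∃ H ∈ V R n m ^ (d + 1), F = X ⟨m, h⟩ * G + H := by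
  induction d generalizing F with
  | zero =>
    rw [zero_add, pow_one, V_succ h, Submodule.mem_sup] at hF
    obtain ⟨H, hH, z, hz, rfl⟩ := hF
    obtain ⟨r, rfl⟩ := Submodule.mem_span_singleton.1 hz
    refine ⟨C r, ?_, H, by simpa using hH, ?_⟩
    · rw [pow_zero]; exact Submodule.mem_one.2 ⟨r, rfl⟩
    · rw [smul_eq_C_mul]; ring
  | succ d ih =>
    rw [pow_succ] at hF
    refine Submodule.mul_induction_on hF ?_ ?_
    · intro p hp q hq
      obtain ⟨G, hG, H, hH, rfl⟩ := ih hp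
      rw [V_succ h, Submodule.mem_sup] at hq
      obtain ⟨v, hv, z, hz, rfl⟩ := hq
      obtain ⟨r, rfl⟩ := Submodule.mem_span_singleton.1 hz
      refine ⟨G * v + r • (X ⟨m, h⟩ * G + H), ?_, H * v, ?_, ?_⟩
      · refine add_mem ?_ (Submodule.smul_mem _ _ hp)
        rw [pow_succ]
        exact Submodule.mul_mem_mul hG (V_mono (Nat.le_succ m) hv)
      · rw [pow_succ]; exact Submodule.mul_mem_mul hH hv
      · simp only [smul_eq_C_mul]; ring
    · rintro _ _ ⟨G, hG, H, hH, rfl⟩ ⟨G', hG', H', hH', rfl⟩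
      exact ⟨G + G', add_mem hG hG', H + H', add_mem hH hH', by ring⟩

lemma J_le (m : ℕ) {g : MvPolynomial (Fin n) R} (hg : g ∈ J a m) :
    g ∈ (I a m).map (C : R →+* MvPolynomial (Fin n) R) := by
  unfold J at hg
  induction hg using Submodule.span_induction with
  | mem x h =>
    obtain ⟨i, j, hi, hj, rfl⟩ := h
    refine sub_mem (Ideal.mul_mem_right _ _ (Ideal.mem_map_of_mem _ (Ideal.subset_span ⟨i, hi, rfl⟩)))
      (Ideal.mul_mem_right _ _ (Ideal.mem_map_of_mem _ (Ideal.subset_span ⟨j, hj, rfl⟩)))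
  | zero => exact zero_mem _
  | add x y _ _ hx hy => exact add_mem hx hy
  | smul r x _ hx => rw [smul_eq_C_mul]; exact Ideal.mul_mem_left _ _ hx

lemma JV_le (m d : ℕ) {g : MvPolynomial (Fin n) R} (hg : g ∈ J a m * V R n m ^ d) :
    g ∈ (I a m).map (C : R →+* MvPolynomial (Fin n) R) := by
  refine Submodule.mul_induction_on hg ?_ ?_
  · intro p hp q hq
    exact Ideal.mul_mem_right _ _ (J_le a m hp)
  · intro x y hx hy; exact add_mem hx hy

lemma swap {m : ℕ} (h : m < n) {v : MvPolynomial (Fin n) R} (hv : v ∈ V R n m) :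
    X ⟨m, h⟩ * C (aeval a v) - C (a ⟨m, h⟩) * v ∈ J a (m + 1) := by
  unfold V at hv
  induction hv using Submodule.span_induction with
  | mem x hx =>
    obtain ⟨i, hi, rfl⟩ := hx
    refine Submodule.subset_span ⟨i, ⟨m, h⟩, by omega, by simp, ?_⟩
    rw [aeval_X]; ring
  | zero => simp
  | add x y _ _ hx hy =>
    rw [map_add, C_add]; convert add_mem hx hy using 1; ring
  | smul r x _ hx =>
    convert Submodule.smul_mem _ r hx using 1
    rw [map_smul, smul_eq_mul, C_mul, smul_eq_C_mul, smul_eq_C_mul]; ring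

lemma lower {m : ℕ} (h : m < n) (d : ℕ) {T : MvPolynomial (Fin n) R}
    (hT : T ∈ V R n m ^ (d + 1)) :
    ∃ M ∈ V R n m ^ d, M ∈ (I a m).map (C : R →+* MvPolynomial (Fin n) R) ∧
      aeval a M = aeval a T ∧
      X ⟨m, h⟩ * M - C (a ⟨m, h⟩) * T ∈ J a (m + 1) * V R n (m + 1) ^ d := by
  rw [pow_succ'] at hT
  refine Submodule.mul_induction_on hT ?_ ?_
  · intro v hv w hw
    refine ⟨C (aeval a v) * w, ?_, ?_, ?_, ?_⟩
    · rw [← smul_eq_C_mul]; exact Submodule.smul_mem _ _ hw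
    · exact Ideal.mul_mem_right _ _ (Ideal.mem_map_of_mem _ (aeval_V a hv))
    · simp
    · convert Submodule.mul_mem_mul (swap a h hv) (Vpow_mono (Nat.le_succ m) d hw) using 1
      ring
  · rintro x y ⟨M, h1, h2, h3, h4⟩ ⟨M', h1', h2', h3', h4'⟩
    refine ⟨M + M', add_mem h1 h1', add_mem h2 h2', by rw [map_add, map_add, h3, h3'], ?_⟩
    convert add_mem h4 h4' using 1; ring

/-- homogeneous of degree `d` with coefficients in `I`, evaluates into `I^(d+1)`. -/
lemma eval_mem (m d : ℕ) {K : MvPolynomial (Fin n) R} (hK : K ∈ V R n m ^ d)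
    (hI : K ∈ (I a m).map (C : R →+* MvPolynomial (Fin n) R)) :
    ∃ T ∈ V R n m ^ (d + 1), aeval a T = aeval a K := by
  classical
  set b : Fin n → R := fun i => if i.val < m then a i else 0 with hb
  set Y : Fin n → MvPolynomial (Fin n) R := fun i => if i.val < m then X i else 0 with hY
  have hYV : ∀ i, Y i ∈ V R n m := by
    intro i
    by_cases hi : i.val < m
    · simpa [hY, hi] using X_mem_V hi
    · simp [hY, hi]
  have hYK : aeval Y K = K := by
    have hv : ∀ v ∈ V R n m, aeval Y v = v := by
      intro v hv
      unfold V at hv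
      induction hv using Submodule.span_induction with
      | mem x hx =>
        obtain ⟨i, hi, rfl⟩ := hx
        simp [hY, hi]
      | zero => simp
      | add x y _ _ hx hy => rw [map_add, hx, hy]
      | smul r x _ hx => rw [map_smul, hx]
    clear hI
    induction hK using Submodule.pow_induction_on_left' with
    | algebraMap r => simp
    | add x y i _ _ hx hy => rw [map_add, hx, hy]
    | mem_mul v hv' i x _ hx => rw [map_mul, hx, hv v hv']
  have hmon : ∀ s : Fin n →₀ ℕ, (aeval Y (monomial s (1:R))) ∈ V R n m ^ (s.degree) := by
    intro s
    induction s using Finsupp.induction_linear with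
    | zero => simp [Submodule.one_le.1 le_rfl]
    | add s t hs ht =>
      rw [map_add, pow_add, ← mul_one (1:R), ← monomial_mul, map_mul]
      exact Submodule.mul_mem_mul hs ht
    | single i e =>
      rw [← X_pow_eq_monomial, map_pow, aeval_X, Finsupp.degree_single]
      exact Submodule.pow_mem_pow _ (hYV i) _
  have hc : ∀ s, ∃ v ∈ V R n m, aeval a v = coeff s K := by
    intro s
    have := mem_map_C_iff.1 hI s
    rw [← map_V] at this
    exact this
  choose v hv1 hv2 using hc
  refine ⟨∑ s ∈ K.support, v s * aeval Y (monomial s (1:R)), ?_, ?_⟩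
  · refine sum_mem fun s hs => ?_
    have hd : s.degree = d := by
      have := Vpow_hom m d hK (mem_support_iff.1 hs)
      rw [Finsupp.degree_eq_weight_one]; exact this
    rw [pow_succ', ← hd]
    exact Submodule.mul_mem_mul (hv1 s) (hmon s)
  · conv_rhs => rw [← hYK, K.as_sum, map_sum, map_sum]
    rw [map_sum]
    refine Finset.sum_congr rfl fun s _ => ?_
    rw [map_mul, hv2, ← smul_eq_mul, ← map_smul, ← map_smul, smul_monomial, smul_eq_mul, mul_one]

lemma eval_zero {m : ℕ} {F : MvPolynomial (Fin n) R}
    (hF : F ∈ V R n m ^ 0) (h : aeval a F = 0) : F = 0 := by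
  rw [pow_zero] at hF
  obtain ⟨r, rfl⟩ := Submodule.mem_one.1 hF
  rw [AlgHom.commutes] at h
  have : r = 0 := h
  rw [this, map_zero]

lemma nzd {m : ℕ} (h : m < n) (hr : ∀ x, a ⟨m, h⟩ * x ∈ I a m → x ∈ I a m)
    (ih : ∀ d, ∀ F ∈ V R n m ^ (d + 1), aeval a F = 0 → F ∈ J a m * V R n m ^ d)
    (d : ℕ) (x : R) (T : MvPolynomial (Fin n) R) (hT : T ∈ V R n m ^ d)
    (hx : a ⟨m, h⟩ * x = aeval a T) : ∃ K ∈ V R n m ^ d, aeval a K = x := by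
  induction d generalizing T with
  | zero =>
    refine ⟨C x, ?_, by simp⟩
    rw [pow_zero]; exact Submodule.mem_one.2 ⟨x, rfl⟩
  | succ d ihd =>
    obtain ⟨M, hM, hMI, hMT, -⟩ := lower a h d hT
    obtain ⟨K, hK, rfl⟩ := ihd M hM (by rw [hMT, hx])
    refine eval_mem a m d hK ?_
    have h1 : a ⟨m, h⟩ • K - M ∈ V R n m ^ d := sub_mem (Submodule.smul_mem _ _ hK) hM
    have h2 : aeval a (a ⟨m, h⟩ • K - M) = 0 := by
      rw [map_sub, map_smul, smul_eq_mul, hx, hMT, sub_self]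
    have h3 : a ⟨m, h⟩ • K - M ∈ (I a m).map (C : R →+* MvPolynomial (Fin n) R) := by
      cases d with
      | zero => rw [eval_zero a h1 h2]; exact zero_mem _
      | succ e => exact JV_le a m e (ih e _ h1 h2)
    have h4 : a ⟨m, h⟩ • K ∈ (I a m).map (C : R →+* MvPolynomial (Fin n) R) := by
      simpa using add_mem h3 hMI
    rw [mem_map_C_iff] at h4 ⊢
    intro s
    apply hr
    simpa using h4 s

/-- Weakly regular sequences are of linear type. -/
theorem linear_type (hr : ∀ m (h : m < n) x, a ⟨m, h⟩ * x ∈ I a m → x ∈ I a m) (m : ℕ)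
    (hm : m ≤ n) :
    ∀ d, ∀ F ∈ V R n m ^ (d + 1), aeval a F = 0 → F ∈ J a m * V R n m ^ d := by
  induction m with
  | zero =>
    intro d F hF _
    rw [V_zero, pow_succ, Submodule.mul_bot, Submodule.mem_bot] at hF
    rw [hF]; exact zero_mem _
  | succ m ihm =>
    have h : m < n := hm
    have ih := ihm h.le
    intro d
    induction d with
    | zero =>
      intro F hF hF0
      obtain ⟨G, hG, H, hH, rfl⟩ := Vpow_split h 0 hF
      rw [map_add, map_mul, aeval_X] at hF0
      obtain ⟨K, hK, hKG⟩ := nzd a h (hr m h) ih _ (aeval a G) (-H) (neg_mem hH)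
        (by rw [map_neg]; exact eq_neg_of_add_eq_zero_left hF0)
      obtain ⟨M, hM, hMI, hMT, hJ⟩ := lower a h 0 hK
      have h1 : G - M = 0 := eval_zero a (sub_mem hG (Vpow_mono (Nat.le_succ m) _ hM))
        (by rw [map_sub, hMT, hKG, sub_self])
      have h2 : C (a ⟨m, h⟩) * K + H ∈ J a m * V R n m ^ 0 := by
        apply ih
        · rw [← smul_eq_C_mul]; exact add_mem (Submodule.smul_mem _ _ hK) hH
        · rw [map_add, map_mul, aeval_C, hKG]; exact hF0
      have h3 := mul_le_mul' (J_mono a (Nat.le_succ m)) (Vpow_mono (Nat.le_succ m) 0) h2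
      convert add_mem hJ h3 using 1
      rw [sub_eq_zero.1 h1]; ring
    | succ d ihd =>
      intro F hF hF0
      obtain ⟨G, hG, H, hH, rfl⟩ := Vpow_split h (d + 1) hF
      rw [map_add, map_mul, aeval_X] at hF0
      obtain ⟨K, hK, hKG⟩ := nzd a h (hr m h) ih _ (aeval a G) (-H) (neg_mem hH)
        (by rw [map_neg]; exact eq_neg_of_add_eq_zero_left hF0)
      obtain ⟨M, hM, hMI, hMT, hJ⟩ := lower a h (d + 1) hK
      have h1 : G - M ∈ _ := ihd _ (sub_mem hG (Vpow_mono (Nat.le_succ m) _ hM))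
        (by rw [map_sub, hMT, hKG, sub_self])
      have h2 : C (a ⟨m, h⟩) * K + H ∈ J a m * V R n m ^ (d + 1) := by
        apply ih
        · rw [← smul_eq_C_mul]; exact add_mem (Submodule.smul_mem _ _ hK) hH
        · rw [map_add, map_mul, aeval_C, hKG]; exact hF0
      have h3 := mul_le_mul' (J_mono a (Nat.le_succ m)) (Vpow_mono (Nat.le_succ m) (d + 1)) h2
      have h4 : (G - M) * X ⟨m, h⟩ ∈ J a (m + 1) * V R n (m + 1) ^ (d + 1) := by
        rw [pow_succ, ← mul_assoc]
        exact Submodule.mul_mem_mul h1 (X_mem_V (Nat.lt_succ_self m))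
      convert add_mem (add_mem hJ h3) h4 using 1
      ring

end Alg

section Filt
variable (R : Type*) [CommRing R] (n : ℕ)

/-- polynomials of degree `< d` -/
def U (d : ℕ) : Submodule R (MvPolynomial (Fin n) R) where
  carrier := {F | ∀ s : Fin n →₀ ℕ, d ≤ s.degree → coeff s F = 0}
  add_mem' := by
    intro x y hx hy s hs
    rw [coeff_add, hx s hs, hy s hs, add_zero]
  zero_mem' := by intro s _; simp
  smul_mem' := by
    intro r x hx s hs
    rw [coeff_smul, hx s hs, smul_zero]

variable {R n}

lemma U_zero {F : MvPolynomial (Fin n) R} (hF : F ∈ U R n 0) : F = 0 := by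
  ext s; simpa using hF s (Nat.zero_le _)

lemma U_mul_X {d : ℕ} {F : MvPolynomial (Fin n) R} (hF : F ∈ U R n d) (i : Fin n) :
    F * X i ∈ U R n (d + 1) := by
  intro s hs
  rw [coeff_mul_X']
  split_ifs with h
  · apply hF
    have h1 : s - Finsupp.single i 1 + Finsupp.single i 1 = s := by
      apply tsub_add_cancel_of_le
      rw [Finsupp.single_le_iff]
      exact Nat.one_le_iff_ne_zero.2 (Finsupp.mem_support_iff.1 h)
    have h2 := congrArg Finsupp.degree h1
    rw [map_add, Finsupp.degree_single] at h2
    omega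
  · rfl

lemma V_le_U {m d : ℕ} {F : MvPolynomial (Fin n) R} (hF : F ∈ V R n m ^ d) : F ∈ U R n (d + 1) := by
  intro s hs
  by_contra h
  have := Vpow_hom m d hF h
  have h2 : s.degree = d := by rw [Finsupp.degree_eq_weight_one]; exact this
  omega

lemma monomial_mem (s : Fin n →₀ ℕ) (r : R) : monomial s r ∈ V R n n ^ s.degree := by
  have : monomial s (1:R) ∈ V R n n ^ s.degree := by
    induction s using Finsupp.induction_linear with
    | zero => simp [Submodule.one_le.1 le_rfl]
    | add s t hs ht =>
      rw [map_add, pow_add, ← mul_one (1:R), ← monomial_mul]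
      exact Submodule.mul_mem_mul hs ht
    | single i e =>
      rw [← X_pow_eq_monomial, Finsupp.degree_single]
      exact Submodule.pow_mem_pow _ (X_mem_V i.2) _
  have h := Submodule.smul_mem _ r this
  rwa [smul_monomial, smul_eq_mul, mul_one] at h

lemma hc_mem (d : ℕ) (F : MvPolynomial (Fin n) R) : homogeneousComponent d F ∈ V R n n ^ d := by
  rw [homogeneousComponent_apply]
  refine sum_mem fun s hs => ?_
  have h := monomial_mem s (coeff s F)
  rwa [(Finset.mem_filter.1 hs).2] at h

lemma sub_hc_mem {d : ℕ} {F : MvPolynomial (Fin n) R} (hF : F ∈ U R n (d + 1)) :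
    F - homogeneousComponent d F ∈ U R n d := by
  intro s hs
  rw [coeff_sub, coeff_homogeneousComponent]
  split_ifs with h
  · simp
  · rw [hF s (by omega), sub_zero]

lemma exists_mem_U (F : MvPolynomial (Fin n) R) : ∃ d, F ∈ U R n d := by
  refine ⟨F.totalDegree + 1, fun s hs => ?_⟩
  apply coeff_eq_zero_of_totalDegree_lt
  rw [← Finsupp.degree_apply]; omega

end Filt

section Op
variable {k R N : Type*} [CommRing k] [CommRing R] [Algebra k R] [AddCommGroup N] [Module k N]
  [Module R N] [IsScalarTower k R N] {n : ℕ}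
  (L : Fin n → Module.End k N)

theorem exists_op (hcomm : ∀ i j, L i * L j = L j * L i) :
    ∃ op : MvPolynomial (Fin n) R →ₗ[R] Module.End k N, op 1 = 1 ∧
      ∀ F i, op (F * X i) = op F * L i := by
  obtain ⟨Λ, hΛ⟩ : ∃ Λ : MvPolynomial (Fin n) k →ₐ[k] Module.End k N, ∀ i, Λ (X i) = L i := by
    let _ : CommRing (Algebra.adjoin k (Set.range L)) := Algebra.adjoinCommRingOfComm k (by
      rintro _ ⟨i, rfl⟩ _ ⟨j, rfl⟩; exact hcomm i j)
    refine ⟨(Algebra.adjoin k (Set.range L)).val.comp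
      (aeval fun i => (⟨L i, Algebra.subset_adjoin ⟨i, rfl⟩⟩ : Algebra.adjoin k (Set.range L))), ?_⟩
    intro i
    simp
  refine ⟨(basisMonomials (Fin n) R).constr R (fun s => Λ (monomial s 1)), ?_, ?_⟩
  · have := (basisMonomials (Fin n) R).constr_basis R (fun s => Λ (monomial s 1)) 0
    rw [coe_basisMonomials] at this
    refine this.trans ?_
    exact map_one Λ
  · intro F i
    induction F using MvPolynomial.induction_on' with
    | monomial s r =>
      have key : ∀ s : Fin n →₀ ℕ, ∀ r : R,
          (basisMonomials (Fin n) R).constr R (fun s => Λ (monomial s 1)) (monomial s r) =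
            r • Λ (monomial s 1) := by
        intro s r
        have := (basisMonomials (Fin n) R).constr_basis R (fun s => Λ (monomial s 1)) s
        rw [coe_basisMonomials] at this
        rw [← this, ← map_smul, smul_monomial, smul_eq_mul, mul_one]
      rw [X, monomial_mul, mul_one, key, key, ← hΛ, smul_mul_assoc, ← map_mul, X, monomial_mul,
        mul_one]
    | add p q hp hq => rw [add_mul, map_add, hp, hq, map_add, add_mul]

variable {L} {δ : Fin n → R → R} (hδ : ∀ i r (x : N), L i (r • x) = r • L i x + δ i r • x)
  {op : MvPolynomial (Fin n) R →ₗ[R] Module.End k N} (hop1 : op 1 = 1)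
  (hopX : ∀ F i, op (F * X i) = op F * L i)

/-- multiplication by `r` -/
def mu (r : R) : Module.End k N := r • (1 : Module.End k N)

lemma mu_mul (r : R) (P : Module.End k N) : mu r * P = r • P := by
  ext x; simp [mu]

include hop1 in
lemma op_C (r : R) : op (C r) = mu r := by
  have : (C r : MvPolynomial (Fin n) R) = r • 1 := by rw [smul_eq_C_mul, mul_one]
  rw [this, map_smul, hop1]; rfl

include hδ in
lemma L_mu (i : Fin n) (r : R) : L i * mu r = r • L i + mu (δ i r) := by
  ext x; simp [mu, hδ]

include hδ hop1 hopX in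
lemma L_mul_op (i : Fin n) (F : MvPolynomial (Fin n) R) : ∃ G, L i * op F = op G := by
  induction F using MvPolynomial.induction_on with
  | C r =>
    refine ⟨r • X i + C (δ i r), ?_⟩
    have := hopX 1 i
    rw [one_mul, hop1, one_mul] at this
    rw [op_C hop1, L_mu hδ, map_add, map_smul, op_C hop1, this]
  | add p q hp hq =>
    obtain ⟨G, hG⟩ := hp
    obtain ⟨H, hH⟩ := hq
    exact ⟨G + H, by rw [map_add, mul_add, hG, hH, map_add]⟩
  | mul_X p j hp =>
    obtain ⟨G, hG⟩ := hp
    exact ⟨G * X j, by rw [hopX, ← mul_assoc, hG, hopX]⟩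

include hδ hop1 hopX in
lemma adjoin_le {P : Module.End k N}
    (hP : P ∈ Algebra.adjoin k (Set.range (fun r : R => (mu r : Module.End k N)) ∪ Set.range L)) :
    ∃ F, P = op F := by
  suffices h : ∀ F, ∃ G, P * op F = op G by
    obtain ⟨G, hG⟩ := h 1
    exact ⟨G, by rw [← hG, hop1, mul_one]⟩
  induction hP using Algebra.adjoin_induction with
  | mem x hx =>
    intro F
    rcases hx with ⟨r, rfl⟩ | ⟨i, rfl⟩
    · exact ⟨r • F, by rw [map_smul]; exact mu_mul r _⟩
    · exact L_mul_op hδ hop1 hopX i F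
  | algebraMap c =>
    intro F
    refine ⟨algebraMap k R c • F, ?_⟩
    rw [map_smul]
    ext x
    simp
  | add x y _ _ hx hy =>
    intro F
    obtain ⟨G, hG⟩ := hx F
    obtain ⟨H, hH⟩ := hy F
    exact ⟨G + H, by rw [add_mul, hG, hH, map_add]⟩
  | mul x y _ _ hx hy =>
    intro F
    obtain ⟨G, hG⟩ := hy F
    obtain ⟨H, hH⟩ := hx G
    exact ⟨H, by rw [mul_assoc, hG, hH]⟩

include hop1 hopX in
lemma op_mem_adjoin (F : MvPolynomial (Fin n) R) :
    op F ∈ Algebra.adjoin k (Set.range (fun r : R => (mu r : Module.End k N)) ∪ Set.range L) := by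
  induction F using MvPolynomial.induction_on with
  | C r => rw [op_C hop1]; exact Algebra.subset_adjoin (Or.inl ⟨r, rfl⟩)
  | add p q hp hq => rw [map_add]; exact add_mem hp hq
  | mul_X p j hp => rw [hopX]; exact mul_mem hp (Algebra.subset_adjoin (Or.inr ⟨j, rfl⟩))

include hδ hop1 hopX in
lemma op_comm_mu (d : ℕ) {F : MvPolynomial (Fin n) R} (hF : F ∈ V R n n ^ d) :
    ∀ r : R, ∃ G ∈ U R n d, op F * mu r = r • op F + op G := by
  induction hF using Submodule.pow_induction_on_right' with
  | algebraMap s =>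
    intro r
    refine ⟨0, zero_mem _, ?_⟩
    have : op (algebraMap R (MvPolynomial (Fin n) R) s) = mu s := op_C hop1 s
    rw [this, map_zero, add_zero]
    ext x
    simp [mu, smul_smul, mul_comm]
  | add x y i _ _ hx hy =>
    intro r
    obtain ⟨G, hG, h1⟩ := hx r
    obtain ⟨H, hH, h2⟩ := hy r
    refine ⟨G + H, add_mem hG hH, ?_⟩
    rw [map_add, add_mul, h1, h2, map_add, smul_add]; abel
  | mul_mem e p hp ih v hv =>
    unfold V at hv
    induction hv using Submodule.span_induction with
    | mem x hx =>
      obtain ⟨i, -, rfl⟩ := hx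
      intro r
      obtain ⟨G, hG, h1⟩ := ih r
      obtain ⟨H, hH, h2⟩ := ih (δ i r)
      refine ⟨G * X i + δ i r • p + H, add_mem (add_mem (U_mul_X hG i)
        (Submodule.smul_mem _ _ (V_le_U hp))) ?_, ?_⟩
      · intro s hs; exact hH s (by omega)
      · rw [hopX, mul_assoc, L_mu hδ, mul_add, h2, ← mu_mul, ← mul_assoc, h1, add_mul, map_add,
          map_add, hopX, smul_mul_assoc, map_smul]
        abel
    | zero => intro r; exact ⟨0, zero_mem _, by simp⟩
    | add x y _ _ hx hy =>
      intro r
      obtain ⟨G, hG, h1⟩ := hx r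
      obtain ⟨H, hH, h2⟩ := hy r
      refine ⟨G + H, add_mem hG hH, ?_⟩
      rw [mul_add, map_add, add_mul, h1, h2, map_add, smul_add]; abel
    | smul t x _ hx =>
      intro r
      obtain ⟨G, hG, h1⟩ := hx r
      refine ⟨t • G, Submodule.smul_mem _ _ hG, ?_⟩
      rw [mul_smul_comm, map_smul, smul_mul_assoc, h1, map_smul, smul_add, smul_comm]

variable (a : Fin n → R)

/-- The left `R`-span of the elements `op c * (a i L j - a j L i)`. -/
def Kop (L : Fin n → Module.End k N) (op : MvPolynomial (Fin n) R →ₗ[R] Module.End k N) :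
    Submodule R (Module.End k N) :=
  Submodule.span R {P | ∃ c i j, P = op c * (mu (a i) * L j - mu (a j) * L i)}

include hδ hop1 hopX in
lemma op_JV (d : ℕ) {T : MvPolynomial (Fin n) R} (hT : T ∈ J a n * V R n n ^ d) :
    ∃ G ∈ U R n (d + 1), op T - op G ∈ Kop a L op := by
  refine Submodule.mul_induction_on hT ?_ ?_
  · intro g hg c hc
    unfold J at hg
    induction hg using Submodule.span_induction with
    | mem x hx =>
      obtain ⟨i, j, -, -, rfl⟩ := hx
      obtain ⟨G, hG, h1⟩ := op_comm_mu hδ hop1 hopX d hc (a i)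
      obtain ⟨H, hH, h2⟩ := op_comm_mu hδ hop1 hopX d hc (a j)
      refine ⟨-(G * X j) + H * X i, add_mem (neg_mem (U_mul_X hG j)) (U_mul_X hH i), ?_⟩
      refine Submodule.subset_span ⟨c, i, j, ?_⟩
      have e : (C (a i) * X j - C (a j) * X i) * c = a i • (c * X j) - a j • (c * X i) := by
        simp only [smul_eq_C_mul]; ring
      rw [e, mul_sub, ← mul_assoc, ← mul_assoc, h1, h2]
      simp only [map_sub, map_add, map_neg, map_smul, hopX, add_mul, smul_mul_assoc]
      abel
    | zero => exact ⟨0, zero_mem _, by simp⟩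
    | add x y _ _ hx hy =>
      obtain ⟨G, hG, h1⟩ := hx
      obtain ⟨H, hH, h2⟩ := hy
      refine ⟨G + H, add_mem hG hH, ?_⟩
      convert add_mem h1 h2 using 1
      rw [add_mul, map_add, map_add]; abel
    | smul t x _ hx =>
      obtain ⟨G, hG, h1⟩ := hx
      refine ⟨t • G, Submodule.smul_mem _ _ hG, ?_⟩
      convert Submodule.smul_mem _ t h1 using 1
      rw [smul_mul_assoc, map_smul, map_smul, smul_sub]
  · rintro x y ⟨G, hG, h1⟩ ⟨H, hH, h2⟩
    refine ⟨G + H, add_mem hG hH, ?_⟩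
    convert add_mem h1 h2 using 1
    rw [map_add, map_add]; abel

include hδ hop1 hopX in
theorem main_op (hr : ∀ m (h : m < n) x, a ⟨m, h⟩ * x ∈ I a m → x ∈ I a m) (e : N)
    (hK : ∀ P ∈ Kop a L op, P e = 0)
    (hlead : ∀ d, ∀ F ∈ U R n (d + 1), op F e = 0 → aeval a (homogeneousComponent d F) = 0)
    (d : ℕ) : ∀ F ∈ U R n d, op F e = 0 → op F ∈ Kop a L op := by
  induction d with
  | zero => intro F hF _; rw [U_zero hF, map_zero]; exact zero_mem _
  | succ d ih =>
    intro F hF h0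
    have h1 := hlead d F hF h0
    have h2 := hc_mem d F
    have h3 := sub_hc_mem hF
    cases d with
    | zero =>
      rw [eval_zero a h2 h1, sub_zero] at h3
      exact ih F h3 h0
    | succ d =>
      obtain ⟨G, hG, h4⟩ := op_JV hδ hop1 hopX a d (linear_type a hr n le_rfl d _ h2 h1)
      have h5 := hK _ h4
      have h6 := ih _ (add_mem h3 hG) (by
        rw [map_add, map_sub]
        simp only [LinearMap.add_apply, LinearMap.sub_apply] at h5 ⊢
        rw [h0, zero_sub, ← sub_eq_zero.1 h5, neg_add_cancel])
      convert add_mem h4 h6 using 1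
      rw [map_add, map_sub]; abel

end Op

lemma pderiv_comm' {k : Type*} [CommRing k] {n : ℕ} (i j : Fin n) (p : MvPolynomial (Fin n) k) :
    pderiv i (pderiv j p) = pderiv j (pderiv i p) := by
  have h : ⁅pderiv (R := k) i, pderiv j⁆ = (0 : Derivation k (MvPolynomial (Fin n) k) _) := by
    apply derivation_ext
    intro l
    rw [Derivation.commutator_apply, pderiv_X, pderiv_X]
    by_cases h1 : j = l <;> by_cases h2 : i = l <;> simp [Pi.single_apply, h1, h2, eq_comm]
  have h2 := DFunLike.congr_fun h p
  rw [Derivation.commutator_apply] at h2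
  exact sub_eq_zero.1 h2

section Lead
open Polynomial (coeff)
variable {k R S : Type*} [CommRing k] [CommRing R] [Algebra k R] [CommRing S] [Algebra k S]
  [Algebra R S] [IsScalarTower k R S] {n : ℕ} {pd : Fin n → Derivation k S S} {u : S} {a : Fin n → R}
  {L : Fin n → Module.End k (Polynomial S)}

lemma coeff_L {g : S} {D : Derivation k S S} {M : Module.End k (Polynomial S)}
    (hM : ∀ (c : S) (m : ℕ), M (Polynomial.C c * Polynomial.X ^ m) =
      Polynomial.C (D c) * Polynomial.X ^ m +
        Polynomial.X * Polynomial.C g * (Polynomial.C c * Polynomial.X ^ m)) (p : Polynomial S) :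
    (M p).coeff 0 = D (p.coeff 0) ∧
      ∀ e, (M p).coeff (e + 1) = D (p.coeff (e + 1)) + g * p.coeff e := by
  induction p using Polynomial.induction_on' with
  | add p q hp hq =>
    simp only [map_add, Polynomial.coeff_add, hp.1, hq.1, hp.2, hq.2, true_and]
    intro e; ring
  | monomial m c =>
    rw [← Polynomial.C_mul_X_pow_eq_monomial, hM]
    have e1 : (Polynomial.X * Polynomial.C g * (Polynomial.C c * Polynomial.X ^ m) : Polynomial S) =
      Polynomial.C (g * c) * Polynomial.X ^ (m + 1) := by rw [Polynomial.C_mul]; ring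
    rw [e1]
    simp only [Polynomial.coeff_add, Polynomial.coeff_C_mul_X_pow]
    constructor
    · split_ifs <;> simp_all
    · intro e
      by_cases h1 : e + 1 = m
      · have : e ≠ m := by omega
        simp [h1, this]
      · by_cases h2 : e = m
        · simp [h2]
        · simp [h1, h2]

variable {op : MvPolynomial (Fin n) R →ₗ[R] Module.End k (Polynomial S)} 

lemma lead (hL0 : ∀ i p, (L i p).coeff 0 = pd i (p.coeff 0))
    (hL1 : ∀ i p e, (L i p).coeff (e + 1) =
      pd i (p.coeff (e + 1)) + u * algebraMap R S (a i) * p.coeff e)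
    (hop1 : op 1 = 1) (hopX : ∀ F i, op (F * X i) = op F * L i)
    (d : ℕ) {F : MvPolynomial (Fin n) R} (hF : F ∈ V R n n ^ d) :
    ∀ (p : Polynomial S) (e : ℕ), (∀ j, e < j → p.coeff j = 0) →
      (∀ j, e + d < j → (op F p).coeff j = 0) ∧
      (op F p).coeff (e + d) = u ^ d * algebraMap R S (aeval a F) * p.coeff e := by
  induction hF using Submodule.pow_induction_on_right' with
  | algebraMap s =>
    intro p e hp
    have : op (algebraMap R (MvPolynomial (Fin n) R) s) = mu s := op_C hop1 s
    have h2 : aeval a (algebraMap R (MvPolynomial (Fin n) R) s) = s := by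
      rw [AlgHom.commutes]; rfl
    rw [this, h2]
    simp only [mu, LinearMap.smul_apply, Module.End.one_apply, Polynomial.coeff_smul]
    simp only [Algebra.smul_def]
    refine ⟨fun j hj => ?_, ?_⟩
    · rw [hp j hj, mul_zero]
    · simp
  | add x y i _ _ hx hy =>
    intro p e hp
    obtain ⟨h1, h2⟩ := hx p e hp
    obtain ⟨h3, h4⟩ := hy p e hp
    rw [map_add, LinearMap.add_apply]
    refine ⟨fun j hj => ?_, ?_⟩
    · rw [Polynomial.coeff_add, h1 j hj, h3 j hj, add_zero]
    · rw [Polynomial.coeff_add, h2, h4, map_add, map_add]; ring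
  | mul_mem d q hq ih v hv =>
    unfold V at hv
    induction hv using Submodule.span_induction with
    | mem x hx =>
      obtain ⟨i, -, rfl⟩ := hx
      intro p e hp
      rw [hopX, Module.End.mul_apply]
      obtain ⟨h1, h2⟩ := ih (L i p) (e + 1) (by
        intro j hj
        obtain ⟨j, rfl⟩ : ∃ l, j = l + 1 := ⟨j - 1, by omega⟩
        rw [hL1, hp (j + 1) (by omega), hp j (by omega), map_zero, mul_zero, add_zero])
      refine ⟨fun j hj => h1 j (by omega), ?_⟩
      rw [show e + d.succ = e + 1 + d by omega, h2, hL1, hp (e + 1) (by omega), map_zero, zero_add,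
        map_mul, aeval_X, map_mul, pow_succ]
      ring
    | zero => intro p e hp; simp
    | add x y _ _ hx hy =>
      intro p e hp
      obtain ⟨h1, h2⟩ := hx p e hp
      obtain ⟨h3, h4⟩ := hy p e hp
      rw [mul_add, map_add, LinearMap.add_apply]
      refine ⟨fun j hj => ?_, ?_⟩
      · rw [Polynomial.coeff_add, h1 j hj, h3 j hj, add_zero]
      · rw [Polynomial.coeff_add, h2, h4, map_add, map_add]; ring
    | smul t x _ hx =>
      intro p e hp
      obtain ⟨h1, h2⟩ := hx p e hp
      rw [mul_smul_comm, map_smul, LinearMap.smul_apply]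
      refine ⟨fun j hj => ?_, ?_⟩
      · rw [Polynomial.coeff_smul, h1 j hj, smul_zero]
      · rw [Polynomial.coeff_smul, h2, map_smul, smul_eq_mul, map_mul (algebraMap R S) t,
          Algebra.smul_def]; ring

lemma lead_U (hL0 : ∀ i p, (L i p).coeff 0 = pd i (p.coeff 0))
    (hL1 : ∀ i p e, (L i p).coeff (e + 1) =
      pd i (p.coeff (e + 1)) + u * algebraMap R S (a i) * p.coeff e)
    (hop1 : op 1 = 1) (hopX : ∀ F i, op (F * X i) = op F * L i)
    (d : ℕ) {F : MvPolynomial (Fin n) R} (hF : F ∈ U R n d) (j : ℕ) (hj : d ≤ j) :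
    (op F 1).coeff j = 0 := by
  rw [F.as_sum, map_sum, LinearMap.sum_apply, Polynomial.finsetSum_coeff]
  refine Finset.sum_eq_zero fun s hs => ?_
  have hsd : s.degree < d := by
    by_contra h
    exact (mem_support_iff.1 hs) (hF s (not_lt.1 h))
  refine (lead hL0 hL1 hop1 hopX _ (monomial_mem s (F.coeff s)) 1 0 ?_).1 j (by omega)
  intro j hj
  rw [Polynomial.coeff_one, if_neg (by omega)]

lemma hlead (hu : IsUnit u) (hinj : Function.Injective (algebraMap R S))
    (hL0 : ∀ i p, (L i p).coeff 0 = pd i (p.coeff 0))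
    (hL1 : ∀ i p e, (L i p).coeff (e + 1) =
      pd i (p.coeff (e + 1)) + u * algebraMap R S (a i) * p.coeff e)
    (hop1 : op 1 = 1) (hopX : ∀ F i, op (F * X i) = op F * L i)
    (d : ℕ) (F : MvPolynomial (Fin n) R) (hF : F ∈ U R n (d + 1)) (h0 : op F 1 = 0) :
    aeval a (homogeneousComponent d F) = 0 := by
  have h1 := lead_U hL0 hL1 hop1 hopX d (sub_hc_mem hF) d le_rfl
  have h2 := (lead hL0 hL1 hop1 hopX d (hc_mem d F) 1 0 (by
    intro j hj; rw [Polynomial.coeff_one, if_neg (by omega)])).2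
  rw [map_sub, LinearMap.sub_apply, h0, zero_sub, Polynomial.coeff_neg, neg_eq_zero] at h1
  rw [zero_add, h1, Polynomial.coeff_one_zero, mul_one] at h2
  have h3 := (hu.pow d).mul_right_eq_zero.1 h2.symm
  exact hinj (by rw [h3, map_zero])

end Lead
end Yano


set_option maxHeartbeats 2000000 in
/-- **Proposition 5.3 (Yano).** For `f ∈ R = k[x₁,…,xₙ]` whose partial derivatives form a
regular sequence, the annihilator `{a ∈ D : a(f^s) = 0}` of `f^s` (where `1 ∈ N = R_f[X]`
represents `f^s`) is a left ideal of the ring `D` of differential operators, and it is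
generated by the operators `(∂f/∂x_i)·∂_j − (∂f/∂x_j)·∂_i` for `i < j`. -/
theorem stmt16 {k : Type*} [Field k] [IsAlgClosed k] [CharZero k]
    (n : ℕ) (hn : 1 ≤ n)
    (f : MvPolynomial (Fin n) k) (hf0 : f ≠ 0)
    -- the partial derivatives of `f` form a regular sequence in `R`
    (hreg : RingTheory.Sequence.IsRegular (MvPolynomial (Fin n) k)
      ((List.finRange n).map fun i : Fin n => MvPolynomial.pderiv i f))
    -- `Rf` is the localization `R_f = Localization.Away f`
    (Rf : Type*) [CommRing Rf] [Algebra k Rf] [Algebra (MvPolynomial (Fin n) k) Rf]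
    [IsScalarTower k (MvPolynomial (Fin n) k) Rf] [IsLocalization.Away f Rf]
    -- the unique extensions of the partial derivatives to `k`-derivations of `R_f`
    (pd : Fin n → Derivation k Rf Rf)
    (hpd : ∀ (i : Fin n) (r : MvPolynomial (Fin n) k),
      pd i (algebraMap (MvPolynomial (Fin n) k) Rf r) =
        algebraMap (MvPolynomial (Fin n) k) Rf (MvPolynomial.pderiv i r))
    -- the twisted operators `L_i(u) = ∂_i(u) + X·f⁻¹·(∂f/∂x_i)·u`,
    -- with `∂_i` acting coefficientwise on `N = R_f[X]`
    (L : Fin n → Module.End k (Polynomial Rf))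
    (hL : ∀ (i : Fin n) (a : Rf) (m : ℕ),
      L i (Polynomial.C a * Polynomial.X ^ m) =
        Polynomial.C (pd i a) * Polynomial.X ^ m +
          Polynomial.X * Polynomial.C (IsLocalization.Away.invSelf f *
            algebraMap (MvPolynomial (Fin n) k) Rf (MvPolynomial.pderiv i f)) *
            (Polynomial.C a * Polynomial.X ^ m))
    -- the algebra of operators coming from `D_R`
    (Dalg : Subalgebra k (Module.End k (Polynomial Rf)))
    (hDalg : Dalg = Algebra.adjoin k
      ((Set.range fun r : MvPolynomial (Fin n) k =>
          (LinearMap.mulLeft k (Polynomial.C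
              (algebraMap (MvPolynomial (Fin n) k) Rf r)) :
            Module.End k (Polynomial Rf))) ∪
        Set.range L)) :
    ∃ I : Ideal ↥Dalg,
      (∀ a : ↥Dalg, a ∈ I ↔
        (a : Module.End k (Polynomial Rf)) (1 : Polynomial Rf) = 0) ∧
      I = Ideal.span {a : ↥Dalg | ∃ i j : Fin n, i < j ∧
        (a : Module.End k (Polynomial Rf)) =
          LinearMap.mulLeft k (Polynomial.C
              (algebraMap (MvPolynomial (Fin n) k) Rf (MvPolynomial.pderiv i f))) * L j -
          LinearMap.mulLeft k (Polynomial.C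
              (algebraMap (MvPolynomial (Fin n) k) Rf (MvPolynomial.pderiv j f))) * L i} := by
  classical
  set a : Fin n → (MvPolynomial (Fin n) k) := fun i => MvPolynomial.pderiv i f with ha
  set u : Rf := IsLocalization.Away.invSelf f with hu
  have hfu : algebraMap (MvPolynomial (Fin n) k) Rf f * u = 1 := IsLocalization.Away.mul_invSelf f
  have huu : IsUnit u := IsUnit.of_mul_eq_one _ (by rw [mul_comm]; exact hfu)
  have hinj : Function.Injective (algebraMap (MvPolynomial (Fin n) k) Rf) :=
    IsLocalization.injective Rf (powers_le_nonZeroDivisors_of_noZeroDivisors hf0)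
  have hLc := fun i => Yano.coeff_L (hL i)
  have hL0 : ∀ i p, (L i p).coeff 0 = pd i (p.coeff 0) := fun i p => (hLc i p).1
  have hL1 : ∀ i p e, (L i p).coeff (e + 1) =
      pd i (p.coeff (e + 1)) + u * algebraMap (MvPolynomial (Fin n) k) Rf (a i) * p.coeff e := fun i p => (hLc i p).2
  -- commutation
  have hpdc : ∀ i j c, pd i (pd j c) = pd j (pd i c) := by
    intro i j c
    have h0 : ∀ r : (MvPolynomial (Fin n) k), ⁅pd i, pd j⁆ (algebraMap (MvPolynomial (Fin n) k) Rf r) = 0 := by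
      intro r
      rw [Derivation.commutator_apply, hpd, hpd, hpd, hpd, sub_eq_zero]
      congr 1
      exact Yano.pderiv_comm' i j r
    obtain ⟨⟨r, s⟩, hs⟩ := IsLocalization.surj (Submonoid.powers f) c
    have h1 := congrArg (fun z => ⁅pd i, pd j⁆ z) hs
    simp only at h1
    rw [Derivation.leibniz, h0, h0, smul_zero, zero_add, smul_eq_mul] at h1
    have h2 := (IsLocalization.map_units Rf s).mul_right_eq_zero.1 h1
    rw [Derivation.commutator_apply, sub_eq_zero] at h2
    exact h2
  have hpdu : ∀ i, pd i u = - (u * u * algebraMap (MvPolynomial (Fin n) k) Rf (a i)) := by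
    intro i
    have h1 := congrArg (pd i) hfu
    rw [Derivation.leibniz, hpd, Derivation.map_one_eq_zero, smul_eq_mul, smul_eq_mul] at h1
    calc pd i u = (algebraMap (MvPolynomial (Fin n) k) Rf f * u) * pd i u := by rw [hfu, one_mul]
      _ = u * (algebraMap (MvPolynomial (Fin n) k) Rf f * pd i u + u * algebraMap (MvPolynomial (Fin n) k) Rf (a i))
          - u * u * algebraMap (MvPolynomial (Fin n) k) Rf (a i) := by ring
      _ = _ := by rw [h1]; ring
  have hg : ∀ i j, pd i (u * algebraMap (MvPolynomial (Fin n) k) Rf (a j)) = pd j (u * algebraMap (MvPolynomial (Fin n) k) Rf (a i)) := by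
    intro i j
    have h1 : MvPolynomial.pderiv i (a j) = MvPolynomial.pderiv j (a i) :=
      Yano.pderiv_comm' i j f
    simp only [Derivation.leibniz, hpd, hpdu, h1, smul_eq_mul]
    ring
  have hcomm : ∀ i j, L i * L j = L j * L i := by
    intro i j
    refine LinearMap.ext fun p => Polynomial.ext fun e => ?_
    simp only [Module.End.mul_apply]
    rcases e with _ | _ | e
    · rw [hL0, hL0, hL0, hL0, hpdc]
    · simp only [hL0, hL1, map_add, Derivation.leibniz (pd _) (_ * _), hg i j, smul_eq_mul]
      rw [hpdc i j]; ring
    · simp only [hL1, map_add, Derivation.leibniz (pd _) (_ * _), hg i j, smul_eq_mul]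
      rw [hpdc i j]; ring
  have hδ : ∀ i (r : (MvPolynomial (Fin n) k)) (x : Polynomial Rf),
      L i (r • x) = r • L i x + (fun i r => MvPolynomial.pderiv i r) i r • x := by
    intro i r x
    refine Polynomial.ext fun e => ?_
    rcases e with _ | e
    · simp only [hL0, Polynomial.coeff_add, Polynomial.coeff_smul]
      simp only [Algebra.smul_def, Derivation.leibniz, hpd, smul_eq_mul, Algebra.algebraMap_self_apply]
      ring
    · simp only [hL1, Polynomial.coeff_add, Polynomial.coeff_smul]
      simp only [Algebra.smul_def, Derivation.leibniz, hpd, smul_eq_mul, Algebra.algebraMap_self_apply]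
      ring
  obtain ⟨op, hop1, hopX⟩ := Yano.exists_op (R := MvPolynomial (Fin n) k) L hcomm
  have hmu : ∀ r : (MvPolynomial (Fin n) k), (LinearMap.mulLeft k (Polynomial.C (algebraMap (MvPolynomial (Fin n) k) Rf r)) :
      Module.End k (Polynomial Rf)) = Yano.mu r := by
    intro r
    refine LinearMap.ext fun p => Polynomial.ext fun e => ?_
    simp only [Yano.mu, LinearMap.smul_apply, Module.End.one_apply, Polynomial.coeff_smul]
    simp [Algebra.smul_def]
  simp only [hmu] at hDalg ⊢
  -- regular sequence
  have hr : ∀ m (h : m < n) x, a ⟨m, h⟩ * x ∈ Yano.I a m → x ∈ Yano.I a m := by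
    intro m h x hx
    have h1 := (RingTheory.Sequence.isWeaklyRegular_iff_Fin _ _).1 hreg.toIsWeaklyRegular
      ⟨m, by simpa using h⟩
    have hI : (Ideal.ofList (((List.finRange n).map a).take m) • ⊤ : Submodule (MvPolynomial (Fin n) k) (MvPolynomial (Fin n) k)) =
        Yano.I a m := by
      rw [smul_eq_mul, Ideal.mul_top, Ideal.ofList, Yano.I]
      congr 1
      ext y
      simp only [Set.mem_ofPred_eq, List.mem_take_iff_getElem]
      constructor
      · rintro ⟨i, hi, rfl⟩
        have hi' : i < m ∧ i < n := by simpa using hi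
        exact ⟨⟨i, hi'.2⟩, hi'.1, by simp⟩
      · rintro ⟨i, hi, rfl⟩
        exact ⟨i, by simpa using hi, by simp⟩
    rw [← Submodule.Quotient.mk_eq_zero, ← hI] at hx ⊢
    rw [← smul_eq_mul, Submodule.Quotient.mk_smul] at hx
    apply h1
    simpa using hx
  have hgen : ∀ i j, (Yano.mu (a i) * L j - Yano.mu (a j) * L i : Module.End k (Polynomial Rf)) (1 : Polynomial Rf) = 0 := by
    intro i j
    refine Polynomial.ext fun e => ?_
    rw [Yano.mu_mul, Yano.mu_mul]
    rcases e with _ | e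
    · simp [hL0]
    · simp only [LinearMap.sub_apply, LinearMap.smul_apply, Polynomial.coeff_sub,
        Polynomial.coeff_smul, hL1]
      simp only [Algebra.smul_def, Polynomial.coeff_one, Polynomial.coeff_zero]
      simp
      ring
  have hK : ∀ P ∈ Yano.Kop a L op, P (1 : Polynomial Rf) = 0 := by
    intro P hP
    unfold Yano.Kop at hP
    induction hP using Submodule.span_induction with
    | mem x hx =>
      obtain ⟨c, i, j, rfl⟩ := hx
      rw [Module.End.mul_apply, hgen, map_zero]
    | zero => simp
    | add x y _ _ hx hy => rw [LinearMap.add_apply, hx, hy, add_zero]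
    | smul r x _ hx => rw [LinearMap.smul_apply, hx, smul_zero]
  have hmain := Yano.main_op hδ hop1 hopX a hr 1 hK (Yano.hlead huu hinj hL0 hL1 hop1 hopX)
  subst hDalg
  refine ⟨_, ?_, rfl⟩
  intro x
  constructor
  · intro hx
    induction hx using Submodule.span_induction with
    | mem x hx =>
      obtain ⟨i, j, -, hx⟩ := hx
      rw [hx]; exact hgen i j
    | zero => simp
    | add x y _ _ hx hy => rw [Subalgebra.coe_add, LinearMap.add_apply, hx, hy, add_zero]
    | smul r x _ hx =>
      rw [smul_eq_mul, Subalgebra.coe_mul, Module.End.mul_apply, hx, map_zero]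
  · intro hx
    obtain ⟨F, hF⟩ := Yano.adjoin_le hδ hop1 hopX x.2
    obtain ⟨d, hd⟩ := Yano.exists_mem_U F
    have h1 := hmain d F hd (by rw [← hF]; exact hx)
    rw [← hF] at h1
    have hLm : ∀ i, L i ∈ Algebra.adjoin k
        (Set.range (fun r : (MvPolynomial (Fin n) k) => (Yano.mu r : Module.End k (Polynomial Rf))) ∪ Set.range L) :=
      fun i => Algebra.subset_adjoin (Or.inr ⟨i, rfl⟩)
    have hmm : ∀ r : (MvPolynomial (Fin n) k), (Yano.mu r : Module.End k (Polynomial Rf)) ∈ Algebra.adjoin k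
        (Set.range (fun r : (MvPolynomial (Fin n) k) => (Yano.mu r : Module.End k (Polynomial Rf))) ∪ Set.range L) :=
      fun r => Algebra.subset_adjoin (Or.inl ⟨r, rfl⟩)
    have hgm := fun i j : Fin n => sub_mem (mul_mem (hmm (a i)) (hLm j)) (mul_mem (hmm (a j)) (hLm i))
    suffices h : ∀ P ∈ Yano.Kop a L op, ∃ hP : P ∈ Algebra.adjoin k
        (Set.range (fun r : (MvPolynomial (Fin n) k) => (Yano.mu r : Module.End k (Polynomial Rf))) ∪ Set.range L),
        (⟨P, hP⟩ : Algebra.adjoin k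
          (Set.range (fun r : (MvPolynomial (Fin n) k) => (Yano.mu r : Module.End k (Polynomial Rf))) ∪ Set.range L)) ∈
        Ideal.span {b : Algebra.adjoin k
          (Set.range (fun r : (MvPolynomial (Fin n) k) => (Yano.mu r : Module.End k (Polynomial Rf))) ∪ Set.range L) |
          ∃ i j : Fin n, i < j ∧ (b : Module.End k (Polynomial Rf)) =
            Yano.mu (a i) * L j - Yano.mu (a j) * L i} by
      exact (h _ h1).2
    intro P hP
    unfold Yano.Kop at hP
    induction hP using Submodule.span_induction with
    | mem x hx =>
      obtain ⟨c, i, j, rfl⟩ := hx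
      have hc := Yano.op_mem_adjoin hop1 hopX c
      refine ⟨mul_mem hc (hgm i j), ?_⟩
      refine Ideal.mul_mem_left _ ⟨op c, hc⟩ (?_ : (⟨_, hgm i j⟩ : Algebra.adjoin k _) ∈ _)
      rcases lt_trichotomy i j with h | h | h
      · exact Ideal.subset_span ⟨i, j, h, rfl⟩
      · subst h
        have e0 : (⟨_, hgm i i⟩ : Algebra.adjoin k _) = 0 := Subtype.ext (sub_self _)
        rw [e0]; exact Ideal.zero_mem _
      · have e0 : (⟨_, hgm i j⟩ : Algebra.adjoin k _) =
            ⟨-1, neg_mem (one_mem _)⟩ * ⟨_, hgm j i⟩ := Subtype.ext (by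
          have hring : ∀ P Q : Module.End k (Polynomial Rf), P - Q = (-1) * (Q - P) := by
            intro P Q
            exact LinearMap.ext fun z => (neg_sub (Q z) (P z)).symm
          exact hring _ _)
        rw [e0]
        exact Ideal.mul_mem_left _ _ (Ideal.subset_span ⟨j, i, h, rfl⟩)
    | zero => exact ⟨zero_mem _, zero_mem _⟩
    | add x y _ _ hx hy =>
      obtain ⟨h1, h2⟩ := hx
      obtain ⟨h3, h4⟩ := hy
      exact ⟨add_mem h1 h3, Ideal.add_mem _ h2 h4⟩
    | smul r x _ hx =>
      obtain ⟨h1, h2⟩ := hx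
      rw [← Yano.mu_mul]
      exact ⟨mul_mem (hmm r) h1, Ideal.mul_mem_left _ ⟨_, hmm r⟩ h2⟩
end

section
/- The set B := {b ∈ k[X] : b(X)·1 ∈ D'·(f·1)}, where D'·(f·1) := {a(f·1) : a ∈ D'} ⊆ N, is an ideal of k[X], and B is the principal ideal generated by the polynomial (X + 1)·∏_{λ ∈ Σ(f)} (X + (λ + |w|)). (Equivalently, the Bernstein–Sato polynomial of the weighted homogeneous polynomial f with isolated singularity is b_f(s) = (s+1)·∏_{λ∈Σ(f)}(s + λ + |w|).) -/
set_option linter.unusedSectionVars false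
set_option linter.unusedVariables false

namespace BGM

/-! ### A Koszul complex, defined recursively -/

/-- The underlying module of the Koszul complex on `n` elements. -/
def Kos (R : Type*) : ℕ → Type _
  | 0 => R
  | n + 1 => Kos R n × Kos R n

noncomputable instance instKosAdd (R : Type*) [CommRing R] : ∀ n, AddCommGroup (Kos R n)
  | 0 => inferInstanceAs (AddCommGroup R)
  | n + 1 => letI := instKosAdd R n; inferInstanceAs (AddCommGroup (Kos R n × Kos R n))

noncomputable instance instKosMod (R : Type*) [CommRing R] : ∀ n, Module R (Kos R n)
  | 0 => inferInstanceAs (Module R R)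
  | n + 1 => letI := instKosMod R n; inferInstanceAs (Module R (Kos R n × Kos R n))

variable {R : Type*} [CommRing R]

/-- Koszul differential. -/
noncomputable def kd (f : ℕ → R) : ∀ n, Kos R n →ₗ[R] Kos R n
  | 0 => 0
  | n + 1 => LinearMap.prod
      (M := Kos R n × Kos R n)
      ((kd f n).comp (LinearMap.fst R (Kos R n) (Kos R n))
        + f n • LinearMap.snd R (Kos R n) (Kos R n))
      (-((kd f n).comp (LinearMap.snd R (Kos R n) (Kos R n))))

/-- Wedge with the vector `v`. -/
noncomputable def kw (v : ℕ → R) : ∀ n, Kos R n →ₗ[R] Kos R n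
  | 0 => 0
  | n + 1 => LinearMap.prod
      (M := Kos R n × Kos R n)
      ((kw v n).comp (LinearMap.fst R (Kos R n) (Kos R n)))
      (v n • LinearMap.fst R (Kos R n) (Kos R n)
        - (kw v n).comp (LinearMap.snd R (Kos R n) (Kos R n)))

/-- pairs as elements of the next Koszul module -/
def kp {n : ℕ} (a b : Kos R n) : Kos R (n + 1) := (a, b)

lemma kp_surj {n : ℕ} (x : Kos R (n + 1)) : ∃ a b, x = kp a b := ⟨x.1, x.2, rfl⟩

lemma kp_add {n : ℕ} (a b a' b' : Kos R n) : kp a b + kp a' b' = kp (a + a') (b + b') := rfl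
lemma kp_sub {n : ℕ} (a b a' b' : Kos R n) : kp a b - kp a' b' = kp (a - a') (b - b') := rfl
lemma kp_smul {n : ℕ} (r : R) (a b : Kos R n) : r • kp a b = kp (r • a) (r • b) := rfl
lemma kp_zero {n : ℕ} : (0 : Kos R (n + 1)) = kp 0 0 := rfl
lemma kp_inj {n : ℕ} {a b a' b' : Kos R n} : kp a b = kp a' b' ↔ a = a' ∧ b = b' := Prod.mk_inj

lemma kd_succ (f : ℕ → R) {n : ℕ} (a b : Kos R n) :
    kd f (n + 1) (kp a b) = kp (kd f n a + f n • b) (-(kd f n b)) := rfl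
lemma kw_succ (v : ℕ → R) {n : ℕ} (a b : Kos R n) :
    kw v (n + 1) (kp a b) = kp (kw v n a) (v n • a - kw v n b) := rfl

lemma kd_kd (f : ℕ → R) : ∀ n (x : Kos R n), kd f n (kd f n x) = 0
  | 0, x => rfl
  | n + 1, x => by
    obtain ⟨a, b, rfl⟩ := kp_surj x
    simp [kd_succ, kd_kd f n, kp_zero]

lemma kd_kw (f v : ℕ → R) : ∀ n (x : Kos R n),
    kd f n (kw v n x) + kw v n (kd f n x) = (∑ i ∈ Finset.range n, v i * f i) • x
  | 0, x => by simp [kd, kw]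
  | n + 1, x => by
    obtain ⟨a, b, rfl⟩ := kp_surj x
    have ha := kd_kw f v n a
    have hb := kd_kw f v n b
    rw [Finset.sum_range_succ, kd_succ, kw_succ, kd_succ, kw_succ, kp_add, kp_smul, kp_inj,
      add_smul, add_smul, ← ha, ← hb]
    constructor
    · simp only [map_add, map_smul, smul_sub, mul_smul]
      rw [smul_comm (v n)]; abel
    · simp only [map_sub, map_smul, map_neg, smul_add, mul_smul]
      abel

/-- degree `j` part -/
def kdeg : ∀ (n : ℕ) (_ : ℕ), Kos R n → Prop
  | 0, 0, _ => True
  | 0, _ + 1, x => x = 0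
  | n + 1, 0, x => kdeg n 0 x.1 ∧ x.2 = 0
  | n + 1, j + 1, x => kdeg n (j + 1) x.1 ∧ kdeg n j x.2

lemma kdeg_s0 {n : ℕ} {a b : Kos R n} : kdeg (n + 1) 0 (kp a b) ↔ kdeg n 0 a ∧ b = 0 := Iff.rfl
lemma kdeg_ss {n j : ℕ} {a b : Kos R n} :
    kdeg (n + 1) (j + 1) (kp a b) ↔ kdeg n (j + 1) a ∧ kdeg n j b := Iff.rfl

lemma kdeg_zero : ∀ n j, kdeg n j (0 : Kos R n)
  | 0, 0 => trivial
  | 0, _ + 1 => rfl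
  | n + 1, 0 => ⟨kdeg_zero n 0, rfl⟩
  | n + 1, j + 1 => ⟨kdeg_zero n (j + 1), kdeg_zero n j⟩

lemma kdeg_add : ∀ n j (x y : Kos R n), kdeg n j x → kdeg n j y → kdeg n j (x + y)
  | 0, 0, _, _, _, _ => trivial
  | 0, _ + 1, x, y, hx, hy => by
    change x = 0 at hx; change y = 0 at hy; change x + y = 0; simp [hx, hy]
  | n + 1, 0, x, y, hx, hy => ⟨kdeg_add n 0 _ _ hx.1 hy.1, by
      have h1 : x.2 = 0 := hx.2
      have h2 : y.2 = 0 := hy.2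
      change x.2 + y.2 = 0; simp [h1, h2]⟩
  | n + 1, j + 1, x, y, hx, hy =>
    ⟨kdeg_add n (j + 1) _ _ hx.1 hy.1, kdeg_add n j _ _ hx.2 hy.2⟩

lemma kdeg_smul (r : R) : ∀ n j (x : Kos R n), kdeg n j x → kdeg n j (r • x)
  | 0, 0, _, _ => trivial
  | 0, _ + 1, x, hx => by
    change x = 0 at hx; change r • x = 0; simp [hx]
  | n + 1, 0, x, hx => ⟨kdeg_smul r n 0 _ hx.1, by
      have h1 : x.2 = 0 := hx.2
      change r • x.2 = 0; simp [h1]⟩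
  | n + 1, j + 1, x, hx =>
    ⟨kdeg_smul r n (j + 1) _ hx.1, kdeg_smul r n j _ hx.2⟩

lemma kdeg_neg (n j) (x : Kos R n) (h : kdeg n j x) : kdeg n j (-x) := by
  have := kdeg_smul (-1) n j x h
  simpa using this

lemma kdeg_sub (n j) (x y : Kos R n) (h : kdeg n j x) (h' : kdeg n j y) : kdeg n j (x - y) := by
  rw [sub_eq_add_neg]; exact kdeg_add n j _ _ h (kdeg_neg n j _ h')

lemma kdeg_big : ∀ n j (x : Kos R n), n < j → kdeg n j x → x = 0
  | 0, 0, _, h, _ => absurd h (by omega)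
  | 0, _ + 1, x, _, hx => hx
  | n + 1, 0, x, h, hx => absurd h (by omega)
  | n + 1, j + 1, x, h, hx => by
    obtain ⟨a, b, rfl⟩ := kp_surj x
    have h1 := kdeg_big n (j + 1) a (by omega) hx.1
    have h2 := kdeg_big n j b (by omega) hx.2
    rw [h1, h2]; rfl

lemma kdeg_kw (v : ℕ → R) : ∀ n j (x : Kos R n), kdeg n j x → kdeg n (j + 1) (kw v n x)
  | 0, j, x, h => rfl
  | n + 1, 0, x, h => by
    obtain ⟨a, b, rfl⟩ := kp_surj x
    rw [kdeg_s0] at h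
    obtain ⟨h, rfl⟩ := h
    rw [kw_succ, kdeg_ss]
    refine ⟨kdeg_kw v n 0 a h, ?_⟩
    simpa using kdeg_smul _ n 0 a h
  | n + 1, j + 1, x, h => by
    obtain ⟨a, b, rfl⟩ := kp_surj x
    rw [kdeg_ss] at h
    rw [kw_succ, kdeg_ss]
    exact ⟨kdeg_kw v n _ a h.1, kdeg_sub _ _ _ _ (kdeg_smul _ _ _ _ h.1) (kdeg_kw v n _ _ h.2)⟩

lemma kd_deg0 (f : ℕ → R) : ∀ n (x : Kos R n), kdeg n 0 x → kd f n x = 0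
  | 0, x, h => rfl
  | n + 1, x, h => by
    obtain ⟨a, b, rfl⟩ := kp_surj x
    rw [kdeg_s0] at h
    obtain ⟨h, rfl⟩ := h
    rw [kd_succ, kd_deg0 f n a h]; simp [kp_zero]

/-- coordinates in the ideal `I` -/
def kI (I : Ideal R) : ∀ n, Kos R n → Prop
  | 0, x => (id x : R) ∈ I
  | n + 1, x => kI I n x.1 ∧ kI I n x.2

lemma kI_succ {I : Ideal R} {n : ℕ} {a b : Kos R n} :
    kI I (n + 1) (kp a b) ↔ kI I n a ∧ kI I n b := Iff.rfl

lemma kI_zero (I : Ideal R) : ∀ n, kI I n (0 : Kos R n)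
  | 0 => I.zero_mem
  | n + 1 => ⟨kI_zero I n, kI_zero I n⟩

lemma kI_add (I : Ideal R) : ∀ n (x y : Kos R n), kI I n x → kI I n y → kI I n (x + y)
  | 0, _, _, hx, hy => I.add_mem hx hy
  | n + 1, _, _, hx, hy => ⟨kI_add I n _ _ hx.1 hy.1, kI_add I n _ _ hx.2 hy.2⟩

lemma kI_smul (I : Ideal R) (r : R) : ∀ n (x : Kos R n), kI I n x → kI I n (r • x)
  | 0, _, hx => I.mul_mem_left r hx
  | n + 1, _, hx => ⟨kI_smul I r n _ hx.1, kI_smul I r n _ hx.2⟩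

lemma kI_smul_mem (I : Ideal R) (r : R) (hr : r ∈ I) : ∀ n (x : Kos R n), kI I n (r • x)
  | 0, _ => I.mul_mem_right _ hr
  | n + 1, _ => ⟨kI_smul_mem I r hr n _, kI_smul_mem I r hr n _⟩

lemma kI_mono {I I' : Ideal R} (h : I ≤ I') : ∀ n (x : Kos R n), kI I n x → kI I' n x
  | 0, _, hx => h hx
  | n + 1, _, hx => ⟨kI_mono h n _ hx.1, kI_mono h n _ hx.2⟩

lemma kI_neg (I : Ideal R) (n) (x : Kos R n) (h : kI I n x) : kI I n (-x) := by
  have := kI_smul I (-1) n x h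
  simpa using this

lemma kI_sub (I : Ideal R) (n) (x y : Kos R n) (h : kI I n x) (h' : kI I n y) :
    kI I n (x - y) := by
  rw [sub_eq_add_neg]; exact kI_add I n _ _ h (kI_neg I n _ h')

lemma kI_bot : ∀ n (x : Kos R n), kI (⊥ : Ideal R) n x → x = 0
  | 0, x, h => (Submodule.mem_bot R).mp h
  | n + 1, x, h => by
    obtain ⟨a, b, rfl⟩ := kp_surj x
    rw [kI_bot n a h.1, kI_bot n b h.2]; rfl

lemma kI_reg (I : Ideal R) (p : R) (hp : ∀ a, p * a ∈ I → a ∈ I) :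
    ∀ n (x : Kos R n), kI I n (p • x) → kI I n x
  | 0, x, h => hp _ h
  | n + 1, x, h => ⟨kI_reg I p hp n _ h.1, kI_reg I p hp n _ h.2⟩

lemma kI_kd (I : Ideal R) (f : ℕ → R) : ∀ n (x : Kos R n), kI I n x → kI I n (kd f n x)
  | 0, x, h => I.zero_mem
  | n + 1, x, h => by
    obtain ⟨a, b, rfl⟩ := kp_surj x
    exact ⟨kI_add I n _ _ (kI_kd I f n _ h.1) (kI_smul I _ n _ h.2),
      kI_neg I n _ (kI_kd I f n _ h.2)⟩

lemma kI_kw (I : Ideal R) (f : ℕ → R) : ∀ n (x : Kos R n), kI I n x → kI I n (kw f n x)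
  | 0, x, h => I.zero_mem
  | n + 1, x, h => by
    obtain ⟨a, b, rfl⟩ := kp_surj x
    exact ⟨kI_kw I f n _ h.1,
      kI_sub I n _ _ (kI_smul I _ n _ h.1) (kI_kw I f n _ h.2)⟩

lemma kI_lift (I I' : Ideal R) (p : R) (hp : ∀ u ∈ I', ∃ z, u - p * z ∈ I) :
    ∀ n j (x : Kos R n), kdeg n j x → kI I' n x → ∃ z, kdeg n j z ∧ kI I n (x - p • z)
  | 0, 0, x, hd, h => by
    obtain ⟨z, hz⟩ := hp _ h
    exact ⟨z, trivial, hz⟩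
  | 0, j + 1, x, hd, h => by
    refine ⟨0, rfl, ?_⟩
    change x = 0 at hd
    rw [hd, smul_zero, sub_zero]; exact kI_zero I 0
  | n + 1, 0, x, hd, h => by
    obtain ⟨a, b, rfl⟩ := kp_surj x
    obtain ⟨z, hz, hz'⟩ := kI_lift I I' p hp n 0 a hd.1 h.1
    rw [kdeg_s0] at hd
    obtain ⟨_, rfl⟩ := hd
    refine ⟨kp z 0, ⟨hz, rfl⟩, ?_⟩
    rw [kp_smul, kp_sub, kI_succ]
    refine ⟨hz', ?_⟩
    simpa using kI_zero I n
  | n + 1, j + 1, x, hd, h => by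
    obtain ⟨a, b, rfl⟩ := kp_surj x
    obtain ⟨z, hz, hz'⟩ := kI_lift I I' p hp n _ a hd.1 h.1
    obtain ⟨y, hy, hy'⟩ := kI_lift I I' p hp n _ b hd.2 h.2
    exact ⟨kp z y, ⟨hz, hy⟩, hz', hy'⟩

lemma kdeg_kd (f : ℕ → R) : ∀ n j (x : Kos R n), kdeg n (j + 1) x → kdeg n j (kd f n x)
  | 0, j, x, h => kdeg_zero 0 j
  | n + 1, 0, x, h => by
    obtain ⟨a, b, rfl⟩ := kp_surj x
    rw [kdeg_ss] at h
    rw [kd_succ, kdeg_s0]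
    refine ⟨kdeg_add _ _ _ _ (kdeg_kd f n 0 a h.1) (kdeg_smul _ _ _ _ h.2), ?_⟩
    rw [kd_deg0 f n b h.2, neg_zero]
  | n + 1, j + 1, x, h => by
    obtain ⟨a, b, rfl⟩ := kp_surj x
    rw [kdeg_ss] at h
    rw [kd_succ, kdeg_ss]
    exact ⟨kdeg_add _ _ _ _ (kdeg_kd f n _ a h.1) (kdeg_smul _ _ _ _ h.2),
      kdeg_neg _ _ _ (kdeg_kd f n j b h.2)⟩

/-- Acyclicity of the Koszul complex modulo `I k` above degree `k`. -/
lemma kos_acyclic (n : ℕ) (f : ℕ → R) (I : ℕ → Ideal R) (p : ℕ → R) (v : ℕ → ℕ → R)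
    (hmono : ∀ k, I k ≤ I (k + 1))
    (hpI : ∀ k < n, p k ∈ I (k + 1))
    (hlift : ∀ k < n, ∀ u ∈ I (k + 1), ∃ z, u - p k * z ∈ I k)
    (hreg : ∀ k < n, ∀ a, p k * a ∈ I k → a ∈ I k)
    (hv : ∀ k < n, p k = ∑ i ∈ Finset.range n, v k i * f i) :
    ∀ m k, k + m = n → ∀ j, k < j → ∀ x : Kos R n, kdeg n j x → kI (I k) n (kd f n x) →
      ∃ z, kdeg n (j + 1) z ∧ kI (I k) n (x - kd f n z)
  | 0, k, hk, j, hj, x, hx, _ => by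
    refine ⟨0, kdeg_zero _ _, ?_⟩
    rw [kdeg_big n j x (by omega) hx]
    simpa using kI_zero (I k) n
  | m + 1, k, hk, j, hj, x, hx, hdx => by
    have hkn : k < n := by omega
    have hom := kd_kw f (v k) n x
    rw [← hv k hkn] at hom
    have h1 : kI (I (k + 1)) n (kd f n (kw (v k) n x)) := by
      rw [eq_sub_of_add_eq hom]
      refine kI_sub _ _ _ _ (kI_smul_mem _ _ (hpI k hkn) _ _) ?_
      exact kI_kw _ _ _ _ (kI_mono (hmono k) _ _ hdx)
    obtain ⟨y, hy, hy'⟩ := kos_acyclic n f I p v hmono hpI hlift hreg hv m (k + 1) (by omega)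
      (j + 1) (by omega) (kw (v k) n x) (kdeg_kw _ _ _ _ hx) h1
    obtain ⟨z, hz, hz'⟩ := kI_lift (I k) (I (k + 1)) (p k) (hlift k hkn) n (j + 1) _
      (kdeg_sub _ _ _ _ (kdeg_kw _ _ _ _ hx) (kdeg_kd f n _ y hy)) hy'
    refine ⟨z, hz, kI_reg (I k) (p k) (hreg k hkn) n _ ?_⟩
    have h2 := kI_kd (I k) f n _ hz'
    simp only [map_sub, kd_kd, sub_zero, map_smul] at h2
    have h3 := kI_add _ _ _ _ h2 (kI_kw _ (v k) _ _ hdx)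
    convert h3 using 1
    rw [smul_sub, ← hom]; abel

/-- unit -/
noncomputable def kone : ∀ n, Kos R n
  | 0 => (1 : R)
  | n + 1 => kp (kone n) 0

/-- vectors -/
noncomputable def kvec (a : ℕ → R) : ∀ n, Kos R n
  | 0 => (0 : Kos R 0)
  | n + 1 => kp (kvec a n) (a n • kone n)

lemma kdeg_kone : ∀ n, kdeg n 0 (kone (R := R) n)
  | 0 => trivial
  | n + 1 => ⟨kdeg_kone n, rfl⟩

lemma kdeg_kvec (a : ℕ → R) : ∀ n, kdeg n 1 (kvec (R := R) a n)
  | 0 => rfl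
  | n + 1 => ⟨kdeg_kvec a n, kdeg_smul _ _ _ _ (kdeg_kone n)⟩

lemma kone_inj : ∀ n (r s : R), r • kone (R := R) n = s • kone n → r = s
  | 0, r, s, h => by
    change r * 1 = s * 1 at h
    simpa using h
  | n + 1, r, s, h => by
    simp only [kone, kp_smul, kp_inj] at h
    exact kone_inj n r s h.1

lemma kvec_inj (a b : ℕ → R) : ∀ n, kvec a n = kvec b n → ∀ i < n, a i = b i
  | 0, _, i, hi => absurd hi (by omega)
  | n + 1, h, i, hi => by
    simp only [kvec, kp_inj] at h
    rcases Nat.lt_succ_iff_lt_or_eq.mp hi with h' | rfl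
    · exact kvec_inj a b n h.1 i h'
    · exact kone_inj _ _ _ h.2

lemma kvec_congr (a b : ℕ → R) : ∀ n, (∀ i < n, a i = b i) → kvec a n = kvec b n
  | 0, _ => rfl
  | n + 1, h => by
    simp only [kvec]
    rw [kvec_congr a b n (fun i hi => h i (by omega)), h n (by omega)]

lemma kd_kvec (f a : ℕ → R) : ∀ n, kd f n (kvec a n) = (∑ i ∈ Finset.range n, f i * a i) • kone n
  | 0 => by simp [kd]
  | n + 1 => by
    simp only [kvec, kone, kd_succ, kd_kvec f a n, map_smul, kd_deg0 f n _ (kdeg_kone n), kp_smul,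
      Finset.sum_range_succ, add_smul, mul_smul, kp_add]
    simp

lemma kdeg0_eq : ∀ n (x : Kos R n), kdeg n 0 x → ∃ r : R, x = r • kone n
  | 0, x, _ => ⟨x, (mul_one (M := R) x).symm⟩
  | n + 1, x, h => by
    obtain ⟨a, b, rfl⟩ := kp_surj x
    rw [kdeg_s0] at h
    obtain ⟨h, rfl⟩ := h
    obtain ⟨r, rfl⟩ := kdeg0_eq n a h
    exact ⟨r, by simp [kone, kp_smul]⟩

lemma kdeg1_eq : ∀ n (x : Kos R n), kdeg n 1 x → ∃ a : ℕ → R, x = kvec a n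
  | 0, x, h => ⟨0, h⟩
  | n + 1, x, h => by
    obtain ⟨a, b, rfl⟩ := kp_surj x
    rw [kdeg_ss] at h
    obtain ⟨c, rfl⟩ := kdeg1_eq n a h.1
    obtain ⟨r, rfl⟩ := kdeg0_eq n b h.2
    refine ⟨Function.update c n r, ?_⟩
    simp only [kvec, Function.update_self, kp_inj, and_true]
    exact kvec_congr _ _ _ fun i hi => by rw [Function.update_of_ne (by omega)]

lemma kvec_add (a b : ℕ → R) : ∀ n, kvec a n + kvec b n = kvec (a + b) n
  | 0 => by simp [kvec]
  | n + 1 => by simp only [kvec, kp_add, kvec_add a b n, Pi.add_apply, add_smul]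

lemma kvec_smul (r : R) (b : ℕ → R) : ∀ n, r • kvec b n = kvec (r • b) n
  | 0 => by simp [kvec]
  | n + 1 => by simp only [kvec, kp_smul, kvec_smul r b n, Pi.smul_apply, smul_smul, smul_eq_mul]

lemma kdeg2_eq (f : ℕ → R) : ∀ n (x : Kos R n), kdeg n 2 x → ∃ b : ℕ → ℕ → R,
    (∀ i j, b i j = - b j i) ∧
    kd f n x = kvec (fun i => ∑ j ∈ Finset.range n, b i j * f j) n
  | 0, x, h => ⟨0, by simp, by simp [kd, kvec]⟩
  | n + 1, x, h => by
    obtain ⟨y, z, rfl⟩ := kp_surj x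
    rw [kdeg_ss] at h
    obtain ⟨b, hb, hb'⟩ := kdeg2_eq f n y h.1
    obtain ⟨c, rfl⟩ := kdeg1_eq n z h.2
    refine ⟨fun i j => if i = n then (if j = n then 0 else - c j) else
      (if j = n then c i else b i j), ?_, ?_⟩
    · intro i j
      by_cases hi : i = n <;> by_cases hj : j = n <;> simp [hi, hj, hb i j]
    · simp only [kd_succ, kvec, kp_inj, hb', kvec_smul, kvec_add]
      constructor
      · apply kvec_congr
        intro i hi
        have : i ≠ n := by omega
        simp only [this, if_false, Finset.sum_range_succ, if_true, Pi.add_apply, Pi.smul_apply,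
          smul_eq_mul]
        rw [mul_comm (f n)]
        congr 1
        apply Finset.sum_congr rfl
        intro j hj
        have : j ≠ n := by have := Finset.mem_range.mp hj; omega
        simp [this]
      · rw [kd_kvec, ← neg_smul]
        congr 1
        simp only [if_true, Finset.sum_range_succ, zero_mul, add_zero]
        rw [← Finset.sum_neg_distrib]
        apply Finset.sum_congr rfl
        intro j hj
        have : j ≠ n := by have := Finset.mem_range.mp hj; omega
        simp [this, mul_comm]

/-- Vanishing of the first Koszul homology. -/
lemma koszul_H1 (n : ℕ) (f : ℕ → R) (I : ℕ → Ideal R) (p : ℕ → R) (v : ℕ → ℕ → R)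
    (hbot : I 0 = ⊥)
    (hmono : ∀ k, I k ≤ I (k + 1))
    (hpI : ∀ k < n, p k ∈ I (k + 1))
    (hlift : ∀ k < n, ∀ u ∈ I (k + 1), ∃ z, u - p k * z ∈ I k)
    (hreg : ∀ k < n, ∀ a, p k * a ∈ I k → a ∈ I k)
    (hv : ∀ k < n, p k = ∑ i ∈ Finset.range n, v k i * f i)
    (a : ℕ → R) (ha : ∑ i ∈ Finset.range n, f i * a i = 0) :
    ∃ b : ℕ → ℕ → R, (∀ i j, b i j = - b j i) ∧
      ∀ i < n, a i = ∑ j ∈ Finset.range n, b i j * f j := by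
  obtain ⟨z, hz, hz'⟩ := kos_acyclic n f I p v hmono hpI hlift hreg hv n 0 (by simp) 1
    (by simp) (kvec a n) (kdeg_kvec a n) (by
      rw [kd_kvec, ha, zero_smul]; exact kI_zero _ _)
  rw [hbot] at hz'
  have h := sub_eq_zero.mp (kI_bot n _ hz')
  obtain ⟨b, hb, hb'⟩ := kdeg2_eq f n z hz
  exact ⟨b, hb, kvec_inj _ _ n (h.trans hb')⟩

end BGM

set_option linter.unusedSectionVars false
set_option linter.unusedVariables false
namespace BGM

open MvPolynomial in
lemma mv_H1 {k : Type*} [Field k] (n : ℕ) (F : Fin n → MvPolynomial (Fin n) k) (N : Fin n → ℕ)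
    (hN : ∀ i, (X i : MvPolynomial (Fin n) k) ^ N i ∈ Ideal.span (Set.range F))
    (a : Fin n → MvPolynomial (Fin n) k) (ha : ∑ i, F i * a i = 0) :
    ∃ b : Fin n → Fin n → MvPolynomial (Fin n) k, (∀ i j, b i j = - b j i) ∧
      ∀ i, a i = ∑ j, b i j * F j := by
  classical
  let ext : (Fin n → MvPolynomial (Fin n) k) → ℕ → MvPolynomial (Fin n) k :=
    fun g i => if h : i < n then g ⟨i, h⟩ else 0
  have hext : ∀ g (i : Fin n), ext g i = g i := fun g i => by simp [ext]
  have hsum : ∀ g h, ∑ i ∈ Finset.range n, ext g i * ext h i = ∑ i, g i * h i := fun g h => by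
    rw [← Fin.sum_univ_eq_sum_range (fun i => ext g i * ext h i)]
    simp [hext]
  let T : ℕ → Set (Fin n →₀ ℕ) := fun m => {s | ∃ i : Fin n, i.val < m ∧ s = Finsupp.single i (N i)}
  let I : ℕ → Ideal (MvPolynomial (Fin n) k) := fun m =>
    Ideal.span ((fun s => monomial s (1 : k)) '' T m)
  have hc : ∀ i : Fin n, ∃ c : Fin n → MvPolynomial (Fin n) k, ∑ j, c j * F j = X i ^ N i :=
    fun i => (Ideal.mem_span_range_iff_exists_fun).mp (hN i)
  choose c hc using hc
  let p : ℕ → MvPolynomial (Fin n) k := ext (fun i => X i ^ N i)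
  have hp : ∀ (m : ℕ) (h : m < n), p m = monomial (Finsupp.single ⟨m, h⟩ (N ⟨m, h⟩)) 1 := by
    intro m h
    simp only [p, ext, h, dite_true]
    rw [X_pow_eq_monomial]
  let v : ℕ → ℕ → MvPolynomial (Fin n) k := fun m => if h : m < n then ext (c ⟨m, h⟩) else 0
  obtain ⟨b, hb, hb'⟩ := koszul_H1 n (ext F) I p v (by simp [I, T])
    (fun m => Ideal.span_mono (Set.image_mono fun s hs => by
      obtain ⟨i, hi, rfl⟩ := hs
      exact ⟨i, by omega, rfl⟩))
    (fun m hm => by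
      rw [hp m hm]
      exact Ideal.subset_span ⟨_, ⟨⟨m, hm⟩, by simp, rfl⟩, rfl⟩)
    (fun m hm u hu => by
      have hle : I (m + 1) ≤ Ideal.span {p m} ⊔ I m := by
        apply Ideal.span_le.mpr
        rintro _ ⟨s, ⟨i, hi, rfl⟩, rfl⟩
        rcases Nat.lt_succ_iff_lt_or_eq.mp hi with h | h
        · exact Ideal.mem_sup_right (Ideal.subset_span ⟨_, ⟨i, h, rfl⟩, rfl⟩)
        · subst h
          refine Ideal.mem_sup_left (Ideal.subset_span ?_)
          rw [hp _ i.2]; rfl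
      obtain ⟨y, hy, z, hz, rfl⟩ := Submodule.mem_sup.mp (hle hu)
      obtain ⟨q, rfl⟩ := Ideal.mem_span_singleton'.mp hy
      refine ⟨q, ?_⟩
      convert hz using 1
      ring)
    (fun m hm q hq => by
      rw [hp m hm] at hq
      simp only [I] at hq ⊢
      rw [mem_ideal_span_monomial_image] at hq ⊢
      intro xi hxi
      obtain ⟨s, ⟨i, hi, rfl⟩, hs⟩ := hq (Finsupp.single ⟨m, hm⟩ (N ⟨m, hm⟩) + xi) (by
        rw [mem_support_iff, coeff_monomial_mul, one_mul]
        exact mem_support_iff.mp hxi)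
      refine ⟨_, ⟨i, hi, rfl⟩, ?_⟩
      rw [Finsupp.single_le_iff] at hs ⊢
      have : (⟨m, hm⟩ : Fin n) ≠ i := fun h => by subst h; simp at hi
      simpa [Finsupp.single_apply, this] using hs)
    (fun m hm => by
      simp only [v, hm, dite_true]
      rw [hsum, hc]
      simp [p, ext, hm])
    (ext a) (by rw [hsum, ha])
  refine ⟨fun i j => b i j, fun i j => hb i j, fun i => ?_⟩
  have := hb' i i.2
  rw [hext, ← Fin.sum_univ_eq_sum_range (fun j => b i j * ext F j)] at this
  simpa [hext] using this

open MvPolynomial in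
lemma pderiv_comm' {k : Type*} [Field k] {n : ℕ} (i j : Fin n) (g : MvPolynomial (Fin n) k) :
    pderiv i (pderiv j g) = pderiv j (pderiv i g) := by
  have h : ⁅(pderiv i : Derivation k (MvPolynomial (Fin n) k) (MvPolynomial (Fin n) k)),
      (pderiv j : Derivation k (MvPolynomial (Fin n) k) (MvPolynomial (Fin n) k))⁆ = 0 := by
    apply MvPolynomial.derivation_ext
    intro l
    classical
    simp [Derivation.commutator_apply, pderiv_X, Pi.single_apply]
    split_ifs <;> simp
  have := congrArg (fun D => D g) h
  simpa [Derivation.commutator_apply, sub_eq_zero] using this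

lemma anti_sum {A : Type*} [AddCommGroup A] (h2 : ∀ x : A, x = -x → x = 0)
    {n : ℕ} (c : Fin n → Fin n → A) (hc : ∀ i j, c i j = - c j i) : ∑ i, ∑ j, c i j = 0 := by
  apply h2
  conv_lhs => rw [Finset.sum_comm]
  rw [← Finset.sum_neg_distrib]
  refine Finset.sum_congr rfl fun i _ => ?_
  rw [← Finset.sum_neg_distrib]
  exact Finset.sum_congr rfl fun j _ => hc j i

open MvPolynomial in
lemma key_lemma {k : Type*} [Field k] [CharZero k] (n : ℕ) (f : MvPolynomial (Fin n) k)
    (J : Ideal (MvPolynomial (Fin n) k))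
    (hJ : ∀ i, pderiv i f ∈ J)
    (H1 : ∀ a : Fin n → MvPolynomial (Fin n) k, ∑ i, pderiv i f * a i = 0 →
      ∃ b : Fin n → Fin n → MvPolynomial (Fin n) k, (∀ i j, b i j = - b j i) ∧
      ∀ i, a i = ∑ j, b i j * pderiv j f) (g : MvPolynomial (Fin n) k) :
    ∀ (m : ℕ) (v : Fin n → ℕ → MvPolynomial (Fin n) k)
      (_ : ∀ i j, m < j → v i j = 0)
      (_ : ∑ i, pderiv i (v i 0) = g)
      (_ : ∀ j, ∑ i, (pderiv i (v i (j + 1)) + pderiv i f * v i j) = 0), g ∈ J := by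
  have h2 : ∀ x : MvPolynomial (Fin n) k, x = -x → x = 0 := fun x hx => self_eq_neg.mp hx
  intro m
  induction m with
  | zero =>
    intro v hv h0 h1
    have := h1 0
    simp only [hv _ (0 + 1) (by simp), map_zero, zero_add] at this
    obtain ⟨b, hb, hb'⟩ := H1 _ this
    rw [← h0]
    simp only [hb', map_sum, Derivation.leibniz, smul_eq_mul, Finset.sum_add_distrib]
    refine J.add_mem ?_ ?_
    · rw [anti_sum h2 (fun i j => b i j * pderiv i (pderiv j f))]
      · exact J.zero_mem
      · intro i j
        rw [hb i j, pderiv_comm' i j, neg_mul]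
    · exact J.sum_mem fun i _ => J.sum_mem fun j _ => J.mul_mem_right _ (hJ j)
  | succ m ih =>
    intro v hv h0 h1
    have := h1 (m + 1)
    simp only [hv _ (m + 1 + 1) (by omega), map_zero, zero_add] at this
    obtain ⟨b, hb, hb'⟩ := H1 _ this
    have e1 : ∑ i, pderiv i (∑ j, pderiv j (b i j)) = 0 := by
      simp only [map_sum]
      apply anti_sum h2
      intro i j
      rw [hb i j, map_neg, map_neg, pderiv_comm']
    have e2 : ∑ i, (pderiv i (∑ j, b i j * pderiv j f) + pderiv i f * ∑ j, pderiv j (b i j)) = 0 := by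
      simp only [map_sum, Finset.mul_sum, ← Finset.sum_add_distrib]
      apply anti_sum h2
      intro i j
      rw [hb i j]
      simp only [map_neg, Derivation.leibniz, smul_eq_mul, neg_mul, mul_neg]
      rw [pderiv_comm' i j]
      ring
    have e3 : ∑ i, pderiv i f * ∑ j, b i j * pderiv j f = 0 := by
      simp only [Finset.mul_sum]
      apply anti_sum h2
      intro i j
      rw [hb i j]; ring
    refine ih (fun i l => if l = m + 1 then 0 else
      if l = m then v i m - ∑ j, pderiv j (b i j) else v i l) ?_ ?_ ?_
    · intro i j hj
      by_cases h : j = m + 1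
      · simp [h]
      · simp only [h, if_false, show j ≠ m by omega]
        exact hv i j (by omega)
    · by_cases h : 0 = m
      · subst h
        simp only [show (0 : ℕ) ≠ 0 + 1 by omega, if_false, if_true, map_sub,
          Finset.sum_sub_distrib, h0, e1, sub_zero]
      · simp only [h, if_false, show (0 : ℕ) ≠ m + 1 by omega, h0]
    · intro j
      have hj := h1 j
      by_cases hA : j + 1 = m
      · subst hA
        simp only [show j + 1 ≠ j + 1 + 1 by omega, show j ≠ j + 1 + 1 by omega,
          show j ≠ j + 1 by omega, if_false, if_true, map_sub]
        rw [← sub_eq_zero.mpr hj, ← sub_eq_zero] 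
        simp only [← Finset.sum_sub_distrib, sub_zero]
        rw [← neg_eq_zero, ← Finset.sum_neg_distrib, ← e1]
        exact Finset.sum_congr rfl fun i _ => by ring
      · by_cases hB : j = m
        · subst hB
          simp only [show j ≠ j + 1 by omega, if_false, if_true, map_zero, zero_add]
          simp only [hb'] at hj
          rw [← sub_eq_zero.mpr (hj.trans e2.symm), ← Finset.sum_sub_distrib]
          exact Finset.sum_congr rfl fun i _ => by ring
        · by_cases hC : j = m + 1
          · subst hC
            simp only [show m + 1 + 1 ≠ m + 1 by omega, show m + 1 + 1 ≠ m by omega, if_false,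
              if_true, mul_zero, add_zero]
            simp [hv _ (m + 1 + 1) (by omega)]
          · simp only [hA, hB, hC, if_false, show j + 1 ≠ m + 1 by omega]
            exact hj

end BGM

set_option linter.unusedSectionVars false
set_option linter.unusedVariables false
namespace BGM

section euler
open MvPolynomial

variable {k : Type*} [Field k] [CharZero k] {n : ℕ}

/-- Weighted Euler operator. -/
noncomputable def chi (w : Fin n → ℚ) (g : MvPolynomial (Fin n) k) : MvPolynomial (Fin n) k :=
  ∑ i, C (w i : k) * (X i * pderiv i g)

lemma chi_hom (w : Fin n → ℚ) {q : ℚ} {g : MvPolynomial (Fin n) k}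
    (h : g.IsWeightedHomogeneous w q) : chi w g = C (q : k) * g := by
  have hmon : ∀ s ∈ g.support, chi w (monomial s (coeff s g)) =
      C (q : k) * monomial s (coeff s g) := by
    intro s hs
    have hw := h (mem_support_iff.mp hs)
    simp only [chi, X_mul_pderiv_monomial]
    rw [← hw, Finsupp.weight_apply, Finsupp.sum_fintype _ _ (by simp)]
    push_cast
    rw [map_sum, Finset.sum_mul]
    refine Finset.sum_congr rfl fun i _ => ?_
    simp only [nsmul_eq_mul, map_mul, map_natCast, Rat.cast_mul, Rat.cast_natCast]
    ring
  have hadd : chi w g = ∑ s ∈ g.support, chi w (monomial s (coeff s g)) := by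
    simp only [chi]
    rw [Finset.sum_comm]
    refine Finset.sum_congr rfl fun i _ => ?_
    rw [← Finset.mul_sum, ← Finset.mul_sum, ← map_sum, ← as_sum]
  rw [hadd, Finset.sum_congr rfl hmon, ← Finset.mul_sum, ← as_sum]

lemma chi_add (w : Fin n → ℚ) (g h : MvPolynomial (Fin n) k) :
    chi w (g + h) = chi w g + chi w h := by
  simp only [chi, map_add, mul_add, Finset.sum_add_distrib]

lemma chi_mul (w : Fin n → ℚ) (g h : MvPolynomial (Fin n) k) :
    chi w (g * h) = chi w g * h + g * chi w h := by
  simp only [chi, Derivation.leibniz, smul_eq_mul, Finset.sum_mul, Finset.mul_sum,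
    ← Finset.sum_add_distrib]
  exact Finset.sum_congr rfl fun i _ => by ring

lemma chi_pderiv (w : Fin n → ℚ) {f : MvPolynomial (Fin n) k}
    (h : chi w f = f) (i : Fin n) : chi w (pderiv i f) = (1 - C (w i : k)) * pderiv i f := by
  classical
  have h1 := congrArg (pderiv i) h
  simp only [chi, map_sum, Derivation.leibniz, smul_eq_mul, pderiv_C, mul_zero, add_zero,
    pderiv_X, mul_add, Finset.sum_add_distrib, Pi.single_apply, mul_ite, mul_one] at h1
  simp only [eq_comm, Finset.sum_ite_eq, Finset.mem_univ, if_true] at h1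
  have h2 : chi w (pderiv i f) = ∑ x, C (w x : k) * (X x * pderiv i (pderiv x f)) := by
    simp only [chi]
    exact Finset.sum_congr rfl fun j _ => by rw [pderiv_comm']
  rw [h2]
  linear_combination -h1

lemma chi_J (w : Fin n → ℚ) {f : MvPolynomial (Fin n) k} (h : chi w f = f)
    {g : MvPolynomial (Fin n) k}
    (hg : g ∈ Ideal.span (Set.range fun i : Fin n => pderiv i f)) :
    chi w g ∈ Ideal.span (Set.range fun i : Fin n => pderiv i f) := by
  obtain ⟨c, rfl⟩ := (Ideal.mem_span_range_iff_exists_fun).mp hg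
  have : chi w (∑ i, c i * pderiv i f) = ∑ i, chi w (c i * pderiv i f) := by
    simp only [chi, map_sum, Finset.mul_sum]
    exact Finset.sum_comm
  rw [this]
  refine Ideal.sum_mem _ fun i _ => ?_
  rw [chi_mul, chi_pderiv w h, ← mul_assoc]
  exact Ideal.add_mem _ (Ideal.mul_mem_left _ _ (Ideal.subset_span ⟨i, rfl⟩))
    (Ideal.mul_mem_left _ _ (Ideal.subset_span ⟨i, rfl⟩))

end euler

section fs

open Polynomial

variable {k : Type*} [Field k] [CharZero k] {n : ℕ} (f : MvPolynomial (Fin n) k)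
  {A : Type*} [CommRing A] [IsDomain A] [Algebra k A] [Algebra (MvPolynomial (Fin n) k) A]
  [IsScalarTower k (MvPolynomial (Fin n) k) A]
  (inv : A) 

/-- The defining properties of the operators `L i` -/
structure LData (pd : Fin n → Derivation k A A) (L : Fin n → Module.End k (Polynomial A)) :
    Prop where
  inj : Function.Injective (algebraMap (MvPolynomial (Fin n) k) A)
  hinv : algebraMap (MvPolynomial (Fin n) k) A f * inv = 1
  hpd : ∀ (i : Fin n) (r : MvPolynomial (Fin n) k),
      pd i (algebraMap (MvPolynomial (Fin n) k) A r) =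
        algebraMap (MvPolynomial (Fin n) k) A (MvPolynomial.pderiv i r)
  hL : ∀ (i : Fin n) (a : A) (m : ℕ),
      L i (C a * X ^ m) = C (pd i a) * X ^ m +
          X * C (inv * algebraMap (MvPolynomial (Fin n) k) A (MvPolynomial.pderiv i f)) *
            (C a * X ^ m)

variable {f inv} {pd : Fin n → Derivation k A A} {L : Fin n → Module.End k (Polynomial A)}

local notation "ρ" => algebraMap (MvPolynomial (Fin n) k) A

namespace LData

lemma L_C (d : LData f inv pd L) (i : Fin n) (a : A) (u : A[X]) :
    L i (C a * u) = C (pd i a) * u + C a * L i u := by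
  induction u using Polynomial.induction_on' with
  | add p q hp hq => simp only [mul_add, map_add, hp, hq]; ring
  | monomial m b =>
    rw [← C_mul_X_pow_eq_monomial, ← mul_assoc, ← C_mul, d.hL, d.hL, Derivation.leibniz]
    simp only [smul_eq_mul, C_add, C_mul]
    ring

lemma L_X (d : LData f inv pd L) (i : Fin n) (u : A[X]) :
    L i (X * u) = X * L i u := by
  induction u using Polynomial.induction_on' with
  | add p q hp hq => simp only [mul_add, map_add, hp, hq]
  | monomial m b =>
    rw [← C_mul_X_pow_eq_monomial, d.hL, mul_left_comm, ← pow_succ', d.hL]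
    ring

lemma L_map (d : LData f inv pd L) (i : Fin n) (b : k[X]) (u : A[X]) :
    L i (b.map (algebraMap k A) * u) = b.map (algebraMap k A) * L i u := by
  induction b using Polynomial.induction_on with
  | C c => simp [d.L_C]
  | add p q hp hq => simp only [Polynomial.map_add, add_mul, map_add, hp, hq]
  | monomial m c h =>
    simp only [Polynomial.map_mul, map_C, Polynomial.map_pow, map_X] at h ⊢
    rw [pow_succ, ← mul_assoc, mul_comm _ X, mul_assoc, d.L_X, h]
    ring

lemma L_one (d : LData f inv pd L) (i : Fin n) :
    L i 1 = X * C (inv * ρ (MvPolynomial.pderiv i f)) := by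
  have := d.hL i 1 0
  simpa using this

lemma L_R (d : LData f inv pd L) (i : Fin n) (r : MvPolynomial (Fin n) k) :
    L i (C (ρ r)) = C (ρ (MvPolynomial.pderiv i r)) +
      X * C (inv * ρ (MvPolynomial.pderiv i f) * ρ r) := by
  have := d.L_C i (ρ r) 1
  rw [mul_one, d.L_one, d.hpd] at this
  rw [this]; simp only [C_mul]; ring

lemma pd_inv (d : LData f inv pd L) (i : Fin n) :
    pd i inv = - (inv * inv * ρ (MvPolynomial.pderiv i f)) := by
  have h := congrArg (pd i) d.hinv
  rw [Derivation.leibniz, Derivation.map_one_eq_zero, d.hpd, smul_eq_mul, smul_eq_mul] at h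
  have h1 := d.hinv
  linear_combination inv * h - pd i inv * h1

end LData

variable (inv) in
/-- The basis `f^{-j} s(s-1)⋯(s-j+1)`. -/
noncomputable def eb : ℕ → A[X]
  | 0 => 1
  | j + 1 => C inv * (X - C (j : A)) * eb j

lemma eb_degree (h : inv ≠ 0) : ∀ j, (eb inv j).degree = j
  | 0 => by simp [eb]
  | j + 1 => by
    rw [eb, degree_mul, degree_mul, degree_C h, degree_X_sub_C, eb_degree h j]
    push_cast; ring

variable (f inv) in
/-- The lattice map. -/
noncomputable def Phi : (ℕ →₀ MvPolynomial (Fin n) k) →ₗ[MvPolynomial (Fin n) k] A[X] :=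
  Finsupp.linearCombination _ (eb inv)

lemma rsmul (r : MvPolynomial (Fin n) k) (u : A[X]) : r • u = C (ρ r) * u := by
  rw [← smul_eq_C_mul, algebraMap_smul]

namespace LData

lemma inv_ne (d : LData f inv pd L) : inv ≠ 0 := by
  intro h
  have := d.hinv
  simp [h] at this

lemma Phi_inj (d : LData f inv pd L) : Function.Injective (Phi (k := k) (n := n) inv) := by
  have h1 : LinearIndependent A (eb inv) :=
    Polynomial.Sequence.linearIndependent ⟨eb inv, eb_degree d.inv_ne⟩
  refine h1.restrict_scalars ?_
  intro r s h
  apply d.inj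
  simpa [Algebra.smul_def] using h

lemma Phi_single (j : ℕ) (r : MvPolynomial (Fin n) k) :
    Phi inv (Finsupp.single j r) = C (ρ r) * eb inv j := by
  simp [Phi, Finsupp.linearCombination_single, rsmul]

lemma L_eb (d : LData f inv pd L) (i : Fin n) : ∀ j,
    L i (eb inv j) = C (ρ (MvPolynomial.pderiv i f)) * eb inv (j + 1)
  | 0 => by
    simp only [eb, d.L_one, C_mul, Nat.cast_zero, C_0]; ring
  | j + 1 => by
    have h1 : L i (eb inv (j + 1)) = C (pd i inv) * ((X - C (j : A)) * eb inv j) +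
        C inv * ((X - C (j : A)) * L i (eb inv j)) := by
      rw [eb, mul_assoc, d.L_C, sub_mul, map_sub, d.L_X, d.L_C]
      simp only [Derivation.map_natCast, C_0]; ring
    have h2 : eb inv (j + 1 + 1) =
        C inv * (X - C ((j + 1 : ℕ) : A)) * (C inv * (X - C (j : A)) * eb inv j) := rfl
    rw [h1, L_eb d i j, d.pd_inv, h2, eb]
    simp only [C_neg, C_mul, Nat.cast_add, Nat.cast_one, C_add, C_1]
    ring

lemma X_eb (d : LData f inv pd L) (j : ℕ) :
    X * eb inv j = C (ρ f) * eb inv (j + 1) + C (j : A) * eb inv j := by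
  have h : C (ρ f) * C inv = (1 : A[X]) := by rw [← C_mul, d.hinv, C_1]
  rw [eb]
  linear_combination -(X - C (j : A)) * eb inv j * h

/-- the lattice is `X`-stable -/
lemma X_Phi (d : LData f inv pd L) (v : ℕ →₀ MvPolynomial (Fin n) k) :
    ∃ v' : ℕ →₀ MvPolynomial (Fin n) k, X * Phi inv v = Phi inv v' := by
  induction v using Finsupp.induction_linear with
  | zero => exact ⟨0, by simp⟩
  | add a b ha hb =>
    obtain ⟨a', ha⟩ := ha
    obtain ⟨b', hb⟩ := hb
    exact ⟨a' + b', by rw [map_add, map_add, mul_add, ha, hb]⟩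
  | single j r =>
    refine ⟨Finsupp.single (j + 1) (r * f) + Finsupp.single j (r * (j : MvPolynomial (Fin n) k)), ?_⟩
    rw [map_add, Phi_single, Phi_single, Phi_single, mul_left_comm, d.X_eb]
    simp only [map_mul, map_natCast]; ring

variable (f) in
/-- the operator on the lattice -/
noncomputable def del (i : Fin n) (v : ℕ →₀ MvPolynomial (Fin n) k) :
    ℕ →₀ MvPolynomial (Fin n) k :=
  v.mapRange (MvPolynomial.pderiv i) (map_zero _) +
    (MvPolynomial.pderiv i f • v).mapDomain Nat.succ

lemma del_zero (i : Fin n) (v : ℕ →₀ MvPolynomial (Fin n) k) :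
    del f i v 0 = MvPolynomial.pderiv i (v 0) := by
  rw [del, Finsupp.add_apply, Finsupp.mapDomain_of_notMem_range _ _ (by simp)]
  simp

lemma del_succ (i : Fin n) (v : ℕ →₀ MvPolynomial (Fin n) k) (j : ℕ) :
    del f i v (j + 1) = MvPolynomial.pderiv i (v (j + 1)) + MvPolynomial.pderiv i f * v j := by
  rw [del, Finsupp.add_apply, Finsupp.mapDomain_apply Nat.succ_injective]
  simp

lemma L_Phi (d : LData f inv pd L) (i : Fin n) (v : ℕ →₀ MvPolynomial (Fin n) k) :
    L i (Phi inv v) = Phi inv (del f i v) := by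
  induction v using Finsupp.induction_linear with
  | zero => simp [del]
  | add a b ha hb =>
    have : del f i (a + b) = del f i a + del f i b := by
      simp only [del, smul_add, Finsupp.mapDomain_add]
      rw [Finsupp.mapRange_add (fun x y => map_add _ x y)]
      abel
    rw [this, map_add, map_add, map_add, ha, hb]
  | single j r =>
    simp only [del, Finsupp.mapRange_single, Finsupp.smul_single, Finsupp.mapDomain_single]
    rw [map_add, Phi_single, Phi_single, Phi_single, d.L_C, d.L_eb, d.hpd]
    simp only [smul_eq_mul, map_mul, Nat.succ_eq_add_one]; ring

lemma C_eq_Phi (r : MvPolynomial (Fin n) k) : C (ρ r) = Phi inv (Finsupp.single 0 r) := by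
  rw [Phi_single]; simp [eb]

/-- sums of images of the `L i` on the lattice -/
def Z (inv : A) (L : Fin n → Module.End k A[X]) (y : A[X]) : Prop :=
  ∃ u : Fin n → (ℕ →₀ MvPolynomial (Fin n) k), y = ∑ i, L i (Phi inv (u i))

lemma Z_add {y z : A[X]} (hy : Z inv L y) (hz : Z inv L z) : Z inv L (y + z) := by
  obtain ⟨u, rfl⟩ := hy
  obtain ⟨v, rfl⟩ := hz
  exact ⟨u + v, by simp [Finset.sum_add_distrib]⟩

lemma Z_L (i : Fin n) (v : ℕ →₀ MvPolynomial (Fin n) k) : Z inv L (L i (Phi inv v)) := by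
  classical
  refine ⟨Pi.single i v, ?_⟩
  rw [Finset.sum_eq_single i]
  · simp
  · intro j _ hj; simp [hj]
  · simp

lemma Z_X (d : LData f inv pd L) {y : A[X]} (hy : Z inv L y) : Z inv L (X * y) := by
  obtain ⟨u, rfl⟩ := hy
  choose u' hu' using fun i => d.X_Phi (u i)
  exact ⟨u', by rw [Finset.mul_sum]; simp only [← hu', d.L_X]⟩

lemma Z_k (c : k) {y : A[X]} (hy : Z inv L y) : Z inv L (C (algebraMap k A c) * y) := by
  obtain ⟨u, rfl⟩ := hy
  refine ⟨fun i => (MvPolynomial.C c : MvPolynomial (Fin n) k) • u i, ?_⟩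
  rw [Finset.mul_sum]
  refine Finset.sum_congr rfl fun i _ => ?_
  rw [map_smul, rsmul, ← MvPolynomial.algebraMap_eq, ← IsScalarTower.algebraMap_apply k _ A,
    ← smul_eq_C_mul, ← smul_eq_C_mul, algebraMap_smul, algebraMap_smul, map_smul]

lemma Z_map (d : LData f inv pd L) (b : k[X]) {y : A[X]} (hy : Z inv L y) :
    Z inv L (b.map (algebraMap k A) * y) := by
  induction b using Polynomial.induction_on with
  | C c => rw [map_C]; exact Z_k c hy
  | add p q hp hq => simp only [Polynomial.map_add, add_mul]; exact Z_add hp hq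
  | monomial m c h =>
    simp only [Polynomial.map_mul, map_C, Polynomial.map_pow, map_X] at h ⊢
    rw [pow_succ, ← mul_assoc, mul_comm _ X, mul_assoc]
    exact d.Z_X h

lemma rho_C (c : k) : ρ (MvPolynomial.C c) = algebraMap k A c := by
  rw [← MvPolynomial.algebraMap_eq, ← IsScalarTower.algebraMap_apply k _ A]

/-- Main identity: `(s + χ + |w|) h f^s = ∑ ∂_i (w_i x_i h f^s)`. -/
lemma sum_L (d : LData f inv pd L) (w : Fin n → ℚ) (hf : chi w f = f)
    (h : MvPolynomial (Fin n) k) :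
    ∑ i, L i (C (ρ (MvPolynomial.C (w i : k) * (MvPolynomial.X i * h)))) =
      X * C (ρ h) + C (ρ (chi w h + MvPolynomial.C ((∑ i, w i : ℚ) : k) * h)) := by
  simp only [d.L_R, Finset.sum_add_distrib, ← Finset.mul_sum]
  rw [add_comm]
  congr 1
  · congr 1
    rw [← map_sum]
    congr 1
    have : ∀ i, inv * ρ (MvPolynomial.pderiv i f) *
        ρ (MvPolynomial.C (w i : k) * (MvPolynomial.X i * h)) =
        inv * ρ h * ρ (MvPolynomial.C (w i : k) * (MvPolynomial.X i * MvPolynomial.pderiv i f)) := by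
      intro i; simp only [map_mul]; ring
    simp only [this]
    rw [← Finset.mul_sum, ← map_sum]
    change inv * ρ h * ρ (chi w f) = _
    rw [hf]
    linear_combination ρ h * d.hinv
  · rw [← map_sum, ← map_sum]
    congr 2
    simp only [Derivation.leibniz, MvPolynomial.pderiv_C, MvPolynomial.pderiv_X_self, smul_eq_mul,
      mul_zero, add_zero, mul_one, mul_add, Finset.sum_add_distrib, chi]
    push_cast
    rw [map_sum, Finset.sum_mul]

end LData
end fs
end BGM

set_option linter.unusedSectionVars false
set_option linter.unusedVariables false
namespace BGM

section fs2

open Polynomial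

variable {k : Type*} [Field k] [CharZero k] {n : ℕ} {f : MvPolynomial (Fin n) k}
  {A : Type*} [CommRing A] [IsDomain A] [Algebra k A] [Algebra (MvPolynomial (Fin n) k) A]
  [IsScalarTower k (MvPolynomial (Fin n) k) A]
  {inv : A} {pd : Fin n → Derivation k A A} {L : Fin n → Module.End k (Polynomial A)}

local notation "ρ" => algebraMap (MvPolynomial (Fin n) k) A

namespace LData

/-- `J f^s + ∑ ∂_i (lattice)` -/
def QQ (inv : A) (L : Fin n → Module.End k A[X]) (J : Ideal (MvPolynomial (Fin n) k))
    (y : A[X]) : Prop :=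
  ∃ h ∈ J, ∃ z, Z inv L z ∧ y = C (ρ h) + z

/-- elements of the lattice all of whose multiples are in `QQ` -/
def PM (inv : A) (L : Fin n → Module.End k A[X]) (J : Ideal (MvPolynomial (Fin n) k))
    (v : A[X]) : Prop :=
  (∃ t : ℕ →₀ MvPolynomial (Fin n) k, v = Phi inv t) ∧
    ∀ r : MvPolynomial (Fin n) k, QQ inv L J (C (ρ r) * v)

variable {J : Ideal (MvPolynomial (Fin n) k)}

lemma Z_zero : Z inv L 0 := ⟨0, by simp⟩

lemma QQ_add {y z : A[X]} (hy : QQ inv L J y) (hz : QQ inv L J z) : QQ inv L J (y + z) := by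
  obtain ⟨h, hh, z1, hz1, rfl⟩ := hy
  obtain ⟨h', hh', z2, hz2, rfl⟩ := hz
  exact ⟨h + h', J.add_mem hh hh', z1 + z2, Z_add hz1 hz2, by simp only [map_add]; ring⟩

lemma PM_add {y z : A[X]} (hy : PM inv L J y) (hz : PM inv L J z) : PM inv L J (y + z) := by
  obtain ⟨⟨t, rfl⟩, h1⟩ := hy
  obtain ⟨⟨t', rfl⟩, h2⟩ := hz
  exact ⟨⟨t + t', by simp⟩, fun r => by rw [mul_add]; exact QQ_add (h1 r) (h2 r)⟩

lemma PM_J {h : MvPolynomial (Fin n) k} (hh : h ∈ J) : PM inv L J (C (ρ h)) :=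
  ⟨⟨_, C_eq_Phi h⟩, fun r => ⟨r * h, J.mul_mem_left _ hh, 0, Z_zero, by simp⟩⟩

lemma PM_R (r : MvPolynomial (Fin n) k) {y : A[X]} (hy : PM inv L J y) :
    PM inv L J (C (ρ r) * y) := by
  obtain ⟨⟨t, rfl⟩, h1⟩ := hy
  refine ⟨⟨r • t, by rw [map_smul, rsmul]⟩, fun r' => ?_⟩
  rw [← mul_assoc, ← C_mul, ← map_mul]
  exact h1 _

lemma QQ_X (d : LData f inv pd L) (w : Fin n → ℚ) (hf : chi w f = f)
    (hJ : ∀ h ∈ J, chi w h ∈ J) {y : A[X]} (hy : QQ inv L J y) : QQ inv L J (X * y) := by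
  obtain ⟨h, hh, z, hz, rfl⟩ := hy
  have h1 := d.sum_L w hf h
  refine ⟨-(chi w h + MvPolynomial.C ((∑ i, w i : ℚ) : k) * h),
    J.neg_mem (J.add_mem (hJ h hh) (J.mul_mem_left _ hh)),
    ∑ i, L i (C (ρ (MvPolynomial.C (w i : k) * (MvPolynomial.X i * h)))) + X * z,
    Z_add ⟨fun i => Finsupp.single 0 (MvPolynomial.C (w i : k) * (MvPolynomial.X i * h)), ?_⟩
      (d.Z_X hz), ?_⟩
  · simp only [← C_eq_Phi]
  · rw [h1, map_neg, C_neg]; ring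

lemma PM_X (d : LData f inv pd L) (w : Fin n → ℚ) (hf : chi w f = f)
    (hJ : ∀ h ∈ J, chi w h ∈ J) {y : A[X]} (hy : PM inv L J y) : PM inv L J (X * y) := by
  obtain ⟨⟨t, rfl⟩, h1⟩ := hy
  refine ⟨d.X_Phi t, fun r => ?_⟩
  rw [mul_left_comm]
  exact d.QQ_X w hf hJ (h1 r)

lemma PM_L (d : LData f inv pd L) (i : Fin n) {y : A[X]} (hy : PM inv L J y) :
    PM inv L J (L i y) := by
  obtain ⟨⟨t, rfl⟩, h1⟩ := hy
  refine ⟨⟨_, d.L_Phi i t⟩, fun r => ?_⟩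
  have h2 := d.L_C i (ρ r) (Phi inv t)
  rw [d.hpd] at h2
  have h3 : C (ρ r) * L i (Phi inv t) =
      L i (Phi inv (r • t)) + C (ρ (-(MvPolynomial.pderiv i r))) * Phi inv t := by
    rw [map_smul, rsmul, h2, map_neg, C_neg]; ring
  rw [h3]
  exact QQ_add ⟨0, J.zero_mem, _, Z_L i (r • t), by rw [map_zero, C_0, zero_add]⟩ (h1 _)

/-- The `D[s]`-module containing `f^{s+1}`. -/
def V (inv : A) (L : Fin n → Module.End k A[X]) (f : MvPolynomial (Fin n) k)
    (J : Ideal (MvPolynomial (Fin n) k)) (y : A[X]) : Prop :=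
  ∃ v, PM inv L J v ∧ ∃ q : MvPolynomial (Fin n) k, y = (X + 1) * v + C (ρ (q * f))

lemma V_add {y z : A[X]} (hy : V inv L f J y) (hz : V inv L f J z) : V inv L f J (y + z) := by
  obtain ⟨v, hv, q, rfl⟩ := hy
  obtain ⟨v', hv', q', rfl⟩ := hz
  exact ⟨v + v', PM_add hv hv', q + q', by simp only [add_mul, map_add]; ring⟩

lemma V_R (r : MvPolynomial (Fin n) k) {y : A[X]} (hy : V inv L f J y) :
    V inv L f J (C (ρ r) * y) := by
  obtain ⟨v, hv, q, rfl⟩ := hy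
  exact ⟨_, PM_R r hv, r * q, by simp only [map_mul]; ring⟩

lemma V_X (d : LData f inv pd L) (w : Fin n → ℚ) (hf : chi w f = f)
    (hJ : ∀ h ∈ J, chi w h ∈ J) (hfJ : f ∈ J) {y : A[X]} (hy : V inv L f J y) :
    V inv L f J (X * y) := by
  obtain ⟨v, hv, q, rfl⟩ := hy
  refine ⟨X * v + C (ρ (q * f)), PM_add (d.PM_X w hf hJ hv) (PM_J (J.mul_mem_left _ hfJ)), -q, ?_⟩
  simp only [map_mul, map_neg, neg_mul]; ring

lemma V_L (d : LData f inv pd L) (hJ' : ∀ i, MvPolynomial.pderiv i f ∈ J)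
    (i : Fin n) {y : A[X]} (hy : V inv L f J y) :
    V inv L f J (L i y) := by
  obtain ⟨v, hv, q, rfl⟩ := hy
  refine ⟨L i v + C (ρ (q * MvPolynomial.pderiv i f)),
    PM_add (d.PM_L i hv) (PM_J (J.mul_mem_left _ (hJ' i))), MvPolynomial.pderiv i q, ?_⟩
  have h : (C inv * C (ρ f) : A[X]) = 1 := by rw [← C_mul, mul_comm, d.hinv, C_1]
  rw [map_add, add_mul, one_mul, map_add, d.L_X, d.L_R]
  simp only [Derivation.leibniz, smul_eq_mul, map_mul, map_add]
  linear_combination X * C (ρ q) * C (ρ (MvPolynomial.pderiv i f)) * h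

/-- An element of `R f^s` in the image of the `∂_i` lies in `J`. -/
lemma Z_mem_J (d : LData f inv pd L) (hJ' : ∀ i, MvPolynomial.pderiv i f ∈ J)
    (H1 : ∀ a : Fin n → MvPolynomial (Fin n) k, ∑ i, MvPolynomial.pderiv i f * a i = 0 →
      ∃ b : Fin n → Fin n → MvPolynomial (Fin n) k, (∀ i j, b i j = - b j i) ∧
      ∀ i, a i = ∑ j, b i j * MvPolynomial.pderiv j f)
    (g : MvPolynomial (Fin n) k) (hg : Z inv L (C (ρ g))) : g ∈ J := by
  obtain ⟨u, hu⟩ := hg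
  simp only [d.L_Phi] at hu
  rw [C_eq_Phi (inv := inv), ← map_sum] at hu
  have hu := d.Phi_inj hu
  refine key_lemma n f J hJ' H1 g (∑ i, (u i).support.sup id) (fun i j => u i j) ?_ ?_ ?_
  · intro i j hj
    by_contra hne
    have h1 : j ≤ (u i).support.sup id :=
      Finset.le_sup (f := id) (Finsupp.mem_support_iff.mpr hne)
    have h2 : (u i).support.sup id ≤ ∑ i, (u i).support.sup id :=
      Finset.single_le_sum (f := fun i => (u i).support.sup id) (fun _ _ => Nat.zero_le _)
        (Finset.mem_univ i)
    omega
  · have := DFunLike.congr_fun hu 0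
    simp only [Finsupp.single_eq_same, Finsupp.finsetSum_apply, del_zero] at this
    exact this.symm
  · intro j
    have := DFunLike.congr_fun hu (j + 1)
    simp only [Finsupp.finsetSum_apply, del_succ] at this
    rw [← this]; simp

lemma Z_hom (d : LData f inv pd L) (w : Fin n → ℚ) (hf : chi w f = f)
    {q : ℚ} {g : MvPolynomial (Fin n) k} (hg : g.IsWeightedHomogeneous w q) (b : k[X]) :
    Z inv L (C (ρ g) * b.map (algebraMap k A) -
      C (ρ (MvPolynomial.C (b.eval (-((q + ∑ i, w i : ℚ) : k))) * g))) := by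
  obtain ⟨p, hp⟩ := X_sub_C_dvd_sub_C_eval (a := (-((q + ∑ i, w i : ℚ) : k))) (p := b)
  have h1 := d.sum_L w hf g
  rw [chi_hom w hg, ← add_mul, ← map_add, ← Rat.cast_add, map_mul, rho_C, C_mul] at h1
  have h2 : Z inv L (X * C (ρ g) + C (algebraMap k A ((q + ∑ i, w i : ℚ) : k)) * C (ρ g)) := by
    refine ⟨fun i => Finsupp.single 0 (MvPolynomial.C (w i : k) * (MvPolynomial.X i * g)), ?_⟩
    simp only [← C_eq_Phi]
    rw [h1]
  have h3 := d.Z_map p h2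
  convert h3 using 1
  have h4 := congrArg (Polynomial.map (algebraMap k A)) hp
  simp only [Polynomial.map_sub, Polynomial.map_mul, map_X, map_C] at h4
  rw [map_neg, C_neg] at h4
  rw [map_mul, rho_C, C_mul]
  linear_combination C (ρ g) * h4

/-- Lower bound. -/
lemma lower (d : LData f inv pd L) (w : Fin n → ℚ) (hf : chi w f = f)
    (hf0 : MvPolynomial.constantCoeff f = 0)
    (hJ : ∀ h ∈ J, chi w h ∈ J) (hJ' : ∀ i, MvPolynomial.pderiv i f ∈ J)
    (H1 : ∀ a : Fin n → MvPolynomial (Fin n) k, ∑ i, MvPolynomial.pderiv i f * a i = 0 →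
      ∃ b : Fin n → Fin n → MvPolynomial (Fin n) k, (∀ i j, b i j = - b j i) ∧
      ∀ i, a i = ∑ j, b i j * MvPolynomial.pderiv j f)
    (b : k[X]) (hb : V inv L f J (b.map (algebraMap k A))) (S : Finset ℚ)
    (hS : ∀ q ∈ S, ∃ g : MvPolynomial (Fin n) k, g ∉ J ∧ g.IsWeightedHomogeneous w q) :
    (X + 1) * ∏ lam ∈ S, (X + C ((lam + ∑ i, w i : ℚ) : k)) ∣ b := by
  obtain ⟨v, hv, q, hq⟩ := hb
  have h1 := congrArg (Polynomial.eval (-1)) hq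
  simp only [eval_add, eval_mul, eval_X, eval_one, neg_add_cancel, zero_mul, zero_add,
    eval_C] at h1
  rw [show (-1 : A) = algebraMap k A (-1) by simp, eval_map_algebraMap, aeval_algebraMap_apply,
    ← rho_C (n := n)] at h1
  have h2 := d.inj h1
  have h3 := congrArg MvPolynomial.constantCoeff h2
  rw [map_mul, hf0, mul_zero, MvPolynomial.constantCoeff_C] at h3
  rw [← h2, h3, map_zero, map_zero, map_zero, add_zero] at hq
  have h3' : b.IsRoot (-1) := by simpa [IsRoot, coe_aeval_eq_eval] using h3
  obtain ⟨c, rfl⟩ := dvd_iff_isRoot.mpr h3'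
  have e : (X - C (-1) : k[X]) = X + 1 := by simp
  rw [e] at hq ⊢
  refine mul_dvd_mul_left _ ?_
  have hX : (X + 1 : A[X]) ≠ 0 := by
    have := X_add_C_ne_zero (1 : A)
    simpa using this
  rw [Polynomial.map_mul, Polynomial.map_add, map_X, Polynomial.map_one] at hq
  have hcv := mul_left_cancel₀ hX hq
  refine Finset.prod_dvd_of_coprime ?_ ?_
  · have := pairwise_coprime_X_sub_C (K := k) (s := fun q : ℚ => -((q + ∑ i, w i : ℚ) : k)) (by
      intro a a' h
      simpa using h)
    intro a _ a' _ hne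
    have := this hne
    simp only [Function.onFun, C_neg, sub_neg_eq_add] at this
    exact this
  · intro q hq
    obtain ⟨g, hg, hgq⟩ := hS q hq
    have hroot : c.IsRoot (-((q + ∑ i, w i : ℚ) : k)) := by
      by_contra hne
      obtain ⟨h, hh, z, ⟨u, hu⟩, hz⟩ := hv.2 g
      rw [← hcv] at hz
      obtain ⟨u', hu'⟩ := d.Z_hom w hf hgq c
      have hZ : Z inv L (C (ρ (MvPolynomial.C (c.eval (-((q + ∑ i, w i : ℚ) : k))) * g - h))) := by
        refine ⟨u - u', ?_⟩
        simp only [Pi.sub_apply, map_sub, Finset.sum_sub_distrib, ← hu, ← hu', hz]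
        ring
      have := d.Z_mem_J hJ' H1 _ hZ
      have := J.add_mem this hh
      rw [sub_add_cancel] at this
      have := J.mul_mem_left (MvPolynomial.C (c.eval (-((q + ∑ i, w i : ℚ) : k)))⁻¹) this
      rw [← mul_assoc, ← map_mul, inv_mul_cancel₀ hne, map_one, one_mul] at this
      exact hg this
    have := dvd_iff_isRoot.mpr hroot
    rw [C_neg, sub_neg_eq_add] at this
    exact this

/-- Upper bound. -/
lemma upper (d : LData f inv pd L) (w : Fin n → ℚ) (hw : ∀ i, 0 < w i) (hf : chi w f = f)
    (hJ : J = Ideal.span (Set.range fun i : Fin n => MvPolynomial.pderiv i f))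
    (S : Finset ℚ)
    (hS : ∀ q, q ∈ S ↔ ∃ g : MvPolynomial (Fin n) k, g ∉ J ∧ g.IsWeightedHomogeneous w q)
    (W : Submodule k A[X])
    (W0 : C (ρ f) ∈ W) (WR : ∀ r : MvPolynomial (Fin n) k, ∀ u ∈ W, C (ρ r) * u ∈ W)
    (WL : ∀ i, ∀ u ∈ W, L i u ∈ W) (WX : ∀ u ∈ W, X * u ∈ W) (b : k[X])
    (hb : (X + 1) * ∏ lam ∈ S, (X + C ((lam + ∑ i, w i : ℚ) : k)) ∣ b) :
    b.map (algebraMap k A) ∈ W := by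
  have Wmap : ∀ p : k[X], ∀ u ∈ W, p.map (algebraMap k A) * u ∈ W := by
    intro p u hu
    induction p using Polynomial.induction_on with
    | C c =>
      rw [map_C, ← rho_C (n := n)]; exact WR _ u hu
    | add p q hp hq => rw [Polynomial.map_add, add_mul]; exact W.add_mem hp hq
    | monomial m c h =>
      simp only [Polynomial.map_mul, map_C, Polynomial.map_pow, map_X] at h ⊢
      rw [pow_succ, ← mul_assoc, mul_comm _ X, mul_assoc]
      exact WX _ h
  have hinv : (C inv * C (ρ f) : A[X]) = 1 := by rw [← C_mul, mul_comm, d.hinv, C_1]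
  have WJ : ∀ h ∈ J, (X + 1 : k[X]).map (algebraMap k A) * C (ρ h) ∈ W := by
    intro h hh
    rw [hJ] at hh
    obtain ⟨c, rfl⟩ := (Ideal.mem_span_range_iff_exists_fun).mp hh
    rw [map_sum, map_sum, Finset.mul_sum]
    refine W.sum_mem fun i _ => ?_
    have := WR (c i) _ (WL i _ W0)
    convert this using 1
    rw [d.L_R]
    simp only [map_mul, Polynomial.map_add, map_X, Polynomial.map_one]
    linear_combination -X * C (ρ (c i)) * C (ρ (MvPolynomial.pderiv i f)) * hinv
  have main : ∀ (m : ℕ) (μ : ℚ) (g : MvPolynomial (Fin n) k), g.IsWeightedHomogeneous w μ →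
      (S.filter (μ ≤ ·)).card ≤ m → ∀ T : Finset ℚ, S.filter (μ ≤ ·) ⊆ T →
      ((X + 1) * ∏ lam ∈ T, (X + C ((lam + ∑ i, w i : ℚ) : k))).map (algebraMap k A)
        * C (ρ g) ∈ W := by
    intro m
    induction m with
    | zero =>
      intro μ g hg hm T hT
      have hgJ : g ∈ J := by
        by_contra hne
        have : μ ∈ S.filter (μ ≤ ·) := Finset.mem_filter.mpr ⟨(hS μ).mpr ⟨g, hne, hg⟩, le_rfl⟩
        have := Finset.card_pos.mpr ⟨_, this⟩
        omega
      rw [mul_comm (X + 1), Polynomial.map_mul, mul_assoc]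
      exact Wmap _ _ (WJ g hgJ)
    | succ m ih =>
      intro μ g hg hm T hT
      by_cases hgJ : g ∈ J
      · rw [mul_comm (X + 1), Polynomial.map_mul, mul_assoc]
        exact Wmap _ _ (WJ g hgJ)
      · have hμ : μ ∈ S.filter (μ ≤ ·) :=
          Finset.mem_filter.mpr ⟨(hS μ).mpr ⟨g, hgJ, hg⟩, le_rfl⟩
        rw [← Finset.mul_prod_erase T _ (hT hμ), mul_left_comm, mul_comm, Polynomial.map_mul]
        have h1 := d.sum_L w hf g
        rw [chi_hom w hg, ← add_mul, ← map_add, ← Rat.cast_add, map_mul, rho_C, C_mul,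
          ← add_mul] at h1
        simp only [Polynomial.map_add, map_X, map_C]
        rw [← mul_assoc, mul_comm (C (ρ g)), ← h1, mul_comm, Finset.mul_sum]
        refine W.sum_mem fun i _ => ?_
        rw [← d.L_map]
        refine WL i _ ?_
        rw [map_mul, C_mul, mul_left_comm]
        refine WR _ _ ?_
        have hss : S.filter (w i + μ ≤ ·) ⊆ (S.filter (μ ≤ ·)).erase μ := by
          intro x hx
          rw [Finset.mem_filter] at hx
          rw [Finset.mem_erase, Finset.mem_filter]
          have := hw i
          exact ⟨ne_of_gt (by linarith [hx.2]), hx.1, by linarith [hx.2]⟩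
        refine ih (w i + μ) _ ((MvPolynomial.isWeightedHomogeneous_X k w i).mul hg) ?_ _ ?_
        · have h2 := Finset.card_le_card hss
          rw [Finset.card_erase_of_mem hμ] at h2
          omega
        · exact hss.trans (Finset.erase_subset_erase _ hT)
  obtain ⟨c, rfl⟩ := hb
  rw [mul_comm, Polynomial.map_mul]
  refine Wmap _ _ ?_
  have := main _ 0 1 (MvPolynomial.isWeightedHomogeneous_one k w) le_rfl S (Finset.filter_subset _ _)
  simpa using this

end LData
end fs2
end BGM

/-- **Theorem 5.2 (Briançon–Granger–Maisonobe).** For a weighted homogeneous polynomial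
`f` of weighted degree `1` with an isolated singularity, the set
`B = {b ∈ k[X] : b(s)f^s ∈ D_R[s]·f^{s+1}}` is an ideal of `k[X]`, and it is the
principal ideal generated by `(s+1)·∏_{λ ∈ Σ(f)} (s + λ + |w|)`; that is, the
Bernstein–Sato polynomial of `f` is `b_f(s) = (s+1)·∏_{λ ∈ Σ(f)} (s + λ + |w|)`. -/
theorem stmt17 {k : Type*} [Field k] [IsAlgClosed k] [CharZero k]
    (n : ℕ) (hn : 1 ≤ n)
    (w : Fin n → ℚ) (hw : ∀ i, 0 < w i)
    (f : MvPolynomial (Fin n) k) (hf0 : f ≠ 0)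
    (hfhom : f.IsWeightedHomogeneous w 1)
    -- the Jacobian ideal
    (Jf : Ideal (MvPolynomial (Fin n) k))
    (hJf : Jf = Ideal.span (Set.range fun i : Fin n => MvPolynomial.pderiv i f))
    -- isolated singularity: `R/J_f` is finite dimensional over `k`
    (hfd : FiniteDimensional k (MvPolynomial (Fin n) k ⧸ Jf))
    -- the unique extensions of the partial derivatives to `k`-derivations of `R_f`
    (pd : Fin n → Derivation k (Localization.Away f) (Localization.Away f))
    (hpd : ∀ (i : Fin n) (r : MvPolynomial (Fin n) k),
      pd i (algebraMap (MvPolynomial (Fin n) k) (Localization.Away f) r) =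
        algebraMap (MvPolynomial (Fin n) k) (Localization.Away f)
          (MvPolynomial.pderiv i r))
    -- the twisted operators `L_i(u) = ∂_i(u) + X·f⁻¹·(∂f/∂x_i)·u`,
    -- with `∂_i` acting coefficientwise on `N = R_f[X]`
    (L : Fin n → Module.End k (Polynomial (Localization.Away f)))
    (hL : ∀ (i : Fin n) (a : Localization.Away f) (m : ℕ),
      L i (Polynomial.C a * Polynomial.X ^ m) =
        Polynomial.C (pd i a) * Polynomial.X ^ m +
          Polynomial.X * Polynomial.C (IsLocalization.Away.invSelf f *
            algebraMap (MvPolynomial (Fin n) k) (Localization.Away f)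
              (MvPolynomial.pderiv i f)) *
            (Polynomial.C a * Polynomial.X ^ m))
    -- the algebra of operators coming from `D_R[s]`: generated by `D_R` and `mult_X`
    (Dalg' : Subalgebra k (Module.End k (Polynomial (Localization.Away f))))
    (hDalg' : Dalg' = Algebra.adjoin k
      ((Set.range fun r : MvPolynomial (Fin n) k =>
          (LinearMap.mulLeft k (Polynomial.C
              (algebraMap (MvPolynomial (Fin n) k) (Localization.Away f) r)) :
            Module.End k (Polynomial (Localization.Away f)))) ∪
        Set.range L ∪
        {(LinearMap.mulLeft k (Polynomial.X : Polynomial (Localization.Away f)) :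
            Module.End k (Polynomial (Localization.Away f)))}))
    -- the set `Σ(f)` of weighted degrees of weighted homogeneous polynomials not in `J_f`
    (Sigf : Set ℚ)
    (hSigf : Sigf = {q : ℚ | ∃ g : MvPolynomial (Fin n) k,
      g ∉ Jf ∧ g.IsWeightedHomogeneous w q})
    -- `S` enumerates `Σ(f)` (a finite set)
    (S : Finset ℚ) (hS : ∀ q : ℚ, q ∈ S ↔ q ∈ Sigf)
    -- the set `B = {b : b(X)·1 ∈ D'·(f·1)}`
    (B : Set (Polynomial k))
    (hB : B = {b : Polynomial k | ∃ a ∈ Dalg',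
      Polynomial.map (algebraMap k (Localization.Away f)) b =
        a (Polynomial.C
          (algebraMap (MvPolynomial (Fin n) k) (Localization.Away f) f))}) :
    ∃ I : Ideal (Polynomial k), (↑I : Set (Polynomial k)) = B ∧
      I = Ideal.span {(Polynomial.X + 1) *
        ∏ lam ∈ S, (Polynomial.X + Polynomial.C ((lam + ∑ i, w i : ℚ) : k))} := by
  have hle : Submonoid.powers f ≤ nonZeroDivisors (MvPolynomial (Fin n) k) :=
    powers_le_nonZeroDivisors_of_noZeroDivisors hf0
  have : IsDomain (Localization.Away f) := IsLocalization.isDomain_localization hle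
  have d : BGM.LData f (IsLocalization.Away.invSelf f : Localization.Away f) pd L :=
    ⟨IsLocalization.injective _ hle, IsLocalization.Away.mul_invSelf f, hpd, hL⟩
  have hchi : BGM.chi w f = f := by
    rw [BGM.chi_hom w hfhom]; simp
  have hJ' : ∀ i, MvPolynomial.pderiv i f ∈ Jf := by
    intro i; rw [hJf]; exact Ideal.subset_span ⟨i, rfl⟩
  have hfJ : f ∈ Jf := by
    have : BGM.chi w f ∈ Jf := by
      unfold BGM.chi
      exact Ideal.sum_mem _ fun i _ => Ideal.mul_mem_left _ _ (Ideal.mul_mem_left _ _ (hJ' i))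
    rwa [hchi] at this
  have hJ : ∀ h ∈ Jf, BGM.chi w h ∈ Jf := by
    intro h hh; rw [hJf] at hh ⊢; exact BGM.chi_J w hchi hh
  have hc : MvPolynomial.constantCoeff f = 0 := by
    by_contra hne
    have := hfhom (d := 0) hne
    simp at this
  have hS' : ∀ q, q ∈ S ↔ ∃ g : MvPolynomial (Fin n) k,
      g ∉ Jf ∧ g.IsWeightedHomogeneous w q := by
    intro q; rw [hS, hSigf]; rfl
  have hN : ∀ i, ∃ m : ℕ, (MvPolynomial.X i : MvPolynomial (Fin n) k) ^ m ∈ Jf := by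
    intro i
    have hinj : Function.Injective (fun m : ℕ => m • w i) := by
      intro a b hab
      have h0 := (hw i).ne'
      simpa [h0] using hab
    obtain ⟨m, hm⟩ := (Set.infinite_range_of_injective hinj).exists_notMem_finset S
    obtain ⟨⟨m, rfl⟩, hm⟩ := hm
    refine ⟨m, ?_⟩
    by_contra hne
    exact hm ((hS' _).mpr ⟨_, hne, (MvPolynomial.isWeightedHomogeneous_X k w i).pow m⟩)
  choose N hN using hN
  have H1 := BGM.mv_H1 n (fun i => MvPolynomial.pderiv i f) N (by
    intro i; rw [← hJf]; exact hN i)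
  refine ⟨_, ?_, rfl⟩
  ext b
  rw [SetLike.mem_coe, Ideal.mem_span_singleton, hB, Set.mem_setOf_eq]
  constructor
  · intro hb
    have hR : ∀ r : MvPolynomial (Fin n) k, (LinearMap.mulLeft k (Polynomial.C
        (algebraMap (MvPolynomial (Fin n) k) (Localization.Away f) r))) ∈ Dalg' := by
      intro r; rw [hDalg']; exact Algebra.subset_adjoin (Or.inl (Or.inl ⟨r, rfl⟩))
    have hLm : ∀ i, L i ∈ Dalg' := by
      intro i; rw [hDalg']; exact Algebra.subset_adjoin (Or.inl (Or.inr ⟨i, rfl⟩))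
    have hXm : (LinearMap.mulLeft k (Polynomial.X : Polynomial (Localization.Away f))) ∈
        Dalg' := by
      rw [hDalg']; exact Algebra.subset_adjoin (Or.inr rfl)
    have := d.upper w hw hchi hJf S hS'
      (Submodule.map (LinearMap.applyₗ (Polynomial.C
        (algebraMap (MvPolynomial (Fin n) k) (Localization.Away f) f)))
        (Subalgebra.toSubmodule Dalg'))
      ⟨1, Dalg'.one_mem, rfl⟩
      (by
        rintro r _ ⟨a, ha, rfl⟩
        exact ⟨_ * a, Dalg'.mul_mem (hR r) ha, rfl⟩)
      (by
        rintro i _ ⟨a, ha, rfl⟩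
        exact ⟨L i * a, Dalg'.mul_mem (hLm i) ha, rfl⟩)
      (by
        rintro _ ⟨a, ha, rfl⟩
        exact ⟨_ * a, Dalg'.mul_mem hXm ha, rfl⟩) b hb
    obtain ⟨a, ha, hab⟩ := this
    exact ⟨a, ha, hab.symm⟩
  · rintro ⟨a, ha, hab⟩
    have key : ∀ u, BGM.LData.V (IsLocalization.Away.invSelf f : Localization.Away f) L f Jf u →
        BGM.LData.V (IsLocalization.Away.invSelf f : Localization.Away f) L f Jf (a u) := by
      clear hab
      rw [hDalg'] at ha
      induction ha using Algebra.adjoin_induction with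
      | mem x hx =>
        intro u hu
        rcases hx with (⟨r, rfl⟩ | ⟨i, rfl⟩) | hx
        · exact BGM.LData.V_R r hu
        · exact d.V_L hJ' i hu
        · rw [Set.mem_singleton_iff.mp hx]
          exact d.V_X w hchi hJ hfJ hu
      | algebraMap c =>
        intro u hu
        have := BGM.LData.V_R (MvPolynomial.C c) hu
        rw [BGM.LData.rho_C, ← Polynomial.smul_eq_C_mul, algebraMap_smul] at this
        exact this
      | add x y _ _ hx hy => intro u hu; exact BGM.LData.V_add (hx u hu) (hy u hu)
      | mul x y _ _ hx hy => intro u hu; exact hx _ (hy u hu)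
    refine d.lower w hchi hc hJ hJ' H1 b ?_ S (fun q hq => (hS' q).mp hq)
    rw [hab]
    refine key _ ⟨0, ?_, 1, by simp⟩
    have := BGM.LData.PM_J (inv := (IsLocalization.Away.invSelf f : Localization.Away f))
      (L := L) Jf.zero_mem
    simpa using this
end

section
/- Assume that the ideal I_δ ⊆ k[X] is nonzero, where δ := 1 ∈ N, and let b_f denote its monic generator (the Bernstein–Sato polynomial of f). Then b_f(−1) = 0, and, writing b_f(X) = (X + 1)·b̃(X) with b̃ ∈ k[X], for every integer q ≥ 0 the ideal I_{Ď^q(δ)} is the principal ideal of k[X] generated by (X + 1)·b̃(X − q). (That is, the b-function of ∂_t^q δ equals (s+1)·b̃_f(s − q).) -/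
open Polynomial

section Helpers

variable {k R A ι : Type*} [Field k] [CommRing R] [CommRing A] [Algebra k A] [Algebra R A]

/-- The smallest `D_X[s]`-stable subset containing `S`. -/
inductive BGen (R : Type*) {k A ι : Type*} [Field k] [CommRing R] [CommRing A] [Algebra k A]
    [Algebra R A] (L : ι → Module.End k A[X]) (S : Set A[X]) : A[X] → Prop
  | base (p : A[X]) : p ∈ S → BGen R L S p
  | zero : BGen R L S 0
  | add (p q : A[X]) : BGen R L S p → BGen R L S q → BGen R L S (p + q)
  | mulR (r : R) (p : A[X]) : BGen R L S p → BGen R L S (C (algebraMap R A r) * p)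
  | mulX (p : A[X]) : BGen R L S p → BGen R L S (X * p)
  | lop (i : ι) (p : A[X]) : BGen R L S p → BGen R L S (L i p)

/-- The filtration used in the division argument. -/
def WW {k R A ι : Type*} [Field k] [CommRing R] [CommRing A] [Algebra k A]
    [Algebra R A] (L : ι → Module.End k A[X]) (F : R) (dF : ι → R) : ℕ → A[X] → Prop
  | 0 => BGen R L ({C (algebraMap R A F)} ∪ Set.range fun i => C (algebraMap R A (dF i)))
  | (m + 1) => fun p => ∃ w v, WW L F dF m w ∧ BGen R L {C (algebraMap R A F) ^ (m + 1)} v ∧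
      p = (X + ((m + 1 : ℕ) : A[X])) * w + v

/-- The relations between the operators. -/
structure Setup (L : ι → Module.End k A[X]) (T : Module.End k A[X]) (F : R) (dF : ι → R)
    (d : ι → R → R) : Prop where
  LX : ∀ i p, L i (X * p) = X * L i p
  Lr : ∀ i r p, L i (C (algebraMap R A r) * p) =
    C (algebraMap R A (d i r)) * p + C (algebraMap R A r) * L i p
  LF : ∀ i, L i (C (algebraMap R A F)) = (X + 1) * C (algebraMap R A (dF i))
  Tdef : ∀ p, T p = C (algebraMap R A F) * p.comp (X + 1)
  LT : ∀ i p, L i (T p) = T (L i p)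

variable {L : ι → Module.End k A[X]} {T : Module.End k A[X]} {F : R} {dF : ι → R}
    {d : ι → R → R}

theorem BGen.mono {S S' : Set A[X]} (h : ∀ p ∈ S, BGen R L S' p) {p : A[X]}
    (hp : BGen R L S p) : BGen R L S' p := by
  induction hp with
  | base p hp => exact h p hp
  | zero => exact .zero
  | add p q _ _ h1 h2 => exact .add _ _ h1 h2
  | mulR r p _ h1 => exact .mulR _ _ h1
  | mulX p _ h1 => exact .mulX _ h1
  | lop i p _ h1 => exact .lop _ _ h1

theorem BGen.mulN {S : Set A[X]} (m : ℕ) {p : A[X]} (hp : BGen R L S p) :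
    BGen R L S ((X + (m : A[X])) * p) := by
  have : (X + (m : A[X])) * p = X * p + C (algebraMap R A (m : R)) * p := by
    simp [add_mul]
  rw [this]
  exact .add _ _ (.mulX _ hp) (.mulR _ _ hp)

namespace Setup

theorem Lnat (hs : Setup L T F dF d) (i : ι) (m : ℕ) (p : A[X]) :
    L i ((X + (m : A[X])) * p) = (X + (m : A[X])) * L i p := by
  rw [add_mul, map_add, hs.LX, add_mul, ← nsmul_eq_mul, ← nsmul_eq_mul, map_nsmul]

theorem Lmap (hs : Setup L T F dF d) (i : ι) (q : k[X]) (p : A[X]) :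
    L i (q.map (algebraMap k A) * p) = q.map (algebraMap k A) * L i p := by
  induction q using Polynomial.induction_on' with
  | add q r h1 h2 => simp only [Polynomial.map_add, add_mul, map_add, h1, h2]
  | monomial m a =>
    induction m with
    | zero =>
      have h : ∀ p : A[X], (monomial 0 a).map (algebraMap k A) * p = a • p := by
        intro p; simp [Algebra.smul_def, Polynomial.algebraMap_apply]
      rw [h, h, map_smul]
    | succ m ih =>
      have h : (monomial (m+1) a).map (algebraMap k A) =
          X * (monomial m a).map (algebraMap k A) := by
        simp [X_mul_monomial]
      rw [h, mul_assoc, hs.LX, ih, mul_assoc]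

theorem TC (hs : Setup L T F dF d) (r : R) (p : A[X]) :
    T (C (algebraMap R A r) * p) = C (algebraMap R A r) * T p := by
  rw [hs.Tdef, hs.Tdef]; simp; ring

theorem TX (hs : Setup L T F dF d) (p : A[X]) : T (X * p) = (X + 1) * T p := by
  rw [hs.Tdef, hs.Tdef]; simp; ring

theorem TXn (hs : Setup L T F dF d) (m : ℕ) (p : A[X]) :
    T ((X + (m : A[X])) * p) = (X + ((m + 1 : ℕ) : A[X])) * T p := by
  rw [hs.Tdef, hs.Tdef]; simp; ring

theorem TF (hs : Setup L T F dF d) (m : ℕ) :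
    T (C (algebraMap R A F) ^ m) = C (algebraMap R A F) ^ (m + 1) := by
  rw [hs.Tdef, ← C_pow]; simp [pow_succ]; ring

theorem LFpow (hs : Setup L T F dF d) (i : ι) (m : ℕ) :
    L i (C (algebraMap R A F) ^ (m + 1)) =
      (X + ((m + 1 : ℕ) : A[X])) * (C (algebraMap R A (dF i)) * C (algebraMap R A F) ^ m) := by
  induction m with
  | zero => simp [hs.LF]
  | succ m ih =>
    rw [← hs.TF, hs.LT, ih, hs.TXn, hs.TC, hs.TF]

theorem key (hs : Setup L T F dF d) (m : ℕ) {v : A[X]}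
    (hv : BGen R L {C (algebraMap R A F) ^ (m + 1)} v) :
    ∃ (r : R) (w : A[X]), BGen R L ({C (algebraMap R A F) ^ (m + 1)} ∪
        Set.range fun i => C (algebraMap R A (dF i)) * C (algebraMap R A F) ^ m) w ∧
      v = C (algebraMap R A r) * C (algebraMap R A F) ^ (m + 1) +
        (X + ((m + 1 : ℕ) : A[X])) * w := by
  induction hv with
  | base p hp =>
    refine ⟨1, 0, .zero, ?_⟩
    rw [Set.mem_singleton_iff] at hp
    simp [hp]
  | zero => exact ⟨0, 0, .zero, by simp⟩
  | add p q _ _ h1 h2 =>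
    obtain ⟨r, w, hw, rfl⟩ := h1
    obtain ⟨r', w', hw', rfl⟩ := h2
    exact ⟨r + r', w + w', .add _ _ hw hw', by simp; ring⟩
  | mulR r p _ h1 =>
    obtain ⟨r', w, hw, rfl⟩ := h1
    exact ⟨r * r', _, .mulR r _ hw, by simp; ring⟩
  | mulX p _ h1 =>
    obtain ⟨r, w, hw, rfl⟩ := h1
    refine ⟨-((m + 1 : ℕ) : R) * r, _, .add _ _ (.mulX _ hw)
      (.mulR r _ (.base _ (Or.inl rfl))), ?_⟩
    simp; ring
  | lop i p _ h1 =>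
    obtain ⟨r, w, hw, rfl⟩ := h1
    refine ⟨d i r, _, .add _ _ (.lop i _ hw)
      (.mulR r _ (.base _ (Or.inr ⟨i, rfl⟩))), ?_⟩
    rw [map_add, hs.Lr, hs.LFpow, hs.Lnat]
    ring

theorem W_add (m : ℕ) : ∀ {p q : A[X]}, WW L F dF m p → WW L F dF m q → WW L F dF m (p + q) := by
  induction m with
  | zero => intro p q h1 h2; exact BGen.add _ _ h1 h2
  | succ m ih =>
    rintro p q ⟨w, v, hw, hv, rfl⟩ ⟨w', v', hw', hv', rfl⟩
    exact ⟨w + w', v + v', ih hw hw', .add _ _ hv hv', by ring⟩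

theorem W_zero (m : ℕ) : WW L F dF m 0 := by
  induction m with
  | zero => exact BGen.zero
  | succ m ih => exact ⟨0, 0, ih, .zero, by simp⟩

theorem W_mulR (m : ℕ) (r : R) :
    ∀ {p : A[X]}, WW L F dF m p → WW L F dF m (C (algebraMap R A r) * p) := by
  induction m with
  | zero => intro p h1; exact BGen.mulR _ _ h1
  | succ m ih =>
    rintro p ⟨w, v, hw, hv, rfl⟩
    exact ⟨_, _, ih hw, .mulR r _ hv, by ring⟩

theorem W_mulX (m : ℕ) : ∀ {p : A[X]}, WW L F dF m p → WW L F dF m (X * p) := by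
  induction m with
  | zero => intro p h1; exact BGen.mulX _ h1
  | succ m ih =>
    rintro p ⟨w, v, hw, hv, rfl⟩
    exact ⟨_, _, ih hw, .mulX _ hv, by ring⟩

theorem W_L (hs : Setup L T F dF d) (m : ℕ) (i : ι) :
    ∀ {p : A[X]}, WW L F dF m p → WW L F dF m (L i p) := by
  induction m with
  | zero => intro p h1; exact BGen.lop _ _ h1
  | succ m ih =>
    rintro p ⟨w, v, hw, hv, rfl⟩
    exact ⟨_, _, ih hw, .lop i _ hv, by rw [map_add, hs.Lnat]⟩

theorem W_mulN (m j : ℕ) {p : A[X]} (h : WW L F dF m p) :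
    WW L F dF m ((X + (j : A[X])) * p) := by
  have : (X + (j : A[X])) * p = X * p + C (algebraMap R A (j : R)) * p := by
    simp [add_mul]
  rw [this]
  exact W_add m (W_mulX m h) (W_mulR m _ h)

theorem W_of_BGen (hs : Setup L T F dF d) (m : ℕ) {S : Set A[X]} (hS : ∀ p ∈ S, WW L F dF m p)
    {p : A[X]} (hp : BGen R L S p) : WW L F dF m p := by
  induction hp with
  | base p hp => exact hS p hp
  | zero => exact W_zero m
  | add p q _ _ h1 h2 => exact W_add m h1 h2
  | mulR r p _ h1 => exact W_mulR m r h1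
  | mulX p _ h1 => exact W_mulX m h1
  | lop i p _ h1 => exact W_L hs m i h1

theorem W_gen (m : ℕ) : WW L F dF (m + 1) (C (algebraMap R A F) ^ (m + 1)) :=
  ⟨0, _, W_zero m, .base _ rfl, by simp⟩

theorem W_gen' (m : ℕ) : WW L F dF (m + 1) (C (algebraMap R A F) ^ (m + 2)) := by
  have h := W_mulR (m + 1) F (W_gen (L := L) (F := F) (dF := dF) m)
  have e : C (algebraMap R A F) * C (algebraMap R A F) ^ (m + 1) =
      C (algebraMap R A F) ^ (m + 2) := by ring
  rwa [e] at h

theorem step (hs : Setup L T F dF d) (m : ℕ) {u : A[X]}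
    (h : WW L F dF (m + 1) ((X + ((m + 1 : ℕ) : A[X])) * u)) : WW L F dF m u := by
  obtain ⟨w, v, hw, hv, he⟩ := h
  obtain ⟨r, w', hw', rfl⟩ := hs.key m hv
  have hr : C (algebraMap R A r) * C (algebraMap R A F) ^ (m + 1) = 0 := by
    have := congrArg (eval (-((m + 1 : ℕ) : A))) he
    simp at this
    rw [← C_pow, ← C_mul, ← this, C_0]
  have hmon : (X + ((m + 1 : ℕ) : A[X])).Monic := by
    rw [← C_eq_natCast]; exact monic_X_add_C _
  have hu : u = w + w' := by
    apply hmon.isRegular.left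
    change (X + ((m + 1 : ℕ) : A[X])) * u = (X + ((m + 1 : ℕ) : A[X])) * (w + w')
    rw [he, hr]; ring
  rw [hu]
  refine W_add m hw (W_of_BGen hs m ?_ hw')
  rintro p (hp | ⟨i, rfl⟩)
  · rw [Set.mem_singleton_iff] at hp
    subst hp
    cases m with
    | zero => exact .base _ (Or.inl (by simp))
    | succ m =>
      rw [pow_succ, mul_comm]
      exact W_mulR _ _ (W_gen m)
  · cases m with
    | zero => exact .base _ (Or.inr ⟨i, by simp⟩)
    | succ m => exact W_mulR _ _ (W_gen m)

theorem W_eval (hs : Setup L T F dF d) (m : ℕ) {p : A[X]} (h : WW L F dF (m + 1) p) :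
    ∃ r : R, eval (-((m + 1 : ℕ) : A)) p = algebraMap R A (r * F ^ (m + 1)) := by
  obtain ⟨w, v, hw, hv, rfl⟩ := h
  obtain ⟨r, w', hw', rfl⟩ := hs.key m hv
  refine ⟨r, ?_⟩
  rw [← C_pow, ← C_mul]
  simp

theorem W_succ_le (hs : Setup L T F dF d) (m : ℕ) {p : A[X]} (h : WW L F dF (m + 1) p) :
    WW L F dF m p := by
  obtain ⟨w, v, hw, hv, rfl⟩ := h
  refine W_add m (W_mulN m _ hw) (W_of_BGen hs m ?_ hv)
  intro p hp
  rw [Set.mem_singleton_iff] at hp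
  subst hp
  cases m with
  | zero => exact .base _ (Or.inl (by simp))
  | succ m =>
    rw [pow_succ, mul_comm]
    exact W_mulR _ _ (W_gen m)

theorem T_of_BGen (hs : Setup L T F dF d) (m : ℕ) {S : Set A[X]}
    (hS : ∀ p ∈ S, WW L F dF m (T p))
    {p : A[X]} (hp : BGen R L S p) : WW L F dF m (T p) := by
  induction hp with
  | base p hp => exact hS p hp
  | zero => rw [map_zero]; exact W_zero m
  | add p q _ _ h1 h2 => rw [map_add]; exact W_add m h1 h2
  | mulR r p _ h1 => rw [hs.TC]; exact W_mulR m r h1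
  | mulX p _ h1 =>
    rw [hs.TX]
    simpa using W_mulN m 1 h1
  | lop i p _ h1 => rw [← hs.LT]; exact W_L hs m i h1

theorem W_T (hs : Setup L T F dF d) (m : ℕ) :
    ∀ {p : A[X]}, WW L F dF m p → WW L F dF (m + 1) (T p) := by
  induction m with
  | zero =>
    intro p hp
    refine T_of_BGen hs 1 ?_ hp
    rintro p (hp | ⟨i, rfl⟩)
    · rw [Set.mem_singleton_iff] at hp
      subst hp
      have := hs.TF 1
      rw [pow_one] at this
      rw [this]
      exact W_gen' 0
    · have := hs.TC (dF i) 1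
      rw [mul_one] at this
      simp only [this]
      have h1 := hs.TF 0
      rw [pow_zero] at h1
      rw [h1]
      exact W_mulR (0 + 1) (dF i) (W_gen 0)
  | succ m ih =>
    rintro p ⟨w, v, hw, hv, rfl⟩
    rw [map_add, hs.TXn]
    refine W_add _ ⟨_, 0, ih hw, .zero, by rw [add_zero]⟩ (T_of_BGen hs _ ?_ hv)
    intro p hp
    rw [Set.mem_singleton_iff] at hp
    subst hp
    rw [hs.TF]
    exact W_gen (m + 1)

end Setup

/-- `(X+1)(X+2)⋯(X+q)`. -/
noncomputable def PP (A : Type*) [CommRing A] (q : ℕ) : A[X] :=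
  ∏ i ∈ Finset.range q, (X + ((i + 1 : ℕ) : A[X]))

theorem PP_zero : PP A 0 = 1 := by simp [PP]

theorem PP_succ (q : ℕ) : PP A (q + 1) = (X + ((q + 1 : ℕ) : A[X])) * PP A q := by
  rw [PP, Finset.prod_range_succ, mul_comm]; rfl

theorem PP_map (q : ℕ) : (PP k q).map (algebraMap k A) = PP A q := by
  simp [PP, Polynomial.map_prod]

theorem PP_comp (q : ℕ) : (X + ((q + 1 : ℕ) : A[X])) * PP A q = (X + 1) * (PP A q).comp (X + 1) := by
  induction q with
  | zero => simp [PP_zero]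
  | succ q ih =>
    have h : (PP A (q + 1)).comp (X + 1) =
        (X + ((q + 1 + 1 : ℕ) : A[X])) * (PP A q).comp (X + 1) := by
      rw [PP_succ]; simp; ring
    rw [h, PP_succ, ih]; ring

theorem PP_eval [CharZero k] (q : ℕ) : eval (-((q + 1 : ℕ) : k)) (PP k q) ≠ 0 := by
  rw [PP, eval_prod, Finset.prod_ne_zero_iff]
  intro i hi h
  rw [Finset.mem_range] at hi
  simp only [eval_add, eval_X, eval_natCast] at h
  have : ((i + 1 : ℕ) : k) = ((q + 1 : ℕ) : k) := by linear_combination h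
  have := Nat.cast_injective this
  omega

theorem Setup.W_PP (hs : Setup L T F dF d) (q : ℕ) : WW L F dF (q + 1) (T (PP A q)) := by
  induction q with
  | zero =>
    have := hs.TF 0
    rw [pow_zero] at this
    rw [PP_zero, this]; exact W_gen 0
  | succ q ih =>
    rw [PP_succ, hs.TXn]
    exact ⟨_, 0, ih, .zero, by rw [add_zero]⟩

theorem Setup.steps (hs : Setup L T F dF d) (q : ℕ) (u : A[X])
    (h : WW L F dF q (PP A q * u)) : WW L F dF 0 u := by
  induction q with
  | zero => simpa [PP_zero] using h
  | succ q ih =>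
    rw [PP_succ, mul_assoc] at h
    exact ih (hs.step q h)

/-- The cyclic submodule `A0 · v` is contained in any stable set. -/
theorem adjoin_ind (L : ι → Module.End k A[X]) (T : Module.End k A[X]) (V : Submodule k A[X])
    (hR : ∀ (r : R) p, p ∈ V → C (algebraMap R A r) * p ∈ V)
    (hX : ∀ p, p ∈ V → X * p ∈ V) (hL : ∀ i p, p ∈ V → L i p ∈ V)
    (hT : ∀ p, p ∈ V → T p ∈ V) (a : Module.End k A[X])
    (ha : a ∈ Algebra.adjoin k ((Set.range fun r : R =>
        (LinearMap.mulLeft k (C (algebraMap R A r)) : Module.End k A[X])) ∪ Set.range L ∪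
        {(LinearMap.mulLeft k (X : A[X]) : Module.End k A[X]), T})) :
    ∀ v ∈ V, a v ∈ V := by
  induction ha using Algebra.adjoin_induction with
  | mem x hx =>
    intro v hv
    rcases hx with (⟨r, rfl⟩ | ⟨i, rfl⟩) | (rfl | hx)
    · exact hR r v hv
    · exact hL i v hv
    · exact hX v hv
    · rw [Set.mem_singleton_iff] at hx; subst hx; exact hT v hv
  | algebraMap r => intro v hv; exact V.smul_mem r hv
  | add x y _ _ hx hy => intro v hv; exact V.add_mem (hx v hv) (hy v hv)
  | mul x y _ _ hx hy => intro v hv; exact hx _ (hy v hv)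

/-- The submodule version of `WW`. -/
def Wsub [Algebra k R] [IsScalarTower k R A] (L : ι → Module.End k A[X]) (F : R) (dF : ι → R) (m : ℕ) : Submodule k A[X] where
  carrier := {p | WW L F dF m p}
  add_mem' := Setup.W_add m
  zero_mem' := Setup.W_zero m
  smul_mem' := by
    intro c p hp
    have : c • p = C (algebraMap R A (algebraMap k R c)) * p := by
      rw [← IsScalarTower.algebraMap_apply, Algebra.smul_def, Polynomial.algebraMap_apply]
    rw [this]
    exact Setup.W_mulR m _ hp


/-- The generators of `A0`. -/
def gens (R : Type*) {k A ι : Type*} [Field k] [CommRing R] [CommRing A] [Algebra k A]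
    [Algebra R A] (L : ι → Module.End k A[X]) (T : Module.End k A[X]) :
    Set (Module.End k A[X]) :=
  ((Set.range fun r : R =>
        (LinearMap.mulLeft k (C (algebraMap R A r)) : Module.End k A[X])) ∪ Set.range L ∪
        {(LinearMap.mulLeft k (X : A[X]) : Module.End k A[X]), T})

/-- The cyclic module `A0 · v`. -/
def Zsub (R : Type*) {k A ι : Type*} [Field k] [CommRing R] [CommRing A] [Algebra k A]
    [Algebra R A] (L : ι → Module.End k A[X]) (T : Module.End k A[X]) (v : A[X]) :
    Submodule k A[X] where
  carrier := {p | ∃ a ∈ Algebra.adjoin k (gens R L T), p = a v}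
  add_mem' := by
    rintro _ _ ⟨a, ha, rfl⟩ ⟨b, hb, rfl⟩
    exact ⟨a + b, add_mem ha hb, rfl⟩
  zero_mem' := ⟨0, zero_mem _, rfl⟩
  smul_mem' := by
    rintro c _ ⟨a, ha, rfl⟩
    exact ⟨c • a, Subalgebra.smul_mem _ ha c, rfl⟩

theorem Zsub_op {v p : A[X]} (g : Module.End k A[X]) (hg : g ∈ gens R L T)
    (hp : p ∈ Zsub R L T v) : g p ∈ Zsub R L T v := by
  obtain ⟨a, ha, rfl⟩ := hp
  exact ⟨g * a, mul_mem (Algebra.subset_adjoin hg) ha, rfl⟩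

theorem Zsub_self (v : A[X]) : v ∈ Zsub R L T v := ⟨1, one_mem _, rfl⟩

theorem Zsub_R {v p : A[X]} (r : R) (hp : p ∈ Zsub R L T v) :
    C (algebraMap R A r) * p ∈ Zsub R L T v :=
  Zsub_op (LinearMap.mulLeft k (C (algebraMap R A r))) (Or.inl (Or.inl ⟨r, rfl⟩)) hp

theorem Zsub_X {v p : A[X]} (hp : p ∈ Zsub R L T v) : X * p ∈ Zsub R L T v :=
  Zsub_op (LinearMap.mulLeft k X) (Or.inr (Or.inl rfl)) hp

theorem Zsub_L {v p : A[X]} (i : ι) (hp : p ∈ Zsub R L T v) : L i p ∈ Zsub R L T v :=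
  Zsub_op (L i) (Or.inl (Or.inr ⟨i, rfl⟩)) hp

theorem Zsub_map {v : A[X]} (q : k[X]) : ∀ {p : A[X]}, p ∈ Zsub R L T v →
    q.map (algebraMap k A) * p ∈ Zsub R L T v := by
  induction q using Polynomial.induction_on' with
  | add q r h1 h2 =>
    intro p hp
    rw [Polynomial.map_add, add_mul]; exact add_mem (h1 hp) (h2 hp)
  | monomial m a =>
    intro p hp
    induction m with
    | zero =>
      have h : (monomial 0 a).map (algebraMap k A) * p = a • p := by
        simp [Algebra.smul_def, Polynomial.algebraMap_apply]
      rw [h]; exact Submodule.smul_mem _ _ hp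
    | succ m ih =>
      have h : (monomial (m+1) a).map (algebraMap k A) =
          X * (monomial m a).map (algebraMap k A) := by
        simp [X_mul_monomial]
      rw [h, mul_assoc]; exact Zsub_X ih

namespace Setup

theorem Tpow_C (hs : Setup L T F dF d) (q : ℕ) (r : R) (p : A[X]) :
    (T ^ q) (C (algebraMap R A r) * p) = C (algebraMap R A r) * (T ^ q) p := by
  induction q with
  | zero => simp
  | succ q ih => rw [pow_succ', Module.End.mul_apply, ih, hs.TC, Module.End.mul_apply]

theorem Tpow_L (hs : Setup L T F dF d) (q : ℕ) (i : ι) (p : A[X]) :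
    (T ^ q) (L i p) = L i ((T ^ q) p) := by
  induction q with
  | zero => simp
  | succ q ih => rw [pow_succ', Module.End.mul_apply, ih, ← hs.LT, Module.End.mul_apply]

theorem Tpow_map (hs : Setup L T F dF d) (q : ℕ) (b : k[X]) (p : A[X]) :
    (T ^ q) (b.map (algebraMap k A) * p) =
      (b.comp (X + C (q : k))).map (algebraMap k A) * (T ^ q) p := by
  induction q with
  | zero => simp
  | succ q ih =>
    rw [pow_succ', Module.End.mul_apply, ih, Module.End.mul_apply, hs.Tdef, hs.Tdef]
    have : (b.comp (X + C ((q + 1 : ℕ) : k))).map (algebraMap k A) =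
        ((b.comp (X + C (q : k))).map (algebraMap k A)).comp (X + 1) := by
      simp only [Polynomial.map_comp, Polynomial.comp_assoc]
      congr 1
      simp; ring
    rw [this]; simp only [mul_comp]; ring

theorem Tpow_X (hs : Setup L T F dF d) (q : ℕ) (p : A[X]) :
    (T ^ q) (X * p) = (X + (q : A[X])) * (T ^ q) p := by
  have := hs.Tpow_map q X p
  simpa using this

theorem Tpow_v (hs : Setup L T F dF d) {Dh : Module.End k A[X]}
    (hD : ∀ p, T (Dh p) = -((X + 1) * p)) (q : ℕ) :
    (T ^ q) ((Dh ^ q) 1) = (-1 : k) ^ q • PP A q := by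
  induction q with
  | zero => simp [PP_zero]
  | succ q ih =>
    rw [pow_succ T, Module.End.mul_apply, pow_succ' Dh, Module.End.mul_apply, hD, map_neg]
    have h := hs.Tpow_map q (X + 1) ((Dh ^ q) 1)
    have e : (X + 1 : k[X]).map (algebraMap k A) = X + 1 := by simp
    rw [e] at h
    rw [h, ih, PP_succ, pow_succ]
    simp
    ring

variable [Algebra k R] [IsScalarTower k R A]

theorem conv (hs : Setup L T F dF d) {Dh : Module.End k A[X]}
    (hD : ∀ p, T (Dh p) = -((X + 1) * p)) (q : ℕ) (b : k[X])
    (hb : b.map (algebraMap k A) * (Dh ^ q) 1 ∈ Zsub R L T (T ((Dh ^ q) 1))) :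
    WW L F dF (q + 1) ((b.comp (X + C (q : k))).map (algebraMap k A) * PP A q) := by
  obtain ⟨a, ha, he⟩ := hb
  have hmem : a (T ((Dh ^ q) 1)) ∈ (Wsub L F dF (q + 1)).comap (T ^ q) := by
    refine adjoin_ind (R := R) L T _ ?_ ?_ ?_ ?_ a ha _ ?_
    · intro r p hp
      rw [Submodule.mem_comap, hs.Tpow_C]
      exact W_mulR _ _ hp
    · intro p hp
      rw [Submodule.mem_comap, hs.Tpow_X]
      exact W_mulN _ _ hp
    · intro i p hp
      rw [Submodule.mem_comap, hs.Tpow_L]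
      exact W_L hs _ _ hp
    · intro p hp
      rw [Submodule.mem_comap, ← Module.End.mul_apply, ← pow_succ, pow_succ', Module.End.mul_apply]
      exact W_succ_le hs _ (W_T hs _ hp)
    · rw [Submodule.mem_comap, ← Module.End.mul_apply, ← pow_succ, pow_succ', Module.End.mul_apply,
        hs.Tpow_v hD, map_smul]
      exact Submodule.smul_mem _ _ (hs.W_PP q)
  rw [← he, Submodule.mem_comap, hs.Tpow_map, hs.Tpow_v hD, mul_smul_comm] at hmem
  have := Submodule.smul_mem _ ((-1 : k) ^ q) hmem
  rw [smul_smul, ← mul_pow] at this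
  simp only [mul_neg, mul_one, neg_neg, one_pow, one_smul] at this
  exact this

theorem fwd_aux (hs : Setup L T F dF d) {Dh : Module.End k A[X]}
    (hD : ∀ p, T (Dh p) = -((X + 1) * p)) (q : ℕ) (w : A[X]) (hw : WW L F dF 0 w) :
    ∃ y ∈ Zsub R L T (T ((Dh ^ q) 1)),
      (T ^ q) y = (X + ((q + 1 : ℕ) : A[X])) * PP A q * w := by
  set v := (-1 : k) ^ q • T ((Dh ^ q) 1) with hv
  have hvZ : v ∈ Zsub R L T (T ((Dh ^ q) 1)) := Submodule.smul_mem _ _ (Zsub_self _)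
  have hTv : (T ^ q) v = C (algebraMap R A F) * (PP A q).comp (X + 1) := by
    rw [hv, map_smul, ← Module.End.mul_apply, ← pow_succ, pow_succ', Module.End.mul_apply,
        hs.Tpow_v hD, map_smul, smul_smul, ← mul_pow, hs.Tdef]
    simp
  induction hw with
  | base p hp =>
    rcases hp with hp | ⟨i, rfl⟩
    · rw [Set.mem_singleton_iff] at hp
      subst hp
      refine ⟨_, Zsub_map (X + 1 - C (q : k)) hvZ, ?_⟩
      rw [hs.Tpow_map, hTv, PP_comp]
      simp; ring
    · refine ⟨_, Zsub_L i hvZ, ?_⟩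
      rw [hs.Tpow_L, hTv, PP_comp]
      have : (PP A q).comp (X + 1) = ((PP k q).comp (X + 1)).map (algebraMap k A) := by
        rw [Polynomial.map_comp, PP_map]; simp
      rw [this, mul_comm, hs.Lmap, hs.LF]; ring
  | zero => exact ⟨0, zero_mem _, by simp⟩
  | add p q _ _ h1 h2 =>
    obtain ⟨y, hy, e⟩ := h1
    obtain ⟨y', hy', e'⟩ := h2
    exact ⟨y + y', add_mem hy hy', by rw [map_add, e, e']; ring⟩
  | mulR r p _ h1 =>
    obtain ⟨y, hy, e⟩ := h1
    exact ⟨_, Zsub_R r hy, by rw [hs.Tpow_C, e]; ring⟩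
  | mulX p _ h1 =>
    obtain ⟨y, hy, e⟩ := h1
    refine ⟨_, Zsub_map (X - C (q : k)) hy, ?_⟩
    rw [hs.Tpow_map, e]; simp; ring
  | lop i p _ h1 =>
    obtain ⟨y, hy, e⟩ := h1
    refine ⟨_, Zsub_L i hy, ?_⟩
    rw [hs.Tpow_L, e, ← PP_succ, ← PP_map (k := k), hs.Lmap]

theorem fwd (hs : Setup L T F dF d) {Dh : Module.End k A[X]}
    (hD : ∀ p, T (Dh p) = -((X + 1) * p)) (hT : Function.Injective T) (q : ℕ) (c : k[X])
    (hw : WW L F dF 0 (c.map (algebraMap k A))) :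
    ((X + 1) * c.comp (X - C (q : k))).map (algebraMap k A) * (Dh ^ q) 1 ∈
      Zsub R L T (T ((Dh ^ q) 1)) := by
  obtain ⟨y, hy, e⟩ := hs.fwd_aux hD q _ hw
  have hTq : Function.Injective (T ^ q) := by
    rw [Module.End.coe_pow]; exact hT.iterate q
  have : ((X + 1) * c.comp (X - C (q : k))).map (algebraMap k A) * (Dh ^ q) 1 =
      (-1 : k) ^ q • y := by
    apply hTq
    rw [hs.Tpow_map, hs.Tpow_v hD, map_smul, e, mul_smul_comm]
    congr 1
    have : ((X + 1) * c.comp (X - C (q : k))).comp (X + C (q : k)) =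
        (X + ((q + 1 : ℕ) : k[X])) * c := by
      rw [mul_comp, comp_assoc]; simp; left; ring
    rw [this]; simp; ring
  rw [this]
  exact Submodule.smul_mem _ _ hy

theorem root [CharZero k] (hs : Setup L T F dF d) {Dh : Module.End k A[X]}
    (hD : ∀ p, T (Dh p) = -((X + 1) * p)) (hinj : Function.Injective (algebraMap R A))
    (hF : ¬ IsUnit F) (q : ℕ) (b : k[X])
    (hb : b.map (algebraMap k A) * (Dh ^ q) 1 ∈ Zsub R L T (T ((Dh ^ q) 1))) :
    eval (-1) b = 0 := by
  obtain ⟨r, hr⟩ := hs.W_eval q (hs.conv hD q b hb)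
  by_contra hne
  apply hF
  have e1 : (-((q + 1 : ℕ) : A)) = algebraMap k A (-((q + 1 : ℕ) : k)) := by simp
  rw [← PP_map (k := k), ← Polynomial.map_mul, e1, eval_map_algebraMap, aeval_algebraMap_apply,
    IsScalarTower.algebraMap_apply k R A] at hr
  have hr := hinj hr
  set c := (aeval (-((q + 1 : ℕ) : k))) (b.comp (X + C (q : k)) * PP k q) with hc
  have hc0 : c ≠ 0 := by
    rw [hc, coe_aeval_eq_eval, eval_mul, eval_comp]
    refine mul_ne_zero ?_ (PP_eval q)
    have e2 : eval (-((q + 1 : ℕ) : k)) (X + C (q : k)) = -1 := by simp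
    rw [e2]; exact hne
  have hu : IsUnit (algebraMap k R c) := (IsUnit.mk0 c hc0).map _
  rw [hr, pow_succ, ← mul_assoc] at hu
  exact isUnit_of_mul_isUnit_right hu

theorem div [CharZero k] (hs : Setup L T F dF d) {Dh : Module.End k A[X]}
    (hD : ∀ p, T (Dh p) = -((X + 1) * p)) (q : ℕ) (c : k[X])
    (hb : ((X + 1) * c).map (algebraMap k A) * (Dh ^ q) 1 ∈ Zsub R L T (T ((Dh ^ q) 1))) :
    WW L F dF 0 ((c.comp (X + C (q : k))).map (algebraMap k A)) := by
  apply hs.steps (q + 1)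
  convert hs.conv hD q _ hb using 1
  rw [PP_succ]
  simp; ring

theorem main [CharZero k] (hs : Setup L T F dF d) {Dh : Module.End k A[X]}
    (hD : ∀ p, T (Dh p) = -((X + 1) * p)) (hT : Function.Injective T)
    (hinj : Function.Injective (algebraMap R A))
    (hF : ¬ IsUnit F) (I : A[X] → Set k[X])
    (hI : ∀ v b, b ∈ I v ↔ b.map (algebraMap k A) * v ∈ Zsub R L T (T v))
    (bf : k[X]) (hmem : bf ∈ I 1) (hgen : ∀ c ∈ I 1, bf ∣ c) :
    eval (-1 : k) bf = 0 ∧ ∀ bt : k[X], bf = (X + 1) * bt →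
      ∀ q : ℕ, I ((Dh ^ q) 1) = ↑(Ideal.span {(X + 1) * bt.comp (X - C (q : k))}) := by
  have h0 : (Dh ^ 0) (1 : A[X]) = 1 := rfl
  have hX1 : (X + 1 : k[X]) ≠ 0 := by
    rw [← C_1]; exact X_add_C_ne_zero 1
  refine ⟨hs.root hD hinj hF 0 bf (by rw [h0]; exact (hI _ _).1 hmem), ?_⟩
  rintro bt hbt q
  have hbt0 : WW L F dF 0 (bt.map (algebraMap k A)) := by
    have := hs.div hD 0 bt (by rw [h0, ← hbt]; exact (hI _ _).1 hmem)
    simpa using this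
  ext b
  rw [SetLike.mem_coe, Ideal.mem_span_singleton, hI]
  constructor
  · intro hb
    have hroot := hs.root hD hinj hF q b hb
    obtain ⟨c, rfl⟩ : (X + 1) ∣ b := by
      have := dvd_iff_isRoot.2 hroot
      simpa using this
    have h2 := hs.fwd hD hT 0 _ (hs.div hD q c hb)
    rw [h0, ← hI] at h2
    have h3 := hgen _ h2
    rw [hbt] at h3
    have h4 := (mul_dvd_mul_iff_left hX1).1 h3
    refine mul_dvd_mul_left _ ?_
    obtain ⟨e, he⟩ := h4
    refine ⟨e.comp (X - C (q : k)), ?_⟩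
    rw [← mul_comp, ← he]
    simp [comp_assoc]
  · rintro ⟨e, rfl⟩
    rw [mul_comm _ e, Polynomial.map_mul, mul_assoc]
    exact Zsub_map e (hs.fwd hD hT q bt hbt0)

end Setup

end Helpers


/-- **Theorem 10.6.** Let `f ∈ R = k[x₁,…,xₙ]` be nonzero and not a unit, and work in the
model `N = R_f[X]` of `ι_+(O_X[1/f]) ≅ R_f[s]f^s`, with the action of
`V⁰D_{X×A¹} = D_X⟨s,t⟩` generated by multiplications by elements of `R`, the twisted
operators `L_i` (action of `∂_{x_i}`), `mult_X` (action of `s = -∂_t t`) and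
`T̂ : p ↦ f·p(X+1)` (action of `t`); `Ď : p ↦ -X·f⁻¹·p(X-1)` is the action of `∂_t`.
If the `b`-function ideal `I_δ` of `δ = 1` is nonzero with monic generator `b_f`, then
`b_f(-1) = 0` and, writing `b_f = (X+1)·b̃`, for every `q ≥ 0` the ideal `I_{Ď^q δ}` is
the principal ideal generated by `(X+1)·b̃(X−q)`. -/
theorem stmt18 {k : Type*} [Field k] [IsAlgClosed k] [CharZero k]
    (n : ℕ) (hn : 1 ≤ n)
    (f : MvPolynomial (Fin n) k) (hf0 : f ≠ 0) (hfu : ¬ IsUnit f)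
    -- the unique extensions of the partial derivatives to `k`-derivations of `R_f`
    (pd : Fin n → Derivation k (Localization.Away f) (Localization.Away f))
    (hpd : ∀ (i : Fin n) (r : MvPolynomial (Fin n) k),
      pd i (algebraMap (MvPolynomial (Fin n) k) (Localization.Away f) r) =
        algebraMap (MvPolynomial (Fin n) k) (Localization.Away f)
          (MvPolynomial.pderiv i r))
    -- the twisted operators `L_i(u) = ∂_i(u) + X·f⁻¹·(∂f/∂x_i)·u`,
    -- with `∂_i` acting coefficientwise on `N = R_f[X]`
    (L : Fin n → Module.End k (Polynomial (Localization.Away f)))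
    (hL : ∀ (i : Fin n) (a : Localization.Away f) (m : ℕ),
      L i (Polynomial.C a * Polynomial.X ^ m) =
        Polynomial.C (pd i a) * Polynomial.X ^ m +
          Polynomial.X * Polynomial.C (IsLocalization.Away.invSelf f *
            algebraMap (MvPolynomial (Fin n) k) (Localization.Away f)
              (MvPolynomial.pderiv i f)) *
            (Polynomial.C a * Polynomial.X ^ m))
    -- the action `T̂(p) = f·p(X+1)` of `t`
    (That : Module.End k (Polynomial (Localization.Away f)))
    (hThat : ∀ p : Polynomial (Localization.Away f),
      That p = Polynomial.C
          (algebraMap (MvPolynomial (Fin n) k) (Localization.Away f) f) *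
        p.comp (Polynomial.X + 1))
    -- the action `Ď(p) = -X·f⁻¹·p(X-1)` of `∂_t`
    (Dhat : Module.End k (Polynomial (Localization.Away f)))
    (hDhat : ∀ p : Polynomial (Localization.Away f),
      Dhat p = -(Polynomial.X * Polynomial.C (IsLocalization.Away.invSelf f) *
        p.comp (Polynomial.X - 1)))
    -- the algebra of operators coming from `V⁰D_{X×A¹} = D_X⟨s,t⟩`
    (A0 : Subalgebra k (Module.End k (Polynomial (Localization.Away f))))
    (hA0 : A0 = Algebra.adjoin k
      ((Set.range fun r : MvPolynomial (Fin n) k =>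
          (LinearMap.mulLeft k (Polynomial.C
              (algebraMap (MvPolynomial (Fin n) k) (Localization.Away f) r)) :
            Module.End k (Polynomial (Localization.Away f)))) ∪
        Set.range L ∪
        {(LinearMap.mulLeft k (Polynomial.X : Polynomial (Localization.Away f)) :
            Module.End k (Polynomial (Localization.Away f))), That}))
    -- the `b`-function ideals `I_v = {b : b(X)·v ∈ A0·(T̂ v)}`
    (I : Polynomial (Localization.Away f) → Set (Polynomial k))
    (hI : ∀ v : Polynomial (Localization.Away f),
      I v = {b : Polynomial k | ∃ a ∈ A0,
        Polynomial.map (algebraMap k (Localization.Away f)) b * v = a (That v)})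
    -- assume `I_δ ≠ 0`, with monic generator `b_f` (the Bernstein–Sato polynomial)
    (hne : ∃ b ∈ I (1 : Polynomial (Localization.Away f)), b ≠ 0)
    (bf : Polynomial k) (hbf_monic : bf.Monic)
    (hbf_mem : bf ∈ I (1 : Polynomial (Localization.Away f)))
    (hbf_gen : ∀ c ∈ I (1 : Polynomial (Localization.Away f)), bf ∣ c) :
    Polynomial.eval (-1 : k) bf = 0 ∧
    ∀ bt : Polynomial k, bf = (Polynomial.X + 1) * bt →
      ∀ q : ℕ, I ((Dhat ^ q) (1 : Polynomial (Localization.Away f))) =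
        ↑(Ideal.span {(Polynomial.X + 1) *
          bt.comp (Polynomial.X - Polynomial.C (q : k))}) := by
  have hFg : algebraMap (MvPolynomial (Fin n) k) (Localization.Away f) f *
      IsLocalization.Away.invSelf f = 1 := IsLocalization.Away.mul_invSelf f
  have hLX : ∀ i p, L i (Polynomial.X * p) = Polynomial.X * L i p := by
    intro i p
    induction p using Polynomial.induction_on' with
    | add p q h1 h2 => simp only [mul_add, map_add, h1, h2]
    | monomial m a =>
      have e : Polynomial.X * (Polynomial.C a * Polynomial.X ^ m) =
        Polynomial.C a * Polynomial.X ^ (m + 1) := by ring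
      rw [← Polynomial.C_mul_X_pow_eq_monomial, e, hL, hL]
      ring
  have hLC : ∀ i a p, L i (Polynomial.C a * p) =
      Polynomial.C (pd i a) * p + Polynomial.C a * L i p := by
    intro i a p
    induction p using Polynomial.induction_on' with
    | add p q h1 h2 => simp only [mul_add, map_add, h1, h2]; ring
    | monomial m b =>
      rw [← Polynomial.C_mul_X_pow_eq_monomial, ← mul_assoc, ← Polynomial.C_mul, hL, hL]
      rw [Derivation.leibniz]
      simp only [smul_eq_mul, Polynomial.C_add, Polynomial.C_mul]
      ring
  have hL1 : ∀ i a, L i (Polynomial.C a) = Polynomial.C (pd i a) +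
      Polynomial.X * Polynomial.C (IsLocalization.Away.invSelf f *
            algebraMap (MvPolynomial (Fin n) k) (Localization.Away f)
              (MvPolynomial.pderiv i f)) * Polynomial.C a := by
    intro i a
    have := hL i a 0
    simpa using this
  have hdF : ∀ i, Polynomial.C (algebraMap (MvPolynomial (Fin n) k) (Localization.Away f)
        (MvPolynomial.pderiv i f)) =
      Polynomial.C (algebraMap (MvPolynomial (Fin n) k) (Localization.Away f) f) *
      Polynomial.C (IsLocalization.Away.invSelf f *
            algebraMap (MvPolynomial (Fin n) k) (Localization.Away f)
              (MvPolynomial.pderiv i f)) := by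
    intro i
    rw [← Polynomial.C_mul, ← mul_assoc, hFg, one_mul]
  have hs : Setup L That f (fun i => MvPolynomial.pderiv i f)
      (fun i r => MvPolynomial.pderiv i r) := by
    refine ⟨hLX, ?_, ?_, hThat, ?_⟩
    · intro i r p
      rw [hLC, hpd]
    · intro i
      rw [hL1, hpd, hdF i]
      ring
    · intro i p
      rw [hThat, hThat, hLC, hpd, hdF i]
      induction p using Polynomial.induction_on' with
      | add p q h1 h2 =>
        simp only [map_add, Polynomial.add_comp, mul_add] at h1 h2 ⊢
        linear_combination h1 + h2
      | monomial m a =>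
        rw [← Polynomial.C_mul_X_pow_eq_monomial, hL]
        have h1 : ∀ p, L i ((Polynomial.X + 1) ^ m * p) = (Polynomial.X + 1) ^ m * L i p := by
          intro p
          induction m with
          | zero => simp
          | succ m ih =>
            rw [pow_succ', mul_assoc, add_mul, map_add, hLX, one_mul, ih]; ring
        simp only [Polynomial.mul_comp, Polynomial.add_comp, Polynomial.C_comp,
          Polynomial.X_comp, Polynomial.X_pow_comp]
        rw [mul_comm (Polynomial.C a) ((Polynomial.X + 1) ^ m), h1, hL1]
        ring
  have hD : ∀ p, That (Dhat p) = -((Polynomial.X + 1) * p) := by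
    intro p
    rw [hThat, hDhat]
    have : (p.comp (Polynomial.X - 1)).comp (Polynomial.X + 1) = p := by
      rw [Polynomial.comp_assoc]; simp
    simp only [Polynomial.neg_comp, Polynomial.mul_comp, Polynomial.C_comp, Polynomial.X_comp, this]
    have h2 : Polynomial.C (algebraMap (MvPolynomial (Fin n) k) (Localization.Away f) f) *
      Polynomial.C (IsLocalization.Away.invSelf f) = 1 := by
      rw [← Polynomial.C_mul, hFg, Polynomial.C_1]
    linear_combination (-(Polynomial.X + 1) * p) * h2
  have hT : Function.Injective That := by
    intro p q h
    rw [hThat, hThat] at h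
    have h2 : Polynomial.C (algebraMap (MvPolynomial (Fin n) k) (Localization.Away f) f) *
      Polynomial.C (IsLocalization.Away.invSelf f) = 1 := by
      rw [← Polynomial.C_mul, hFg, Polynomial.C_1]
    have h3 : p.comp (Polynomial.X + 1) = q.comp (Polynomial.X + 1) := by
      linear_combination Polynomial.C (IsLocalization.Away.invSelf f) * h +
        (q.comp (Polynomial.X + 1) - p.comp (Polynomial.X + 1)) * h2
    have h4 := congrArg (fun r => r.comp (Polynomial.X - 1)) h3
    simpa [Polynomial.comp_assoc] using h4
  have hinj : Function.Injective
      (algebraMap (MvPolynomial (Fin n) k) (Localization.Away f)) :=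
    IsLocalization.injective _ (powers_le_nonZeroDivisors_of_noZeroDivisors hf0)
  refine hs.main hD hT hinj hfu I ?_ bf hbf_mem hbf_gen
  intro v b
  rw [hI, hA0]
  rfl
end

section
/- If a polynomial b ∈ k[X] satisfies b(X)·1 ∈ A·(f·1) := {a(f·1) : a ∈ A} (i.e., b(s)f^s ∈ D_R[s]·f·f^s, the functional equation defining the Bernstein–Sato polynomial), then b(−1) = 0. In particular, (s + 1) divides the Bernstein–Sato polynomial of f whenever it exists. -/
/-- **Proposition 9.1.** `(s+1)` divides the Bernstein–Sato polynomial: with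
`N = R_f[X]` the model of `R_f[s]f^s`, `A ⊆ End_k(N)` the image of `D_R[s]` (generated by
multiplications by elements of `R`, multiplication by `X`, and the twisted actions `L_δ`
of the `k`-derivations `δ` of `R`), if `b ∈ k[X]` satisfies `b(X)·1 ∈ A·(f·1)`, then
`b(-1) = 0`. -/
theorem stmt19 {k : Type*} [Field k] [IsAlgClosed k] [CharZero k]
    {R : Type*} [CommRing R] [IsDomain R] [Algebra k R]
    (f : R) (hf0 : f ≠ 0) (hfu : ¬ IsUnit f)
    -- the unique extension of each `k`-derivation of `R` to a `k`-derivation of `R_f`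
    (ext : Derivation k R R → Derivation k (Localization.Away f) (Localization.Away f))
    (hext : ∀ (δ : Derivation k R R) (r : R),
      ext δ (algebraMap R (Localization.Away f) r) =
        algebraMap R (Localization.Away f) (δ r))
    -- the twisted operator `L_δ(u) = δ'(u) + X·f⁻¹·δ(f)·u`, with `δ'` acting
    -- coefficientwise on `N = R_f[X]`
    (L : Derivation k R R → Module.End k (Polynomial (Localization.Away f)))
    (hL : ∀ (δ : Derivation k R R) (a : Localization.Away f) (m : ℕ),
      L δ (Polynomial.C a * Polynomial.X ^ m) =
        Polynomial.C (ext δ a) * Polynomial.X ^ m +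
          Polynomial.X * Polynomial.C (IsLocalization.Away.invSelf f *
            algebraMap R (Localization.Away f) (δ f)) *
            (Polynomial.C a * Polynomial.X ^ m))
    -- the algebra `A`: the action of `D_R[s]`
    (A : Subalgebra k (Module.End k (Polynomial (Localization.Away f))))
    (hA : A = Algebra.adjoin k
      ((Set.range fun r : R =>
          (LinearMap.mulLeft k (Polynomial.C (algebraMap R (Localization.Away f) r)) :
            Module.End k (Polynomial (Localization.Away f)))) ∪
        {(LinearMap.mulLeft k (Polynomial.X : Polynomial (Localization.Away f)) :
            Module.End k (Polynomial (Localization.Away f)))} ∪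
        Set.range L))
    (b : Polynomial k)
    (hb : ∃ a ∈ A, Polynomial.map (algebraMap k (Localization.Away f)) b =
      a (Polynomial.C (algebraMap R (Localization.Away f) f))) :
    Polynomial.eval (-1 : k) b = 0 := by
  have hinv : algebraMap R (Localization.Away f) f * IsLocalization.Away.invSelf f = 1 :=
    IsLocalization.Away.mul_invSelf f
  have key : ∀ (δ : Derivation k R R) (u : Polynomial (Localization.Away f)),
      Polynomial.eval (-1) (L δ u) = ext δ (Polynomial.eval (-1) u) -
        IsLocalization.Away.invSelf f * algebraMap R (Localization.Away f) (δ f) *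
          Polynomial.eval (-1) u := by
    intro δ u
    induction u using Polynomial.induction_on' with
    | add p q hp hq =>
      rw [map_add, Polynomial.eval_add, hp, hq, Polynomial.eval_add, map_add]
      ring
    | monomial m a =>
      rw [← Polynomial.C_mul_X_pow_eq_monomial, hL]
      have h1 : ext δ (a * (-1) ^ m) = ext δ a * (-1) ^ m := by
        rcases neg_one_pow_eq_or (Localization.Away f) m with h | h <;> rw [h] <;> simp
      simp only [Polynomial.eval_add, Polynomial.eval_mul, Polynomial.eval_C,
        Polynomial.eval_pow, Polynomial.eval_X, h1]
      ring
  have stab : ∀ a ∈ A, ∀ u : Polynomial (Localization.Away f),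
      (∃ r : R, Polynomial.eval (-1) u = algebraMap R (Localization.Away f) (f * r)) →
      ∃ r : R, Polynomial.eval (-1) (a u) = algebraMap R (Localization.Away f) (f * r) := by
    intro a ha
    rw [hA] at ha
    induction ha using Algebra.adjoin_induction with
    | mem x hx =>
      rintro u ⟨r, hr⟩
      rcases hx with (⟨t, rfl⟩ | hx) | ⟨δ, rfl⟩
      · refine ⟨t * r, ?_⟩
        simp only [LinearMap.mulLeft_apply, Polynomial.eval_mul, Polynomial.eval_C, hr, map_mul]
        ring
      · rw [Set.mem_singleton_iff] at hx
        subst hx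
        refine ⟨-r, ?_⟩
        simp only [LinearMap.mulLeft_apply, Polynomial.eval_mul, Polynomial.eval_X, hr, map_mul,
          map_neg]
        ring
      · refine ⟨δ r, ?_⟩
        rw [key, hr, hext]
        simp only [Derivation.leibniz, smul_eq_mul, map_add, map_mul]
        linear_combination (-(algebraMap R (Localization.Away f) (δ f) *
          algebraMap R (Localization.Away f) r)) * hinv
    | algebraMap c =>
      rintro u ⟨r, hr⟩
      refine ⟨c • r, ?_⟩
      rw [Module.algebraMap_end_apply, Polynomial.eval_smul, hr, mul_smul_comm,
        ← IsScalarTower.toAlgHom_apply k R (Localization.Away f),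
        ← IsScalarTower.toAlgHom_apply k R (Localization.Away f), map_smul]
    | add x y _ _ hx hy =>
      intro u hu
      obtain ⟨r, hr⟩ := hx u hu
      obtain ⟨t, ht⟩ := hy u hu
      exact ⟨r + t, by rw [LinearMap.add_apply, Polynomial.eval_add, hr, ht, mul_add, map_add]⟩
    | mul x y _ _ hx hy =>
      intro u hu
      exact hx _ (hy u hu)
  obtain ⟨a, ha, hab⟩ := hb
  obtain ⟨r, hr⟩ := stab a ha (Polynomial.C (algebraMap R (Localization.Away f) f))
    ⟨1, by simp⟩
  rw [← hab] at hr
  have h2 : Polynomial.eval (-1) (Polynomial.map (algebraMap k (Localization.Away f)) b) =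
      algebraMap R (Localization.Away f) (algebraMap k R (Polynomial.eval (-1) b)) := by
    rw [← IsScalarTower.algebraMap_apply, Polynomial.eval_map, ← Polynomial.eval₂_at_apply]
    simp
  rw [h2] at hr
  have hinj : Function.Injective (algebraMap R (Localization.Away f)) :=
    IsLocalization.injective _ (powers_le_nonZeroDivisors_of_noZeroDivisors hf0)
  have h3 := hinj hr
  by_contra hne
  have hu : IsUnit (algebraMap k R (Polynomial.eval (-1) b)) :=
    (isUnit_iff_ne_zero.mpr hne).map (algebraMap k R)
  rw [h3] at hu
  exact hfu (isUnit_of_mul_isUnit_left hu)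
end
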